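/- arXiv:2604.13967 — 6 statements merged into one kernel-verified Lean document; each statement's English description precedes it below -/
import Mathlib

section
/- Let q = 2^m for a positive integer m and let d = 3q - 2. Let τ_m be the rational sequence defined by τ_1 = 1/2, τ_2 = -7/4, and τ_m = (1/2)τ_{m-1} - τ_{m-2} for m ≥ 3. Let N_4 denote the number of quadruples (x_1, x_2, x_3, x_4) ∈ (F_{q^2})^4 satisfying x_1 + x_2 + x_3 + x_4 = 0 and x_1^d + x_2^d + x_3^d + x_4^d = 0. Then N_4 = 1 + (5q^2 - (τ_m + 2)q + 2)(q^2 - 1) if m is even, and N_4 = 1 + (5q^2 - (τ_m + 2)q + 6)(q^2 - 1) if m is odd. -/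
/-
Write `F ⊆ K` for the fields with `q` and `q ^ 2` elements and `N (a, b)` for the number of zeros
of the quintic `b ^ q * v ^ 5 + a * v ^ 3 + a ^ q * v ^ 2 + b` on the unit circle `v ^ (q + 1) = 1`.
By polar coordinates, the Walsh transform of `x ↦ x ^ d` at `(a, b)` is `q * (N (a, b) - 1)`. Its
`n`-th moment counts the solutions of the system in `n` variables, so the count for `n = 4` follows
from the counts for `n ≤ 3` and the fourth falling moment of `N`, which is the number of pairs of a
quintic and four distinct zeros of it. Four distinct points of the circle are common zeros of `q`
quintics if their sum lies on the circle and of the zero quintic only otherwise. By additive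
characters, the number of such quadruples with sum on the circle comes down to a Kloosterman sum
over `K` at a primitive cube root of unity. Its L-function has degree two and is already determined
over the field with four elements, which produces the linear recurrence.
-/

section LSeries
open Polynomial
variable {k : Type*} [Field k]

open Classical in
theorem pow_dvd_iff_le_count_normalizedFactors {f P : k[X]} (hf : f ≠ 0) (hP : P.Monic)
    (hPi : Irreducible P) (j : ℕ) :
    P ^ j ∣ f ↔ j ≤ (UniqueFactorizationMonoid.normalizedFactors f).count P := by
  rw [pow_dvd_iff_le_emultiplicity,
    UniqueFactorizationMonoid.emultiplicity_eq_count_normalizedFactors hPi hf,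
    hP.normalize_eq_self, Nat.cast_le]

theorem coeff_X_pow_add_sum_monomial {n : ℕ} (c : Fin n → k) (j : Fin n) :
    (X ^ n + ∑ i : Fin n, monomial i (c i)).coeff j = c j := by
  simp [coeff_monomial, coeff_X_pow, Fin.val_inj, j.2.ne]

variable [Fintype k]

/-- The finite set of monic polynomials of degree `n` over the finite field `k`. -/
noncomputable def monics (k : Type*) [Field k] [Fintype k] (n : ℕ) : Finset k[X] :=
  Finset.univ.map <| ((monicEquivDegreeLT n).trans (degreeLTEquiv k n).toEquiv).symm.toEmbedding
    |>.trans (Function.Embedding.subtype _)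

theorem mem_monics {n : ℕ} {f : k[X]} : f ∈ monics k n ↔ f.Monic ∧ f.natDegree = n := by
  simp only [monics, Finset.mem_map, Finset.mem_univ, true_and, Function.Embedding.trans_apply,
    Function.Embedding.subtype_apply, Equiv.coe_toEmbedding]
  refine ⟨?_, fun hf ↦ ⟨(monicEquivDegreeLT n).trans (degreeLTEquiv k n).toEquiv ⟨f, hf⟩, by simp⟩⟩
  rintro ⟨c, rfl⟩
  exact Subtype.prop (p := fun f : k[X] ↦ f.Monic ∧ f.natDegree = n) _

theorem X_pow_add_sum_monomial_mem_monics {n : ℕ} (c : Fin n → k) :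
    X ^ n + ∑ i : Fin n, monomial i (c i) ∈ monics k n :=
  mem_monics.2 ((monicEquivDegreeLT n).symm ((degreeLTEquiv k n).symm c)).2

theorem sum_monics {M : Type*} [AddCommMonoid M] (n : ℕ) (g : k[X] → M) :
    ∑ f ∈ monics k n, g f = ∑ c : Fin n → k, g (X ^ n + ∑ i : Fin n, monomial i (c i)) := by
  simp only [monics, Finset.sum_map]
  rfl

open Classical in
/-- The finite set of monic irreducible polynomials of degree at most `n` over `k`. -/
noncomputable def irreds (k : Type*) [Field k] [Fintype k] (n : ℕ) : Finset k[X] :=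
  {f ∈ (Finset.range (n + 1)).biUnion (monics k) | Irreducible f}

theorem mem_irreds {n : ℕ} {f : k[X]} :
    f ∈ irreds k n ↔ f.Monic ∧ Irreducible f ∧ f.natDegree ≤ n := by
  simp only [irreds, Finset.mem_filter, Finset.mem_biUnion, Finset.mem_range, Order.lt_add_one_iff,
    mem_monics]
  grind

open Classical in
theorem natDegree_eq_sum_count_normalizedFactors {f : k[X]} (hf : f.Monic) :
    f.natDegree = ∑ P ∈ irreds k f.natDegree,
      (UniqueFactorizationMonoid.normalizedFactors f).count P * P.natDegree := by
  set s := UniqueFactorizationMonoid.normalizedFactors f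
  have hsub : s.toFinset ⊆ irreds k f.natDegree := by
    intro P hP
    rw [Multiset.mem_toFinset] at hP
    have hi := UniqueFactorizationMonoid.irreducible_of_normalized_factor P hP
    refine mem_irreds.2 ⟨?_, hi, natDegree_le_of_dvd
      (UniqueFactorizationMonoid.dvd_of_mem_normalizedFactors hP) hf.ne_zero⟩
    rw [← UniqueFactorizationMonoid.normalize_normalized_factor P hP]
    exact monic_normalize hi.ne_zero
  have hprod : s.prod = f := by
    rw [UniqueFactorizationMonoid.prod_normalizedFactors_eq hf.ne_zero, hf.normalize_eq_self]
  calc f.natDegree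
      = (s.map natDegree).sum := by
        rw [← natDegree_multiset_prod _ (UniqueFactorizationMonoid.zero_notMem_normalizedFactors f),
          hprod]
    _ = ∑ P ∈ s.toFinset, s.count P * P.natDegree := Finset.sum_multiset_map_count _ _
    _ = _ := Finset.sum_subset hsub fun P _ hP ↦ by
        rw [Multiset.count_eq_zero_of_notMem (by simpa using hP), zero_mul]

open Classical in
-- This plays the part of `log = Λ * 1` for the integers.
theorem natDegree_eq_sum_primePow_dvd {f : k[X]} (hf : f.Monic) :
    f.natDegree = ∑ P ∈ irreds k f.natDegree, ∑ j ∈ Finset.Icc 1 f.natDegree,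
      if P ^ j ∣ f then P.natDegree else 0 := by
  conv_lhs => rw [natDegree_eq_sum_count_normalizedFactors hf]
  refine Finset.sum_congr rfl fun P hP ↦ ?_
  obtain ⟨hPm, hPi, -⟩ := mem_irreds.1 hP
  have hdvd := pow_dvd_iff_le_count_normalizedFactors hf.ne_zero hPm hPi
  set c := (UniqueFactorizationMonoid.normalizedFactors f).count P
  have hc : c ≤ f.natDegree := calc
    c ≤ c * P.natDegree := Nat.le_mul_of_pos_right _ hPi.natDegree_pos
    _ = (P ^ c).natDegree := (natDegree_pow P c).symm
    _ ≤ f.natDegree := natDegree_le_of_dvd ((hdvd c).2 le_rfl) hf.ne_zero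
  have hIcc : {j ∈ Finset.Icc 1 f.natDegree | j ≤ c} = Finset.Icc 1 c := by
    ext j
    simp only [Finset.mem_filter, Finset.mem_Icc]
    lia
  simp_rw [hdvd]
  rw [← Finset.sum_filter, Finset.sum_const, hIcc, Nat.card_Icc, Nat.add_sub_cancel, smul_eq_mul]

variable {R : Type*} [CommRing R]

/-- The coefficient of `T ^ n` in the L-series `∑ Λ f * T ^ deg f`, summed over monic `f`. -/
noncomputable def lCoeff (Λ : k[X] →* R) (n : ℕ) : R := ∑ f ∈ monics k n, Λ f

/-- The coefficient of `T ^ e` in `T * L' / L`, where `L` is the L-series of `Λ`: the sum of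
`deg P * Λ P ^ (e / deg P)` over the monic irreducible `P` whose degree divides `e`. -/
noncomputable def powerSum (Λ : k[X] →* R) (e : ℕ) : R :=
  ∑ P ∈ irreds k e, if P.natDegree ∣ e then P.natDegree * Λ P ^ (e / P.natDegree) else 0

theorem lCoeff_zero (Λ : k[X] →* R) : lCoeff Λ 0 = 1 := by
  simp [lCoeff, sum_monics]

theorem powerSum_eq_sum_of_le (Λ : k[X] →* R) {e n : ℕ} (he : 0 < e) (hen : e ≤ n) :
    powerSum Λ e = ∑ P ∈ irreds k n,
      if P.natDegree ∣ e then P.natDegree * Λ P ^ (e / P.natDegree) else 0 := by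
  refine Finset.sum_subset (fun P hP ↦ ?_) fun P hP hP' ↦ if_neg fun hd ↦ hP' ?_
  · rw [mem_irreds] at hP ⊢
    exact ⟨hP.1, hP.2.1, hP.2.2.trans hen⟩
  · rw [mem_irreds] at hP ⊢
    exact ⟨hP.1, hP.2.1, Nat.le_of_dvd he hd⟩

open Classical in
theorem sum_monics_dvd (Λ : k[X] →* R) (n : ℕ) {D : k[X]} (hD : D.Monic) :
    (∑ f ∈ monics k n, if D ∣ f then Λ f else 0) =
      if D.natDegree ≤ n then Λ D * lCoeff Λ (n - D.natDegree) else 0 := by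
  split_ifs with h
  · rw [← Finset.sum_filter, lCoeff, Finset.mul_sum]
    refine (Finset.sum_bij (fun g _ ↦ D * g) (fun g hg ↦ ?_)
      (fun g _ g' _ ↦ mul_left_cancel₀ hD.ne_zero) (fun f hf ↦ ?_)
      fun g _ ↦ (map_mul Λ D g).symm).symm
    · obtain ⟨hg, hgn⟩ := mem_monics.1 hg
      refine Finset.mem_filter.2 ⟨mem_monics.2 ⟨hD.mul hg, ?_⟩, dvd_mul_right _ _⟩
      rw [hD.natDegree_mul hg, hgn, Nat.add_sub_cancel' h]
    · obtain ⟨hf, g, rfl⟩ := Finset.mem_filter.1 hf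
      obtain ⟨hf, hfn⟩ := mem_monics.1 hf
      have hg : g.Monic := hD.of_mul_monic_left hf
      rw [hD.natDegree_mul hg] at hfn
      exact ⟨g, mem_monics.2 ⟨hg, by lia⟩, rfl⟩
  · refine Finset.sum_eq_zero fun f hf ↦ if_neg fun hd ↦ h ?_
    obtain ⟨hfm, rfl⟩ := mem_monics.1 hf
    exact natDegree_le_of_dvd hd hfm.ne_zero

theorem sum_Icc_multiples {M : Type*} [AddCommMonoid M] {d : ℕ} (hd : 0 < d) (n : ℕ)
    (g : ℕ → ℕ → M) :
    (∑ j ∈ Finset.Icc 1 n, if j * d ≤ n then g j (j * d) else 0) =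
      ∑ e ∈ Finset.Icc 1 n, if d ∣ e then g (e / d) e else 0 := by
  rw [← Finset.sum_filter, ← Finset.sum_filter]
  refine Finset.sum_bij' (fun j _ ↦ j * d) (fun e _ ↦ e / d) ?_ ?_ ?_ ?_ ?_
  · simp only [Finset.mem_filter, Finset.mem_Icc]
    exact fun j hj ↦ ⟨⟨Nat.mul_pos hj.1.1 hd, hj.2⟩, dvd_mul_left _ _⟩
  · simp only [Finset.mem_filter, Finset.mem_Icc]
    rintro e ⟨he, hde⟩
    rw [Nat.div_mul_cancel hde]
    exact ⟨⟨Nat.div_pos (Nat.le_of_dvd he.1 hde) hd, (Nat.div_le_self _ _).trans he.2⟩, he.2⟩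
  · exact fun j _ ↦ Nat.mul_div_cancel _ hd
  · exact fun e he ↦ Nat.div_mul_cancel (Finset.mem_filter.1 he).2
  · exact fun j _ ↦ by rw [Nat.mul_div_cancel _ hd]

-- Both sides are the coefficient of `T ^ n` in `T * L' = (T * L' / L) * L`.
theorem natCast_mul_lCoeff (Λ : k[X] →* R) (n : ℕ) :
    n * lCoeff Λ n = ∑ e ∈ Finset.Icc 1 n, powerSum Λ e * lCoeff Λ (n - e) := by
  classical
  calc
  n * lCoeff Λ n
      = ∑ f ∈ monics k n, ∑ P ∈ irreds k n, ∑ j ∈ Finset.Icc 1 n,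
          P.natDegree * if P ^ j ∣ f then Λ f else 0 := by
        rw [lCoeff, Finset.mul_sum]
        refine Finset.sum_congr rfl fun f hf ↦ ?_
        obtain ⟨hfm, rfl⟩ := mem_monics.1 hf
        conv_lhs => rw [natDegree_eq_sum_primePow_dvd hfm]
        push_cast
        simp only [Finset.sum_mul, ite_mul, zero_mul, mul_ite, mul_zero]
    _ = ∑ P ∈ irreds k n, ∑ j ∈ Finset.Icc 1 n,
          if j * P.natDegree ≤ n then
            P.natDegree * (Λ P ^ j * lCoeff Λ (n - j * P.natDegree)) else 0 := by
        rw [Finset.sum_comm]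
        refine Finset.sum_congr rfl fun P hP ↦ ?_
        rw [Finset.sum_comm]
        refine Finset.sum_congr rfl fun j _ ↦ ?_
        rw [← Finset.mul_sum, sum_monics_dvd Λ n ((mem_irreds.1 hP).1.pow j), natDegree_pow,
          map_pow, mul_ite, mul_zero]
    _ = ∑ P ∈ irreds k n, ∑ e ∈ Finset.Icc 1 n,
          if P.natDegree ∣ e then
            P.natDegree * (Λ P ^ (e / P.natDegree) * lCoeff Λ (n - e)) else 0 :=
        Finset.sum_congr rfl fun P hP ↦ sum_Icc_multiples (mem_irreds.1 hP).2.1.natDegree_pos n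
          fun j e ↦ P.natDegree * (Λ P ^ j * lCoeff Λ (n - e))
    _ = ∑ e ∈ Finset.Icc 1 n, powerSum Λ e * lCoeff Λ (n - e) := by
        rw [Finset.sum_comm]
        refine Finset.sum_congr rfl fun e he ↦ ?_
        obtain ⟨he, hen⟩ := Finset.mem_Icc.1 he
        rw [powerSum_eq_sum_of_le Λ he hen, Finset.sum_mul]
        simp only [ite_mul, zero_mul, mul_assoc]

theorem powerSum_add_three {Λ : k[X] →* R} (hΛ : ∀ n, 3 ≤ n → lCoeff Λ n = 0) (n : ℕ) :
    powerSum Λ (n + 3) = -lCoeff Λ 1 * powerSum Λ (n + 2) - lCoeff Λ 2 * powerSum Λ (n + 1) := by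
  have newton := natCast_mul_lCoeff Λ (n + 3)
  have hsub : ({n + 1, n + 2, n + 3} : Finset ℕ) ⊆ Finset.Icc 1 (n + 3) := by
    intro e
    simp only [Finset.mem_insert, Finset.mem_singleton, Finset.mem_Icc]
    lia
  rw [hΛ _ (by lia), mul_zero, ← Finset.sum_subset hsub fun e he he' ↦ ?_,
    Finset.sum_insert (by simp), Finset.sum_insert (by simp), Finset.sum_singleton,
    show n + 3 - (n + 1) = 2 by lia, show n + 3 - (n + 2) = 1 by lia, Nat.sub_self,
    lCoeff_zero] at newton
  · linear_combination -newton
  · simp only [Finset.mem_insert, Finset.mem_singleton, Finset.mem_Icc] at he he'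
    rw [hΛ _ (by lia), mul_zero]

theorem powerSum_one (Λ : k[X] →* R) : powerSum Λ 1 = lCoeff Λ 1 := by
  simpa [lCoeff_zero] using (natCast_mul_lCoeff Λ 1).symm

theorem powerSum_two (Λ : k[X] →* R) : powerSum Λ 2 = 2 * lCoeff Λ 2 - lCoeff Λ 1 ^ 2 := by
  have newton := natCast_mul_lCoeff Λ 2
  rw [show Finset.Icc 1 2 = {1, 2} from rfl, Finset.sum_pair (by lia), powerSum_one, Nat.sub_self,
    lCoeff_zero, Nat.cast_ofNat] at newton
  linear_combination -newton

end LSeries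

section Minpoly
open Polynomial
variable {k L : Type*} [Field k] [Field L] [Algebra k L] {x : L}

theorem natDegree_reverse_minpoly (hx : IsIntegral k x) (hx0 : x ≠ 0) :
    (minpoly k x).reverse.natDegree = (minpoly k x).natDegree := by
  rw [reverse_natDegree, natTrailingDegree_eq_zero.2 (.inr (minpoly.coeff_zero_ne_zero hx hx0)),
    Nat.sub_zero]

theorem minpoly_inv_dvd_reverse (hx0 : x ≠ 0) : minpoly k x⁻¹ ∣ (minpoly k x).reverse := by
  let := invertibleOfNonzero hx0
  refine minpoly.dvd k _ ?_
  rw [← invOf_eq_inv]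
  exact (eval₂_reverse_eq_zero_iff (algebraMap k L) x (minpoly k x)).2 (minpoly.aeval k x)

theorem natDegree_minpoly_inv_le (hx : IsIntegral k x) (hx0 : x ≠ 0) :
    (minpoly k x⁻¹).natDegree ≤ (minpoly k x).natDegree := by
  rw [← natDegree_reverse_minpoly hx hx0]
  exact natDegree_le_of_dvd (minpoly_inv_dvd_reverse hx0)
    (reverse_eq_zero.not.2 (minpoly.ne_zero hx))

theorem natDegree_minpoly_inv (hx : IsIntegral k x) (hx0 : x ≠ 0) :
    (minpoly k x⁻¹).natDegree = (minpoly k x).natDegree :=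
  (natDegree_minpoly_inv_le hx hx0).antisymm <| by
    simpa using natDegree_minpoly_inv_le hx.inv (inv_ne_zero hx0)

theorem minpoly_inv_eq_reverse (hx : IsIntegral k x) (hx0 : x ≠ 0) :
    minpoly k x⁻¹ = C ((minpoly k x).coeff 0)⁻¹ * (minpoly k x).reverse := by
  have hc : (minpoly k x).coeff 0 ≠ 0 := minpoly.coeff_zero_ne_zero hx hx0
  have hlead : (minpoly k x).reverse.leadingCoeff = (minpoly k x).coeff 0 := by
    rw [leadingCoeff, natDegree_reverse_minpoly hx hx0, coeff_reverse, revAt_le le_rfl,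
      Nat.sub_self]
  have hmonic : (C ((minpoly k x).coeff 0)⁻¹ * (minpoly k x).reverse).Monic := by
    rw [Monic, leadingCoeff_mul, leadingCoeff_C, hlead, inv_mul_cancel₀ hc]
  refine (eq_of_monic_of_dvd_of_natDegree_le (minpoly.monic hx.inv) hmonic
    ((minpoly_inv_dvd_reverse hx0).mul_left _) ?_).symm
  rw [natDegree_C_mul (inv_ne_zero hc), natDegree_reverse_minpoly hx hx0,
    natDegree_minpoly_inv hx hx0]

theorem nextCoeff_minpoly_inv (hx : IsIntegral k x) (hx0 : x ≠ 0) :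
    (minpoly k x⁻¹).nextCoeff = (minpoly k x).coeff 1 / (minpoly k x).coeff 0 := by
  have hpos : 0 < (minpoly k x).natDegree := minpoly.natDegree_pos hx
  rw [nextCoeff_of_natDegree_pos (minpoly.natDegree_pos hx.inv), natDegree_minpoly_inv hx hx0,
    minpoly_inv_eq_reverse hx hx0, coeff_C_mul, coeff_reverse, revAt_le (by lia),
    show (minpoly k x).natDegree - ((minpoly k x).natDegree - 1) = 1 by lia, div_eq_inv_mul]

variable [FiniteDimensional k L]

theorem trace_eq_nsmul_neg_nextCoeff_minpoly (x : L) :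
    Algebra.trace k L x =
      (Module.finrank k L / (minpoly k x).natDegree) • -(minpoly k x).nextCoeff := by
  have hx : IsIntegral k x := IsIntegral.of_finite k x
  rw [trace_eq_finrank_mul_minpoly_nextCoeff, nsmul_eq_mul,
    ← Module.finrank_mul_finrank k (IntermediateField.adjoin k {x}) L,
    IntermediateField.adjoin.finrank hx, Nat.mul_div_cancel_left _ (minpoly.natDegree_pos hx)]

theorem trace_inv_eq_nsmul_neg_coeff_minpoly (hx0 : x ≠ 0) :
    Algebra.trace k L x⁻¹ = (Module.finrank k L / (minpoly k x).natDegree) •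
      -((minpoly k x).coeff 1 / (minpoly k x).coeff 0) := by
  have hx : IsIntegral k x := IsIntegral.of_finite k x
  rw [trace_eq_nsmul_neg_nextCoeff_minpoly, natDegree_minpoly_inv hx hx0,
    nextCoeff_minpoly_inv hx hx0]

end Minpoly

section MinpolyFiber
open Polynomial
variable {k L R : Type*} [Field k] [Field L] [Algebra k L]

theorem exists_minpoly_eq_of_natDegree_dvd [Finite k] [Finite L] {P : k[X]} (hP : P.Monic)
    (hPi : Irreducible P) (hd : P.natDegree ∣ Module.finrank k L) : ∃ x : L, minpoly k x = P := by
  have : Fact (Irreducible P) := ⟨hPi⟩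
  have : FiniteDimensional k (AdjoinRoot P) := (AdjoinRoot.powerBasis hPi.ne_zero).finite
  have : Finite (AdjoinRoot P) := Module.finite_of_finite k
  have hfinrank : Module.finrank k (AdjoinRoot P) = P.natDegree := by
    rw [(AdjoinRoot.powerBasis hPi.ne_zero).finrank, AdjoinRoot.powerBasis_dim]
  obtain ⟨φ⟩ := FiniteField.nonempty_algHom_of_finrank_dvd
    (F := k) (K := AdjoinRoot P) (L := L) (hfinrank ▸ hd)
  refine ⟨φ (AdjoinRoot.root P), (minpoly.eq_of_irreducible_of_monic hPi ?_ hP).symm⟩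
  rw [aeval_algHom_apply, AdjoinRoot.aeval_eq, AdjoinRoot.mk_self, map_zero]

open Classical in
theorem card_minpoly_eq [Finite k] [Fintype L] {P : k[X]} (hP : P.Monic) (hPi : Irreducible P)
    (hd : P.natDegree ∣ Module.finrank k L) :
    Finset.card {x : L | minpoly k x = P} = P.natDegree := by
  obtain ⟨y, hy⟩ := exists_minpoly_eq_of_natDegree_dvd (L := L) hP hPi hd
  have hsplits : (P.map (algebraMap k L)).Splits := by
    rw [← hy]
    exact Normal.splits inferInstance y
  rw [← card_rootSet_eq_natDegree (PerfectField.separable_of_irreducible hPi) hsplits,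
    ← Set.toFinset_card]
  congr 1
  ext x
  simp only [Finset.mem_filter, Finset.mem_univ, true_and, Set.mem_toFinset, mem_rootSet]
  refine ⟨?_, fun ⟨_, hx⟩ ↦ (minpoly.eq_of_irreducible_of_monic hPi hx hP).symm⟩
  rintro rfl
  exact ⟨hPi.ne_zero, minpoly.aeval k x⟩

-- Group the elements of `L` by their minimal polynomials.
theorem sum_map_minpoly_pow [Fintype k] [Fintype L] [CommRing R] (Λ : k[X] →* R) :
    ∑ x : L, Λ (minpoly k x) ^ (Module.finrank k L / (minpoly k x).natDegree) =
      powerSum Λ (Module.finrank k L) := by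
  classical
  have halg (x : L) : IsIntegral k x := IsIntegral.of_finite k x
  have hdvd (x : L) : (minpoly k x).natDegree ∣ Module.finrank k L := minpoly.degree_dvd (halg x)
  have hmaps : ∀ x ∈ Finset.univ, minpoly k (x : L) ∈ irreds k (Module.finrank k L) := fun x _ ↦
    mem_irreds.2 ⟨minpoly.monic (halg x), minpoly.irreducible (halg x),
      Nat.le_of_dvd Module.finrank_pos (hdvd x)⟩
  rw [← Finset.sum_fiberwise_of_maps_to hmaps]
  refine Finset.sum_congr rfl fun P hP ↦ ?_
  obtain ⟨hP, hPi, -⟩ := mem_irreds.1 hP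
  split_ifs with hd
  · rw [Finset.sum_congr rfl fun x hx ↦ by rw [(Finset.mem_filter.1 hx).2], Finset.sum_const,
      card_minpoly_eq hP hPi hd, nsmul_eq_mul]
  · rw [Finset.filter_false_of_mem, Finset.sum_empty]
    rintro x - rfl
    exact hd (hdvd x)

end MinpolyFiber

section Kloosterman
open Polynomial
variable {k L R : Type*} [Field k] [CommRing R]

theorem sum_eq_zero_add_sum_units {M : Type*} [AddCommMonoid M] [Fintype k] [DecidableEq k]
    (g : k → M) : ∑ x, g x = g 0 + ∑ u : kˣ, g u := by
  rw [← Finset.add_sum_erase _ g (Finset.mem_univ 0)]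
  congr 1
  refine Finset.sum_bij' (fun x hx ↦ Units.mk0 x (Finset.ne_of_mem_erase hx)) (fun u _ ↦ u)
    ?_ ?_ ?_ ?_ ?_ <;> simp

/-- The Kloosterman sum `∑ ψ (a x + b / x)` over the nonzero elements `x` of a finite field. -/
def kloostermanSum [Fintype k] [DecidableEq k] (ψ : AddChar k R) (a b : k) : R :=
  ∑ x : kˣ, ψ (a * x + b * ↑x⁻¹)

/-- The multiplicative function of polynomials attached to a Kloosterman sum: it vanishes if
`f 0 = 0` and takes `f = ∏ (X - xᵢ)` to `ψ (a * ∑ xᵢ + b * ∑ xᵢ⁻¹)` otherwise. The sums are read off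
the two lowest coefficients of `f` and of its reverse. -/
noncomputable def kloostermanChar (ψ : AddChar k R) (a b : k) : k[X] →* R := by
  classical exact
  { toFun f := if f.coeff 0 = 0 then 0 else
      ψ (-(a * (f.reverse.coeff 1 / f.reverse.coeff 0) + b * (f.coeff 1 / f.coeff 0)))
    map_one' := by simp [coeff_one, show (1 : k[X]).reverse = 1 from reverse_C 1]
    map_mul' f g := by
      by_cases hf : f.coeff 0 = 0
      · simp [hf]
      by_cases hg : g.coeff 0 = 0
      · simp [hg]
      have hf' : f.reverse.coeff 0 ≠ 0 := by rw [coeff_zero_reverse]; aesop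
      have hg' : g.reverse.coeff 0 ≠ 0 := by rw [coeff_zero_reverse]; aesop
      rw [reverse_mul_of_domain, mul_coeff_zero, mul_coeff_zero, mul_coeff_one, mul_coeff_one,
        if_neg (mul_ne_zero hf hg), if_neg hf, if_neg hg, ← AddChar.map_add_eq_mul]
      congr 1
      field_simp
      ring }

theorem kloostermanChar_of_coeff_zero_eq_zero (ψ : AddChar k R) (a b : k) {f : k[X]}
    (hf : f.coeff 0 = 0) : kloostermanChar ψ a b f = 0 :=
  if_pos hf

theorem kloostermanChar_of_monic (ψ : AddChar k R) (a b : k) {f : k[X]} (hf : f.Monic)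
    (hf0 : f.coeff 0 ≠ 0) :
    kloostermanChar ψ a b f = ψ (-(a * f.nextCoeff + b * (f.coeff 1 / f.coeff 0))) := by
  refine (if_neg hf0).trans ?_
  rw [coeff_one_reverse, coeff_zero_reverse, hf.leadingCoeff, div_one]

variable [Fintype k]

theorem kloostermanSum_comp_trace [Field L] [Fintype L] [DecidableEq L] [Algebra k L]
    (ψ : AddChar k R) (a b : k) :
    kloostermanSum (ψ.compAddMonoidHom (Algebra.trace k L : L →+ k))
        (algebraMap k L a) (algebraMap k L b) =
      powerSum (kloostermanChar ψ a b) (Module.finrank k L) := by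
  have hzero : kloostermanChar ψ a b (minpoly k (0 : L)) ^
      (Module.finrank k L / (minpoly k (0 : L)).natDegree) = 0 := by
    rw [minpoly.zero, kloostermanChar_of_coeff_zero_eq_zero _ _ _ coeff_X_zero, natDegree_X,
      Nat.div_one, zero_pow Module.finrank_pos.ne']
  rw [← sum_map_minpoly_pow, sum_eq_zero_add_sum_units, hzero, zero_add, kloostermanSum]
  refine Finset.sum_congr rfl fun x _ ↦ ?_
  have halg : IsIntegral k (x : L) := IsIntegral.of_finite k _
  rw [kloostermanChar_of_monic ψ a b (minpoly.monic halg)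
      (minpoly.coeff_zero_ne_zero halg x.ne_zero), ← AddChar.map_nsmul_eq_pow,
    AddChar.compAddMonoidHom_apply, ← Algebra.smul_def, ← Algebra.smul_def,
    Units.val_inv_eq_inv_val]
  simp only [AddMonoidHom.coe_coe, map_add, map_smul,
    trace_eq_nsmul_neg_nextCoeff_minpoly (x : L), trace_inv_eq_nsmul_neg_coeff_minpoly x.ne_zero]
  congr 1
  simp only [smul_eq_mul, nsmul_eq_mul]
  ring

theorem lCoeff_kloostermanChar_one [DecidableEq k] (ψ : AddChar k R) (a b : k) :
    lCoeff (kloostermanChar ψ a b) 1 = kloostermanSum ψ a b := by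
  rw [← powerSum_one, ← Module.finrank_self k, ← kloostermanSum_comp_trace (L := k)]
  simp [kloostermanSum]

theorem lCoeff_kloostermanChar [DecidableEq k] (ψ : AddChar k R) (a b : k) (n : ℕ) :
    lCoeff (kloostermanChar ψ a b) (n + 2) = ∑ c : Fin (n + 2) → k,
      if c 0 = 0 then 0 else ψ (-(a * c (Fin.last _) + b * (c 1 / c 0))) := by
  rw [lCoeff, sum_monics]
  refine Finset.sum_congr rfl fun c _ ↦ ?_
  obtain ⟨hmonic, hdeg⟩ := mem_monics.1 (X_pow_add_sum_monomial_mem_monics c)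
  have h0 : (X ^ (n + 2) + ∑ i : Fin (n + 2), monomial i (c i)).coeff 0 = c 0 :=
    coeff_X_pow_add_sum_monomial c 0
  have h1 : (X ^ (n + 2) + ∑ i : Fin (n + 2), monomial i (c i)).coeff 1 = c 1 :=
    coeff_X_pow_add_sum_monomial c 1
  have hnext : (X ^ (n + 2) + ∑ i : Fin (n + 2), monomial i (c i)).nextCoeff = c (Fin.last _) := by
    rw [nextCoeff_of_natDegree_pos (by lia), hdeg]
    exact coeff_X_pow_add_sum_monomial c (Fin.last _)
  split_ifs with hc
  · exact kloostermanChar_of_coeff_zero_eq_zero ψ a b (h0.trans hc)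
  · rw [kloostermanChar_of_monic ψ a b hmonic (h0.trans_ne hc), h0, h1, hnext]

variable [IsDomain R]

theorem lCoeff_kloostermanChar_two {ψ : AddChar k R} (hψ : ψ.IsPrimitive) {a b : k} (ha : a ≠ 0)
    (hb : b ≠ 0) : lCoeff (kloostermanChar ψ a b) 2 = Fintype.card k := by
  classical
  have hinner (x : k) : (∑ y, if x = 0 then 0 else ψ (-(a * y + b * (y / x)))) =
      if x = -(b / a) then (Fintype.card k : R) else 0 := by
    rcases eq_or_ne x 0 with rfl | hx
    · simp [ha, hb, eq_comm]
    · have hcoeff : -(a + b / x) = 0 ↔ x = -(b / a) := by grind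
      have horth := AddChar.sum_mulShift (-(a + b / x)) hψ
      push_cast at horth
      simp_rw [if_neg hx, ← hcoeff, ← horth]
      refine Finset.sum_congr rfl fun y _ ↦ congrArg ψ ?_
      ring
  rw [lCoeff_kloostermanChar, ← (finTwoArrowEquiv k).symm.sum_comp, Fintype.sum_prod_type]
  simp only [finTwoArrowEquiv_symm_apply]
  exact (Finset.sum_congr rfl fun x _ ↦ hinner x).trans (by simp)

theorem lCoeff_kloostermanChar_of_three_le {ψ : AddChar k R} (hψ : ψ.IsPrimitive) {a : k}
    (ha : a ≠ 0) (b : k) {n : ℕ} (hn : 3 ≤ n) : lCoeff (kloostermanChar ψ a b) n = 0 := by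
  classical
  obtain ⟨n, rfl⟩ := Nat.exists_eq_add_of_le' hn
  obtain ⟨t, ht⟩ := AddChar.ne_one_iff.1 (hψ (neg_ne_zero.2 ha))
  rw [lCoeff_kloostermanChar _ _ _ (n + 1)]
  set S := ∑ c : Fin (n + 3) → k,
    if c 0 = 0 then 0 else ψ (-(a * c (Fin.last _) + b * (c 1 / c 0))) with hS
  have hshift : S = ψ (-a * t) * S := by
    conv_lhs => rw [hS, ← Equiv.sum_comp (Equiv.addRight (Pi.single (Fin.last (n + 2)) t))]
    rw [Finset.mul_sum]
    refine Finset.sum_congr rfl fun c _ ↦ ?_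
    have h0 : (0 : Fin (n + 3)) ≠ Fin.last (n + 2) := by simp [Fin.ext_iff]
    have h1 : (1 : Fin (n + 3)) ≠ Fin.last (n + 2) := by simp [Fin.ext_iff]
    simp only [Equiv.coe_addRight, Pi.add_apply, Pi.single_eq_same, Pi.single_eq_of_ne h0,
      Pi.single_eq_of_ne h1, add_zero, mul_ite, mul_zero, ← AddChar.map_add_eq_mul]
    congr 2
    ring
  have : (1 - ψ (-a * t)) * S = 0 := by linear_combination hshift
  exact (mul_eq_zero.1 this).resolve_left (sub_ne_zero.2 (Ne.symm ht))

end Kloosterman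

open Finset

section SignChar
variable (F : Type*) [Field F] [CharP F 2]

/-- The canonical additive character `x ↦ (-1) ^ Tr x` of a field of characteristic two, where `Tr`
is the absolute trace. -/
noncomputable def signChar : AddChar F ℤ :=
  letI := ZMod.algebra F 2
  (AddChar.zmodChar 2 (ζ := (-1 : ℤ)) (by norm_num)).compAddMonoidHom
    (Algebra.trace (ZMod 2) F : F →+ ZMod 2)

variable {F}

theorem signChar_apply [i : Algebra (ZMod 2) F] (x : F) :
    signChar F x = (-1) ^ (Algebra.trace (ZMod 2) F x).val := by
  obtain rfl : i = ZMod.algebra F 2 := Subsingleton.elim _ _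
  rfl

theorem signChar_mul_self (x : F) : signChar F x * signChar F x = 1 := by
  let := ZMod.algebra F 2
  rw [signChar_apply, ← pow_add, ← two_mul, pow_mul, neg_one_sq, one_pow]

variable [Finite F]

theorem signChar_isPrimitive : (signChar F).IsPrimitive := by
  let := ZMod.algebra F 2
  obtain ⟨x, hx⟩ := Algebra.trace_surjective (ZMod 2) F 1
  refine .of_ne_one (AddChar.ne_one_iff.2 ⟨x, ?_⟩)
  rw [signChar_apply, hx]
  decide

theorem signChar_sq (x : F) : signChar F (x ^ 2) = signChar F x := by
  let := ZMod.algebra F 2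
  rw [signChar_apply, signChar_apply,
    ← Algebra.trace_eq_of_algEquiv (FiniteField.frobeniusAlgEquivOfAlgebraic (ZMod 2) F) x,
    FiniteField.coe_frobeniusAlgEquivOfAlgebraic, ZMod.card]

theorem signChar_comp_trace {K : Type*} [Field K] [CharP K 2] [Finite K] [Algebra F K] :
    (signChar F).compAddMonoidHom (Algebra.trace F K : K →+ F) = signChar K := by
  let := ZMod.algebra F 2
  let := ZMod.algebra K 2
  ext x
  rw [AddChar.compAddMonoidHom_apply, signChar_apply, signChar_apply,
    ← Algebra.trace_trace (R := ZMod 2) (S := F) (x := x)]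
  rfl

theorem signChar_trace {K : Type*} [Field K] [CharP K 2] [Finite K] [Algebra F K] (x : K) :
    signChar F (Algebra.trace F K x) = signChar K x :=
  DFunLike.congr_fun signChar_comp_trace x

theorem signChar_one {m : ℕ} (hm : Nat.card F = 2 ^ m) :
    signChar F 1 = (-1) ^ m := by
  let := ZMod.algebra F 2
  have hfinrank : Module.finrank (ZMod 2) F = m := by
    refine Nat.pow_right_injective le_rfl (?_ : 2 ^ _ = 2 ^ m)
    rw [← hm, Module.natCard_eq_pow_finrank (K := ZMod 2), Nat.card_zmod]
  rw [signChar_apply, ← map_one (algebraMap (ZMod 2) F), Algebra.trace_algebraMap, hfinrank,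
    nsmul_one, ZMod.val_natCast, ← neg_one_pow_eq_pow_mod_two]

end SignChar

section ArtinSchreier
variable {F : Type*} [Field F] [CharP F 2]

theorem sq_bijective [Finite F] : Function.Bijective fun x : F ↦ x ^ 2 :=
  Finite.injective_iff_bijective.1 (frobenius_inj F 2)

variable [Fintype F] [DecidableEq F]

theorem sum_signChar_mul (x : F) :
    ∑ a, signChar F (a * x) = if x = 0 then (Fintype.card F : ℤ) else 0 := by
  rw [AddChar.sum_mulShift x signChar_isPrimitive]
  push_cast
  rfl

/- Detect `w ^ 2 + w = c` with characters `a = b ^ 2`: since `ψ (b² w²) = ψ (b w)`, the sum over `w`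
vanishes unless `b² + b = 0`. -/
theorem card_sq_add_self_eq (c : F) : (#{w : F | w ^ 2 + w = c} : ℤ) = 1 + signChar F c := by
  have hinner (b : F) : ∑ w, signChar F (b ^ 2 * (w ^ 2 + w + c)) =
      signChar F (b ^ 2 * c) * if b ^ 2 + b = 0 then (Fintype.card F : ℤ) else 0 := by
    rw [← sum_signChar_mul, mul_sum]
    refine sum_congr rfl fun w _ ↦ ?_
    rw [show b ^ 2 * (w ^ 2 + w + c) = (b * w) ^ 2 + (b ^ 2 * c + w * b ^ 2) by ring,
      AddChar.map_add_eq_mul, signChar_sq, ← AddChar.map_add_eq_mul, ← AddChar.map_add_eq_mul]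
    congr 1
    ring
  have hroots : ({b : F | b ^ 2 + b = 0} : Finset F) = {0, 1} := by
    ext b
    rw [mem_filter_univ, mem_insert, mem_singleton, show b ^ 2 + b = b * (b + 1) by ring,
      mul_eq_zero, CharTwo.add_eq_zero]
  have key : (Fintype.card F : ℤ) * #{w : F | w ^ 2 + w = c} =
      Fintype.card F * (1 + signChar F c) := calc
    _ = ∑ w : F, ∑ a, signChar F (a * (w ^ 2 + w + c)) := by
      simp only [sum_signChar_mul, CharTwo.add_eq_zero]
      rw [← sum_filter, sum_const, nsmul_eq_mul, mul_comm]
    _ = ∑ b : F, ∑ w, signChar F (b ^ 2 * (w ^ 2 + w + c)) := by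
      rw [sum_comm, ← sq_bijective.sum_comp]
    _ = Fintype.card F * (1 + signChar F c) := by
      simp only [hinner, mul_ite, mul_zero]
      rw [← sum_filter, hroots, sum_pair zero_ne_one]
      simp
      ring
  exact mul_left_cancel₀ (Nat.cast_ne_zero.2 Fintype.card_ne_zero) key

end ArtinSchreier

section QuadraticExtension
variable (F : Type*) {K : Type*} [Field F] [Field K] [Algebra F K]

theorem card_eq_card_sq (K : Type*) [Fintype F] [Field K] [Fintype K] [Algebra F K]
    [Algebra.IsQuadraticExtension F K] : Fintype.card K = Fintype.card F ^ 2 := by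
  rw [Module.card_eq_pow_finrank (K := F), Algebra.IsQuadraticExtension.finrank_eq_two]

section Norm
variable {F} [Algebra.IsQuadraticExtension F K]

theorem norm_algebraMap_eq_sq (a : F) : Algebra.norm F (algebraMap F K a) = a ^ 2 := by
  rw [Algebra.norm_algebraMap, Algebra.IsQuadraticExtension.finrank_eq_two]

theorem norm_smul_eq_sq_mul (a : F) (x : K) :
    Algebra.norm F (a • x) = a ^ 2 * Algebra.norm F x := by
  rw [Algebra.smul_def, map_mul, norm_algebraMap_eq_sq]

end Norm

section Conj
variable [Fintype F]

/-- The conjugation `x ↦ x ^ |F|` of a quadratic extension `K` of the finite field `F`. -/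
def conj : K →ₐ[F] K := FiniteField.frobeniusAlgHom F K

theorem conj_apply (x : K) : conj F x = x ^ Fintype.card F := rfl

variable [Finite K] [Algebra.IsQuadraticExtension F K]

theorem algebraMap_norm_eq_mul_conj (x : K) :
    algebraMap F K (Algebra.norm F x) = x * conj F x := by
  rw [FiniteField.algebraMap_norm_eq_prod_pow, Algebra.IsQuadraticExtension.finrank_eq_two,
    prod_range_succ, prod_range_one, pow_zero, pow_one, pow_one, conj_apply,
    Nat.card_eq_fintype_card]

theorem algebraMap_trace_eq_add_conj (x : K) :
    algebraMap F K (Algebra.trace F K x) = x + conj F x := by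
  rw [FiniteField.algebraMap_trace_eq_sum_pow, Algebra.IsQuadraticExtension.finrank_eq_two,
    sum_range_succ, sum_range_one, pow_zero, pow_one, pow_one, conj_apply,
    Nat.card_eq_fintype_card]

theorem conj_conj (x : K) : conj F (conj F x) = x := by
  have := Fintype.ofFinite K
  rw [conj_apply, conj_apply, ← pow_mul, ← sq, ← card_eq_card_sq F K, FiniteField.pow_card]

theorem trace_mul_trace (x y : K) : Algebra.trace F K x * Algebra.trace F K y =
    Algebra.trace F K (x * y) + Algebra.trace F K (x * conj F y) :=
  (algebraMap F K).injective <| by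
    simp only [map_add, map_mul, algebraMap_trace_eq_add_conj, conj_conj]
    ring

theorem conj_eq_self_iff {x : K} : conj F x = x ↔ ∃ a, algebraMap F K a = x := by
  refine ⟨fun hx ↦ ?_, fun ⟨a, ha⟩ ↦ ha ▸ (conj F).commutes a⟩
  obtain ⟨y, hy⟩ := Algebra.trace_surjective F K 1
  refine ⟨Algebra.trace F K (x * y), ?_⟩
  rw [algebraMap_trace_eq_add_conj, map_mul, hx, ← mul_add, ← algebraMap_trace_eq_add_conj, hy,
    map_one, mul_one]

end Conj

variable [Finite F] [Finite K] [Algebra.IsQuadraticExtension F K]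

theorem norm_one_add (x : K) :
    Algebra.norm F (1 + x) = 1 + Algebra.trace F K x + Algebra.norm F x := by
  have := Fintype.ofFinite F
  apply (algebraMap F K).injective
  simp only [map_add, map_one, algebraMap_norm_eq_mul_conj, algebraMap_trace_eq_add_conj]
  ring

variable {F} [CharP K 2]

theorem signChar_algebraMap [CharP F 2] (a : F) : signChar K (algebraMap F K a) = 1 := by
  rw [← signChar_trace (F := F), Algebra.trace_algebraMap,
    Algebra.IsQuadraticExtension.finrank_eq_two, CharTwo.two_nsmul, AddChar.map_zero_eq_one]

/- A root `w` of `w ^ 2 + w = n` in `K` has conjugate `w` or `w + 1`: either it lies in `F`, or it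
has trace `1` and norm `n`. -/
theorem trace_eq_one_and_norm_eq_iff {w : K} {n : F} :
    Algebra.trace F K w = 1 ∧ Algebra.norm F w = n ↔
      w ^ 2 + w = algebraMap F K n ∧ ∀ a, algebraMap F K a ≠ w := by
  have := Fintype.ofFinite F
  rw [← not_exists, ← conj_eq_self_iff, ← (algebraMap F K).injective.eq_iff,
    ← (algebraMap F K).injective.eq_iff, algebraMap_norm_eq_mul_conj, algebraMap_trace_eq_add_conj,
    map_one]
  constructor
  · rintro ⟨htr, hn⟩
    refine ⟨?_, fun h ↦ ?_⟩
    · linear_combination hn - w * htr + w ^ 2 * CharTwo.two_eq_zero (R := K)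
    · rw [h, CharTwo.add_self_eq_zero] at htr
      exact zero_ne_one htr
  · rintro ⟨hw, hne⟩
    have hconj : conj F w ^ 2 + conj F w = algebraMap F K n := by
      rw [← map_pow, ← map_add, hw, AlgHom.commutes]
    have hprod : (conj F w - w) * (w + conj F w - 1) = 0 := by
      linear_combination hconj - hw + (w - conj F w) * CharTwo.two_eq_zero (R := K)
    have htr := sub_eq_zero.1 ((mul_eq_zero.1 hprod).resolve_left (sub_ne_zero.2 hne))
    exact ⟨htr, by linear_combination w * htr + hw - w ^ 2 * CharTwo.two_eq_zero (R := K)⟩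

end QuadraticExtension

section TraceNormCount
variable {F K : Type*} [Field F] [Finite F] [DecidableEq F] [CharP F 2]
  [Field K] [Fintype K] [CharP K 2] [Algebra F K] [Algebra.IsQuadraticExtension F K]

theorem card_trace_eq_one_norm_eq (n : F) :
    (#{w : K | Algebra.trace F K w = 1 ∧ Algebra.norm F w = n} : ℤ) = 1 - signChar F n := by
  classical
  have := Fintype.ofFinite F
  have hrange : #{w : K | w ^ 2 + w = algebraMap F K n ∧ ∃ a, algebraMap F K a = w} =
      #{a : F | a ^ 2 + a = n} := by
    rw [← card_map ⟨algebraMap F K, (algebraMap F K).injective⟩]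
    congr 1
    ext w
    simp only [mem_filter_univ, mem_map, Function.Embedding.coeFn_mk]
    constructor
    · rintro ⟨hw, a, rfl⟩
      exact ⟨a, (algebraMap F K).injective (by simpa using hw), rfl⟩
    · rintro ⟨a, rfl, rfl⟩
      exact ⟨by simp, a, rfl⟩
  have hsplit := card_filter_add_card_filter_not (s := {w : K | w ^ 2 + w = algebraMap F K n})
    (fun w ↦ ∃ a, algebraMap F K a = w)
  rw [filter_filter, filter_filter, hrange] at hsplit
  have hK := card_sq_add_self_eq (algebraMap F K n)
  have hF := card_sq_add_self_eq n
  simp only [trace_eq_one_and_norm_eq_iff, ← not_exists]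
  rw [signChar_algebraMap] at hK
  zify at hsplit
  linear_combination hsplit + hK - hF

theorem card_trace_eq_norm_eq {t : F} (ht : t ≠ 0) (n : F) :
    (#{x : K | Algebra.trace F K x = t ∧ Algebra.norm F x = n} : ℤ) =
      1 - signChar F (n / t ^ 2) := by
  rw [← card_trace_eq_one_norm_eq (K := K)]
  congr 1
  refine card_nbij' (fun x ↦ t⁻¹ • x) (fun w ↦ t • w) ?_ ?_ ?_ ?_
  · intro x hx
    obtain ⟨htr, hn⟩ := (mem_filter_univ x).1 hx
    refine (mem_filter_univ _).2 ⟨?_, ?_⟩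
    · rw [map_smul, htr, smul_eq_mul, inv_mul_cancel₀ ht]
    · rw [norm_smul_eq_sq_mul, hn, inv_pow, div_eq_inv_mul]
  · intro w hw
    obtain ⟨htr, hn⟩ := (mem_filter_univ w).1 hw
    refine (mem_filter_univ _).2 ⟨?_, ?_⟩
    · rw [map_smul, htr, smul_eq_mul, mul_one]
    · rw [norm_smul_eq_sq_mul, hn, mul_div_cancel₀ _ (pow_ne_zero 2 ht)]
  · exact fun x _ ↦ smul_inv_smul₀ ht x
  · exact fun w _ ↦ inv_smul_smul₀ ht w

end TraceNormCount

section UnitCircle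
variable (F K : Type*) [Field F] [Field K] [Algebra F K]

/-- The unit circle of `K` over `F`: the group of elements of norm one. -/
noncomputable abbrev unitCircle : Subgroup Kˣ := (Units.map (Algebra.norm F : K →* F)).ker

variable {F K}

instance : CoeOut (unitCircle F K) K := ⟨fun u ↦ ((u : Kˣ) : K)⟩

theorem norm_coe_unitCircle (u : unitCircle F K) : Algebra.norm F (u : K) = 1 :=
  congrArg Units.val (MonoidHom.mem_ker.1 u.2)

theorem mem_unitCircle {x : Kˣ} : x ∈ unitCircle F K ↔ Algebra.norm F (x : K) = 1 := by
  rw [MonoidHom.mem_ker, Units.ext_iff]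
  rfl

theorem exists_unitCircle_coe_eq {x : K} (hx : Algebra.norm F x = 1) [FiniteDimensional F K] :
    ∃ u : unitCircle F K, (u : K) = x := by
  have hx0 : x ≠ 0 := by
    rintro rfl
    simp [Algebra.norm_zero] at hx
  exact ⟨⟨Units.mk0 x hx0, mem_unitCircle.2 hx⟩, rfl⟩

theorem sum_unitCircle {M : Type*} [AddCommMonoid M] [DecidableEq F] [Fintype K]
    [Fintype (unitCircle F K)] (f : K → M) :
    ∑ u : unitCircle F K, f u = ∑ x : K with Algebra.norm F x = 1, f x := by
  refine sum_nbij (fun u ↦ (u : K)) (fun u _ ↦ (mem_filter_univ _).2 (norm_coe_unitCircle u))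
    (fun u _ v _ h ↦ Subtype.ext (Units.ext h)) (fun x hx ↦ ?_) fun _ _ ↦ rfl
  obtain ⟨u, hu⟩ := exists_unitCircle_coe_eq ((mem_filter_univ x).1 (mem_coe.1 hx))
  exact ⟨u, mem_coe.2 (mem_univ u), hu⟩

theorem conj_coe_unitCircle [Fintype F] [Finite K] [Algebra.IsQuadraticExtension F K]
    (u : unitCircle F K) : conj F (u : K) = (u⁻¹ : unitCircle F K) := by
  have h := algebraMap_norm_eq_mul_conj F (u : K)
  rw [norm_coe_unitCircle, map_one] at h
  simpa using eq_inv_of_mul_eq_one_right h.symm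

variable [Finite F] [Finite K] [Algebra.IsQuadraticExtension F K]

theorem trace_inv_unitCircle (u : unitCircle F K) :
    Algebra.trace F K (u⁻¹ : unitCircle F K) = Algebra.trace F K u := by
  have := Fintype.ofFinite F
  apply (algebraMap F K).injective
  rw [← conj_coe_unitCircle, algebraMap_trace_eq_add_conj, conj_conj, add_comm,
    ← algebraMap_trace_eq_add_conj]

theorem trace_mul_trace_unitCircle (u v : unitCircle F K) :
    Algebra.trace F K u * Algebra.trace F K v =
      Algebra.trace F K (u * v : unitCircle F K) + Algebra.trace F K (u / v : unitCircle F K) := by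
  have := Fintype.ofFinite F
  rw [trace_mul_trace, conj_coe_unitCircle, div_eq_mul_inv]
  rfl

theorem trace_unitCircle_eq_zero_iff [CharP K 2] (u : unitCircle F K) :
    Algebra.trace F K (u : K) = 0 ↔ u = 1 := by
  have := Fintype.ofFinite F
  have hinv : conj F (u : K) = (u : K)⁻¹ := by simpa using conj_coe_unitCircle u
  rw [← (algebraMap F K).injective.eq_iff, algebraMap_trace_eq_add_conj, map_zero,
    CharTwo.add_eq_zero, hinv, ← mul_eq_one_iff_eq_inv₀ (Units.ne_zero _), ← sq,
    ← one_pow (M := K) 2, CharTwo.sq_inj, Units.val_eq_one, OneMemClass.coe_eq_one]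

end UnitCircle

section Polar
variable {F K M : Type*} [Field F] [CharP F 2] [Field K] [Algebra F K]
  [Algebra.IsQuadraticExtension F K]

theorem bijective_units_mul_unitCircle [Finite F] : Function.Bijective
    fun p : Fˣ × unitCircle F K ↦ Units.map (algebraMap F K : F →* K) p.1 * p.2 := by
  have hnorm (p : Fˣ × unitCircle F K) :
      Algebra.norm F ((Units.map (algebraMap F K : F →* K) p.1 * p.2 : Kˣ) : K) = p.1 ^ 2 := by
    rw [Units.val_mul, map_mul, norm_coe_unitCircle, mul_one]
    exact norm_algebraMap_eq_sq _
  constructor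
  · rintro ⟨r, u⟩ ⟨s, v⟩ h
    have hrs : r = s := by
      refine Units.ext (sq_bijective.injective ?_)
      exact (hnorm (r, u)).symm.trans ((congrArg (fun x : Kˣ ↦ Algebra.norm F (x : K)) h).trans
        (hnorm (s, v)))
    subst hrs
    exact Prod.ext rfl (Subtype.ext (mul_left_cancel h))
  · intro x
    obtain ⟨r, hr : r ^ 2 = _⟩ :=
      sq_bijective.surjective (Units.map (Algebra.norm F : K →* F) x : F)
    have hr0 : r ≠ 0 := by
      rintro rfl
      exact Units.ne_zero _ (hr.symm.trans (zero_pow two_ne_zero))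
    let s : Kˣ := Units.map (algebraMap F K : F →* K) (Units.mk0 r hr0)
    have hs : Units.map (Algebra.norm F : K →* F) s = Units.map (Algebra.norm F : K →* F) x :=
      Units.ext ((norm_algebraMap_eq_sq r).trans hr)
    have hu : s⁻¹ * x ∈ unitCircle F K := by
      rw [MonoidHom.mem_ker, map_mul, map_inv, hs, inv_mul_cancel]
    exact ⟨(Units.mk0 r hr0, ⟨s⁻¹ * x, hu⟩), mul_inv_cancel_left s x⟩

variable [Fintype F] [DecidableEq F] [Fintype K] [DecidableEq K]

theorem sum_units_eq_sum_smul_unitCircle [AddCommMonoid M] (g : K → M) :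
    ∑ x : Kˣ, g x = ∑ r : Fˣ, ∑ u : unitCircle F K, g ((r : F) • (u : K)) := by
  rw [← Fintype.sum_prod_type', ← bijective_units_mul_unitCircle (F := F).sum_comp]
  simp [Algebra.smul_def]

variable (F K) in
theorem card_unitCircle : Fintype.card (unitCircle F K) = Fintype.card F + 1 := by
  have h := sum_units_eq_sum_smul_unitCircle (F := F) (fun _ : K ↦ 1)
  simp only [sum_const, card_univ, Fintype.card_units, smul_eq_mul, mul_one,
    card_eq_card_sq F K] at h
  have hq : 0 < Fintype.card F - 1 := Nat.sub_pos_of_lt Fintype.one_lt_card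
  refine Nat.eq_of_mul_eq_mul_left hq (h.symm.trans ?_)
  rw [← one_pow 2, Nat.sq_sub_sq, one_pow, mul_comm]

end Polar

section KloostermanIdentities
variable {k R : Type*} [Field k] [Fintype k] [DecidableEq k] [CommRing R]

theorem kloostermanSum_mul_units (ψ : AddChar k R) (a b : k) (t : kˣ) :
    kloostermanSum ψ (a * t) (b * ↑t⁻¹) = kloostermanSum ψ a b := by
  rw [kloostermanSum, kloostermanSum,
    ← Equiv.sum_comp (Equiv.mulLeft t) fun x ↦ ψ (a * x + b * ↑x⁻¹)]
  refine sum_congr rfl fun x _ ↦ ?_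
  rw [Equiv.coe_mulLeft, mul_inv, Units.val_mul, Units.val_mul, mul_assoc, mul_assoc]

theorem kloostermanSum_eq_one_mul (ψ : AddChar k R) {a : k} (ha : a ≠ 0) (b : k) :
    kloostermanSum ψ a b = kloostermanSum ψ 1 (a * b) := by
  rw [← kloostermanSum_mul_units ψ 1 (a * b) (Units.mk0 a ha)]
  simp [mul_comm a b, ha]

theorem kloostermanSum_comm (ψ : AddChar k R) (a b : k) :
    kloostermanSum ψ a b = kloostermanSum ψ b a := by
  rw [kloostermanSum, kloostermanSum, ← Equiv.sum_comp (Equiv.inv kˣ)]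
  exact sum_congr rfl fun x _ ↦ by rw [Equiv.inv_apply, inv_inv, add_comm]

theorem kloostermanSum_zero_zero (ψ : AddChar k R) :
    kloostermanSum ψ 0 0 = Fintype.card k - 1 := by
  simp [kloostermanSum, Fintype.card_units, Nat.cast_sub Fintype.card_pos]

theorem kloostermanSum_zero_right [IsDomain R] {ψ : AddChar k R} (hψ : ψ.IsPrimitive) {a : k}
    (ha : a ≠ 0) : kloostermanSum ψ a 0 = -1 := by
  have h := AddChar.sum_mulShift a hψ
  rw [if_neg ha, sum_eq_zero_add_sum_units, zero_mul, AddChar.map_zero_eq_one, Nat.cast_zero] at h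
  simp only [kloostermanSum, zero_mul, add_zero, mul_comm a]
  linear_combination h

-- In the double sum over `x` and `y`, substitute `y = u * x`.
theorem kloostermanSum_one_mul_kloostermanSum_one (ψ : AddChar k R) (a b : k) :
    kloostermanSum ψ 1 a * kloostermanSum ψ 1 b =
      ∑ u : kˣ, kloostermanSum ψ (1 + u) (a + b * ↑u⁻¹) := by
  simp only [kloostermanSum, sum_mul_sum]
  conv_rhs => rw [sum_comm]
  refine sum_congr rfl fun x _ ↦ ?_
  rw [← Equiv.sum_comp (Equiv.mulRight x)]
  refine sum_congr rfl fun u _ ↦ ?_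
  rw [← AddChar.map_add_eq_mul, Equiv.coe_mulRight, mul_inv, Units.val_mul, Units.val_mul]
  exact congrArg ψ (by ring)

theorem units_add_inv_eq_zero_iff {k : Type*} [Field k] [CharP k 2] (x : kˣ) :
    (x : k) + ↑x⁻¹ = 0 ↔ x = 1 := by
  rw [CharTwo.add_eq_zero, Units.val_inj, eq_inv_iff_mul_eq_one, ← sq, ← Units.val_inj,
    Units.val_pow_eq_pow_val, Units.val_one, ← one_pow (M := k) 2, CharTwo.sq_inj,
    Units.val_eq_one]

theorem sum_kloostermanSum_diag [CharP k 2] [IsDomain R] {ψ : AddChar k R} (hψ : ψ.IsPrimitive) :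
    ∑ c, kloostermanSum ψ c c = Fintype.card k := by
  simp only [kloostermanSum, ← mul_add]
  rw [sum_comm, sum_congr rfl fun x _ ↦ AddChar.sum_mulShift _ hψ]
  simp only [units_add_inv_eq_zero_iff, Nat.cast_ite, Nat.cast_zero, sum_ite_eq', mem_univ, if_true]

end KloostermanIdentities

section KloostermanCharTwo
variable {F : Type*} [Field F] [CharP F 2] [Fintype F] [DecidableEq F]

theorem sum_units_sq {M : Type*} [AddCommMonoid M] (g : Fˣ → M) :
    ∑ x : Fˣ, g (x ^ 2) = ∑ x, g x := by
  refine Function.Bijective.sum_comp (Finite.injective_iff_bijective.1 fun x y h ↦ ?_) g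
  exact Units.ext (sq_bijective.injective (congrArg Units.val h))

theorem kloostermanSum_one_sq (c : F) :
    kloostermanSum (signChar F) 1 (c ^ 2) = kloostermanSum (signChar F) 1 c := by
  rw [kloostermanSum, ← sum_units_sq]
  refine sum_congr rfl fun x _ ↦ ?_
  rw [← signChar_sq (1 * (x : F) + _), CharTwo.add_sq, mul_pow, mul_pow, one_pow, ← inv_pow,
    Units.val_pow_eq_pow_val, Units.val_pow_eq_pow_val]

theorem kloostermanSum_self {c : F} (hc : c ≠ 0) :
    kloostermanSum (signChar F) c c = kloostermanSum (signChar F) 1 c := by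
  rw [kloostermanSum_eq_one_mul _ hc, ← sq, kloostermanSum_one_sq]

theorem kloostermanSum_eq_diag_sub {a b : F} (hab : a ≠ 0 ∨ b ≠ 0) :
    kloostermanSum (signChar F) a b = kloostermanSum (signChar F) (a * b) (a * b) -
      if a * b = 0 then (Fintype.card F : ℤ) else 0 := by
  wlog ha : a ≠ 0 generalizing a b
  · rw [kloostermanSum_comm, mul_comm]
    exact this hab.symm (hab.resolve_left ha)
  rcases eq_or_ne b 0 with rfl | hb
  · rw [mul_zero, if_pos rfl, kloostermanSum_zero_zero,
      kloostermanSum_zero_right signChar_isPrimitive ha]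
    ring
  · have := mul_ne_zero ha hb
    rw [if_neg this, sub_zero, kloostermanSum_self this, kloostermanSum_eq_one_mul _ ha]

end KloostermanCharTwo

section FourElements
open Polynomial

/-- The power sums `α ^ n + β ^ n` of the roots of `X ^ 2 - X + 4`. -/
def traceSeq : ℕ → ℤ
  | 0 => 2
  | 1 => 1
  | n + 2 => traceSeq (n + 1) - 4 * traceSeq n

theorem traceSeq_add_two (n : ℕ) : traceSeq (n + 2) = traceSeq (n + 1) - 4 * traceSeq n := rfl

-- The third component is the invariant that makes the induction work.
theorem traceSeq_two_mul_and (n : ℕ) : traceSeq (2 * n) = traceSeq n ^ 2 - 2 * 4 ^ n ∧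
    traceSeq (2 * n + 1) = traceSeq n * traceSeq (n + 1) - 4 ^ n ∧
    traceSeq (n + 1) ^ 2 - traceSeq (n + 1) * traceSeq n + 4 * traceSeq n ^ 2 = 15 * 4 ^ n := by
  induction n with
  | zero => simp [traceSeq]
  | succ n ih =>
    obtain ⟨heven, hodd, hinv⟩ := ih
    rw [mul_add_one, traceSeq_add_two (2 * n + 1), traceSeq_add_two (2 * n), traceSeq_add_two n,
      heven, hodd, pow_succ (4 : ℤ) n]
    refine ⟨?_, ?_, ?_⟩ <;> linarith [hinv]

theorem traceSeq_two_mul (n : ℕ) : traceSeq (2 * n) = traceSeq n ^ 2 - 2 * 4 ^ n :=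
  (traceSeq_two_mul_and n).1

theorem powerSum_eq_neg_traceSeq {k : Type*} [Field k] [Fintype k] {Λ : k[X] →* ℤ}
    (h1 : lCoeff Λ 1 = -1) (h2 : lCoeff Λ 2 = 4)
    (h3 : ∀ n, 3 ≤ n → lCoeff Λ n = 0) : ∀ n, powerSum Λ (n + 1) = -traceSeq (n + 1)
  | 0 => by rw [powerSum_one, h1, traceSeq]
  | 1 => by simp [powerSum_two, h1, h2, traceSeq]
  | n + 2 => by
    rw [powerSum_add_three h3, powerSum_eq_neg_traceSeq h1 h2 h3 n,
      powerSum_eq_neg_traceSeq h1 h2 h3 (n + 1), h1, h2, traceSeq_add_two (n + 1)]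
    ring

variable {k : Type*} [Field k] [CharP k 2] [Fintype k]

theorem sum_eq_of_card_eq_four (hk : Fintype.card k = 4) {w : k} (hw : w ^ 2 + w + 1 = 0)
    (g : k → ℤ) : ∑ x, g x = g 0 + (g 1 + (g w + g (w ^ 2))) := by
  classical
  have hsq : w ^ 2 = w + 1 := by linear_combination hw - (w + 1) * CharTwo.two_eq_zero (R := k)
  have hw0 : w ≠ 0 := by
    rintro rfl
    simp at hw
  have hw1 : w ≠ 1 := by
    rintro rfl
    simp [CharTwo.add_self_eq_zero] at hw
  have hsq0 := pow_ne_zero 2 hw0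
  have hsq1 : w ^ 2 ≠ 1 := by simpa [hsq] using hw0
  have hsqw : w ^ 2 ≠ w := by simp [hsq]
  have huniv : ({0, 1, w, w ^ 2} : Finset k) = univ :=
    eq_univ_of_card _ (by simp [hk, hw0.symm, hw1.symm, hsq0.symm, hsq1.symm, hsqw.symm])
  rw [← huniv, sum_insert, sum_insert, sum_pair hsqw.symm]
  · simp [hw1.symm, hsq1.symm]
  · simp [hw0.symm, hsq0.symm]

theorem kloostermanSum_one_of_card_eq_four [DecidableEq k] (hk : Fintype.card k = 4) {w : k}
    (hw : w ^ 2 + w + 1 = 0) : kloostermanSum (signChar k) 1 w = -1 := by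
  have hsq : w ^ 2 = w + 1 := by linear_combination hw - (w + 1) * CharTwo.two_eq_zero (R := k)
  have hinv : w⁻¹ = w ^ 2 :=
    inv_eq_of_mul_eq_one_right (by linear_combination (w - 1) * hw)
  have hone : signChar k 1 = 1 := by
    rw [signChar_one (m := 2) (by rw [Nat.card_eq_fintype_card, hk]; norm_num), neg_one_sq]
  have hneg : signChar k w = -1 := by
    have h := sum_signChar_mul (1 : k)
    simp only [mul_one, if_neg one_ne_zero, sum_eq_of_card_eq_four hk hw, hone, signChar_sq,
      AddChar.map_zero_eq_one] at h
    linarith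
  have h := sum_eq_zero_add_sum_units fun x : k ↦ signChar k (1 * x + w * x⁻¹)
  have hw0 : w ≠ 0 := by
    rintro rfl
    simp at hw
  have hcube : w * w ^ 2 = 1 := hinv ▸ mul_inv_cancel₀ hw0
  have hsq_sq : w * (w ^ 2) ^ 2 = w ^ 2 := by rw [sq (w ^ 2), ← mul_assoc, hcube, one_mul]
  rw [sum_eq_of_card_eq_four hk hw] at h
  simp only [one_mul, mul_zero, inv_zero, AddChar.map_zero_eq_one, inv_one, mul_one,
    ← inv_pow, hinv, hcube, hsq_sq, CharTwo.add_self_eq_zero] at h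
  rw [add_comm 1 w, ← hsq, signChar_sq, hneg] at h
  simp only [kloostermanSum, ← Units.val_inv_eq_inv_val, one_mul] at h ⊢
  linarith

theorem natDegree_X_sq_add_X_add_one : (X ^ 2 + X + 1 : (ZMod 2)[X]).natDegree = 2 := by
  compute_degree!

theorem irreducible_X_sq_add_X_add_one : Irreducible (X ^ 2 + X + 1 : (ZMod 2)[X]) := by
  refine irreducible_of_degree_le_three_of_not_isRoot ?_ fun x ↦ ?_
  · rw [natDegree_X_sq_add_X_add_one]
    decide
  · have hx : ∀ x : ZMod 2, x ^ 2 + x + 1 ≠ 0 := by decide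
    simpa using hx x

-- `ω` generates the field with four elements, over which the `L`-function is `1 - T + 4 T²`.
theorem kloostermanSum_one_of_sq_add_self_add_one [DecidableEq k] {n : ℕ}
    (hk : Fintype.card k = 4 ^ n) {ω : k} (hω : ω ^ 2 + ω + 1 = 0) :
    kloostermanSum (signChar k) 1 ω = -traceSeq n := by
  classical
  let := ZMod.algebra k 2
  let F := IntermediateField.adjoin (ZMod 2) {ω}
  let w : F := IntermediateField.AdjoinSimple.gen (ZMod 2) ω
  have hw : w ^ 2 + w + 1 = 0 := Subtype.ext hω
  have hw0 : w ≠ 0 := by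
    intro h
    simp [h] at hw
  have hF : Fintype.card F = 4 := by
    rw [Module.card_eq_pow_finrank (K := ZMod 2), ZMod.card, IntermediateField.adjoin.finrank
      (.of_finite _ ω), ← minpoly.eq_of_irreducible_of_monic irreducible_X_sq_add_X_add_one
      (by simpa using hω) (by monicity!)]
    rw [natDegree_X_sq_add_X_add_one]
    rfl
  have hfinrank : Module.finrank F k = n := by
    have h := Module.card_eq_pow_finrank (K := F) (V := k)
    rw [hk, hF] at h
    exact (Nat.pow_right_injective (by norm_num) h).symm
  have hn : n ≠ 0 := hfinrank ▸ Module.finrank_pos.ne'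
  obtain ⟨n, rfl⟩ := Nat.exists_eq_add_one_of_ne_zero hn
  have hprim : (signChar F).IsPrimitive := signChar_isPrimitive
  calc
    _ = powerSum (kloostermanChar (signChar F) 1 w) (n + 1) := by
      rw [← hfinrank, ← kloostermanSum_comp_trace, signChar_comp_trace, map_one]
      rfl
    _ = -traceSeq (n + 1) := powerSum_eq_neg_traceSeq
      (by rw [lCoeff_kloostermanChar_one, kloostermanSum_one_of_card_eq_four hF hw])
      (by rw [lCoeff_kloostermanChar_two hprim one_ne_zero hw0, hF, Nat.cast_ofNat])
      (fun _ ↦ lCoeff_kloostermanChar_of_three_le hprim one_ne_zero w) n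

end FourElements

section NormSum
variable {F K : Type*} [Field F] [CharP F 2] [Field K] [CharP K 2]
  [Algebra F K] [Algebra.IsQuadraticExtension F K]

theorem exists_unitCircle_trace_eq_one [Finite F] [Finite K]
    (hone : signChar F 1 = -1) :
    ∃ ω : unitCircle F K, Algebra.trace F K (ω : K) = 1 := by
  classical
  have := Fintype.ofFinite K
  have hcard := card_trace_eq_one_norm_eq (K := K) (1 : F)
  rw [hone] at hcard
  obtain ⟨x, hx⟩ := card_pos.1
    (by lia : 0 < #{w : K | Algebra.trace F K w = 1 ∧ Algebra.norm F w = 1})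
  obtain ⟨htrace, hnorm⟩ := (mem_filter_univ x).1 hx
  have hx0 : x ≠ 0 := by
    rintro rfl
    simp at htrace
  exact ⟨⟨Units.mk0 x hx0, mem_unitCircle.2 hnorm⟩, htrace⟩

variable [Fintype K] [DecidableEq K]

-- The involution `x ↦ x / (1 + x)` of `K \ {0, 1}` turns one sum into the other.
theorem sum_signChar_inv_norm_add_inv_norm_one_add :
    ∑ x : K, signChar F ((Algebra.norm F x)⁻¹ + (Algebra.norm F (1 + x))⁻¹) =
      2 * signChar F 1 - 1 +
        ∑ x : Kˣ, signChar F (Algebra.norm F (1 + (x : K)) + Algebra.norm F (1 + (x : K)⁻¹)) := by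
  have hne {x : K} (hx : x ∈ ({0, 1} : Finset K)ᶜ) : x ≠ 0 ∧ 1 + x ≠ 0 := by
    simpa [CharTwo.add_eq_zero, @eq_comm K 1] using hx
  have hone_add {x : K} (hx : 1 + x ≠ 0) : 1 + x / (1 + x) = (1 + x)⁻¹ := by
    field_simp
    linear_combination x * CharTwo.two_eq_zero (R := K)
  have hmaps (x : K) (hx : x ∈ ({0, 1} : Finset K)ᶜ) : x / (1 + x) ∈ ({0, 1} : Finset K)ᶜ := by
    obtain ⟨h0, h1⟩ := hne hx
    simp [h0, h1, div_eq_one_iff_eq]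
  have hinvol (x : K) (hx : x ∈ ({0, 1} : Finset K)ᶜ) : x / (1 + x) / (1 + x / (1 + x)) = x := by
    rw [hone_add (hne hx).2, div_inv_eq_mul, div_mul_cancel₀ _ (hne hx).2]
  have hcompl : ∑ x ∈ ({0, 1} : Finset K)ᶜ,
        signChar F ((Algebra.norm F x)⁻¹ + (Algebra.norm F (1 + x))⁻¹) =
      ∑ x ∈ ({0, 1} : Finset K)ᶜ,
        signChar F (Algebra.norm F (1 + x) + Algebra.norm F (1 + x⁻¹)) := by
    refine sum_nbij' (fun x ↦ x / (1 + x)) (fun x ↦ x / (1 + x)) hmaps hmaps hinvol hinvol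
      fun x hx ↦ ?_
    obtain ⟨h0, h1⟩ := hne hx
    rw [hone_add h1, ← Algebra.norm_inv, ← Algebra.norm_inv, inv_div, add_div, div_self h0, one_div,
      add_comm x⁻¹, CharTwo.add_cancel_left, add_comm]
  have hunits := sum_eq_zero_add_sum_units fun x : K ↦
    signChar F (Algebra.norm F (1 + x) + Algebra.norm F (1 + x⁻¹))
  rw [← sum_add_sum_compl {0, 1}, sum_pair zero_ne_one] at hunits ⊢
  rw [hcompl]
  simp [CharTwo.add_self_eq_zero] at hunits ⊢
  linarith

end NormSum

section PolarKloosterman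
variable {F K : Type*} [Field F] [CharP F 2] [Fintype F] [DecidableEq F]
  [Field K] [Fintype K] [DecidableEq K] [Algebra F K] [Algebra.IsQuadraticExtension F K]

theorem sum_units_signChar_norm_one_add :
    ∑ x : Kˣ, signChar F (Algebra.norm F (1 + (x : K)) + Algebra.norm F (1 + (x : K)⁻¹)) =
      ∑ u : unitCircle F K,
        kloostermanSum (signChar F) (1 + Algebra.trace F K u) (1 + Algebra.trace F K u) := by
  rw [sum_units_eq_sum_smul_unitCircle (F := F)
    fun x ↦ signChar F (Algebra.norm F (1 + x) + Algebra.norm F (1 + x⁻¹)), sum_comm]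
  refine sum_congr rfl fun u _ ↦ sum_congr rfl fun r _ ↦ ?_
  have htrace : Algebra.trace F K (u : K)⁻¹ = Algebra.trace F K u := by
    simpa using trace_inv_unitCircle u
  have hnorm := norm_coe_unitCircle u
  have hnorm_inv : Algebra.norm F (u : K)⁻¹ = 1 := by simpa using norm_coe_unitCircle u⁻¹
  rw [smul_inv₀, norm_one_add, norm_one_add, norm_smul_eq_sq_mul, norm_smul_eq_sq_mul, hnorm,
    hnorm_inv,
    map_smul, map_smul, htrace, ← Units.val_inv_eq_inv_val]
  set t := Algebra.trace F K (u : K)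
  calc
    _ = signChar F (((r : F) + ↑r⁻¹) ^ 2 + t * (r + ↑r⁻¹)) := congrArg _ (by
      simp only [smul_eq_mul]
      linear_combination (1 - (r : F) * ↑r⁻¹) * CharTwo.two_eq_zero (R := F))
    _ = _ := by
      rw [AddChar.map_add_eq_mul, signChar_sq, ← AddChar.map_add_eq_mul]
      exact congrArg _ (by ring)

theorem kloostermanSum_eq_sum_unitCircle [CharP K 2] (a b : K) :
    kloostermanSum (signChar K) a b = ∑ u : unitCircle F K, kloostermanSum (signChar F)
      (Algebra.trace F K (a * u)) (Algebra.trace F K (b * (u⁻¹ : unitCircle F K))) := by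
  simp only [kloostermanSum, Units.val_inv_eq_inv_val]
  rw [sum_units_eq_sum_smul_unitCircle (F := F) fun x ↦ signChar K (a * x + b * x⁻¹), sum_comm]
  refine sum_congr rfl fun u _ ↦ sum_congr rfl fun r _ ↦ ?_
  rw [← signChar_trace (F := F), smul_inv₀, mul_smul_comm, mul_smul_comm, map_add, map_smul,
    map_smul, smul_eq_mul, smul_eq_mul, mul_comm (r : F), mul_comm (r : F)⁻¹]
  simp

end PolarKloosterman

section KloostermanTrace

section UnitCircleMaps
variable {F K : Type*} [Field F] [Field K] [CharP K 2] [Algebra F K]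

theorem bijective_mul_self_div [Finite K] (ω : unitCircle F K) :
    Function.Bijective fun u : unitCircle F K ↦ u * u / ω := by
  refine Finite.injective_iff_bijective.1 fun u v h ↦ Subtype.ext (Units.ext ?_)
  have hsq := congrArg (fun x : unitCircle F K ↦ (x : K)) (div_left_injective h)
  simpa [← sq, CharTwo.sq_inj] using hsq

variable [CharP F 2] [Finite F] [DecidableEq F] [Algebra.IsQuadraticExtension F K]

theorem card_trace_unitCircle_eq [Fintype K] [DecidableEq K] (c : F) :
    (#{u : unitCircle F K | Algebra.trace F K (u : K) = c} : ℤ) =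
      if c = 0 then 1 else 1 - signChar F c⁻¹ := by
  split_ifs with hc
  · simp [hc, trace_unitCircle_eq_zero_iff, filter_eq']
  · rw [← signChar_sq, inv_pow, ← one_div, ← card_trace_eq_norm_eq (K := K) hc]
    rw [natCast_card_filter, sum_unitCircle fun x ↦ if Algebra.trace F K x = c then (1 : ℤ) else 0,
      sum_boole, filter_filter]
    simp only [and_comm]

end UnitCircleMaps

theorem kloostermanSum_trace_trace_div {F K : Type*} [Field F] [CharP F 2] [Fintype F]
    [DecidableEq F] [Field K] [CharP K 2] [Finite K] [DecidableEq K] [Algebra F K]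
    [Algebra.IsQuadraticExtension F K] {ω : unitCircle F K}
    (hω : Algebra.trace F K (ω : K) = 1) (u : unitCircle F K) :
    kloostermanSum (signChar F) (Algebra.trace F K u) (Algebra.trace F K (ω / u : unitCircle F K)) =
      kloostermanSum (signChar F) (1 + Algebra.trace F K (u * u / ω : unitCircle F K))
        (1 + Algebra.trace F K (u * u / ω : unitCircle F K)) -
      if u = 1 ∨ u = ω then (Fintype.card F : ℤ) else 0 := by
  have hprod : Algebra.trace F K (u : K) * Algebra.trace F K (ω / u : unitCircle F K) =
      1 + Algebra.trace F K (u * u / ω : unitCircle F K) := by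
    rw [trace_mul_trace_unitCircle, mul_div_cancel, hω, div_div_eq_mul_div]
  have hzero : Algebra.trace F K (u : K) = 0 ↔ u = 1 := trace_unitCircle_eq_zero_iff u
  have hzero' : Algebra.trace F K (ω / u : unitCircle F K) = 0 ↔ u = ω := by
    rw [trace_unitCircle_eq_zero_iff, div_eq_one, eq_comm]
  have hne : Algebra.trace F K (u : K) ≠ 0 ∨ Algebra.trace F K (ω / u : unitCircle F K) ≠ 0 := by
    rw [ne_eq, ne_eq, hzero, hzero', ← not_and_or]
    rintro ⟨rfl, rfl⟩
    exact zero_ne_one ((trace_unitCircle_eq_zero_iff (1 : unitCircle F K)).2 rfl ▸ hω)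
  rw [kloostermanSum_eq_diag_sub hne]
  simp only [mul_eq_zero, hzero, hzero']
  rw [hprod]

variable {F K : Type*} [Field F] [CharP F 2] [Fintype F] [DecidableEq F]
  [Field K] [CharP K 2] [Fintype K] [DecidableEq K] [Algebra F K] [Algebra.IsQuadraticExtension F K]

-- `ω` lies on the unit circle; write the Kloosterman sum of `K` at `ω` in polar coordinates.
theorem sum_kloostermanSum_one_add_trace_of_neg {m : ℕ} (hF : Fintype.card F = 2 ^ m)
    (hone : signChar F 1 = -1) :
    ∑ u : unitCircle F K,
        kloostermanSum (signChar F) (1 + Algebra.trace F K u) (1 + Algebra.trace F K u) =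
      2 * Fintype.card F - traceSeq m := by
  obtain ⟨ω, hω⟩ := exists_unitCircle_trace_eq_one (K := K) hone
  have hω1 : ω ≠ 1 := by
    rintro rfl
    exact zero_ne_one ((trace_unitCircle_eq_zero_iff (1 : unitCircle F K)).2 rfl ▸ hω)
  have hroot := (trace_eq_one_and_norm_eq_iff.1 ⟨hω, norm_coe_unitCircle ω⟩).1
  rw [map_one, ← CharTwo.add_eq_zero] at hroot
  have hK : Fintype.card K = 4 ^ m := by
    rw [card_eq_card_sq F K, hF, ← pow_mul, mul_comm, pow_mul]
    rfl
  have hpolar := kloostermanSum_one_of_sq_add_self_add_one hK hroot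
  have hmul (u : unitCircle F K) : (ω : K) * (u⁻¹ : unitCircle F K) = (ω / u : unitCircle F K) := by
    rw [div_eq_mul_inv]
    rfl
  simp only [kloostermanSum_eq_sum_unitCircle (F := F), one_mul, hmul,
    kloostermanSum_trace_trace_div hω, sum_sub_distrib] at hpolar
  rw [(bijective_mul_self_div ω).sum_comp fun u ↦ kloostermanSum (signChar F)
    (1 + Algebra.trace F K u) (1 + Algebra.trace F K u), ← sum_filter, sum_const, filter_or,
    filter_eq', filter_eq', if_pos (mem_univ _), if_pos (mem_univ _), singleton_union,
    card_pair hω1.symm, nsmul_eq_mul, Nat.cast_two] at hpolar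
  linarith

theorem card_units_add_inv_eq (c : F) :
    (#{r : Fˣ | (r : F) + ↑r⁻¹ = c} : ℤ) = if c = 0 then 1 else 1 + signChar F c⁻¹ := by
  split_ifs with hc
  · simp only [hc, units_add_inv_eq_zero_iff, filter_eq', mem_univ, if_true, card_singleton,
      Nat.cast_one]
  · rw [← signChar_sq, ← card_sq_add_self_eq]
    congr 1
    refine card_nbij (fun r ↦ c⁻¹ * (r : F)) (fun r hr ↦ ?_) (fun r _ s _ h ↦ ?_) fun w hw ↦ ?_
    · have hr : (r : F) + ↑r⁻¹ = c := (mem_filter_univ r).1 hr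
      refine (mem_filter_univ _).2 ?_
      linear_combination (c⁻¹ * r) ^ 2 * CharTwo.two_eq_zero (R := F) - c⁻¹ ^ 2 * r * hr +
        c⁻¹ ^ 2 * r.mul_inv - c⁻¹ * r * mul_inv_cancel₀ hc
    · exact Units.ext (mul_left_cancel₀ (inv_ne_zero hc) h)
    · have hw : w ^ 2 + w = c⁻¹ ^ 2 := (mem_filter_univ w).1 (mem_coe.1 hw)
      have hw0 : w ≠ 0 := by
        rintro rfl
        exact pow_ne_zero 2 (inv_ne_zero hc) (by simpa using hw.symm)
      refine ⟨Units.mk0 (c * w) (mul_ne_zero hc hw0), mem_coe.2 ((mem_filter_univ _).2 ?_),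
        inv_mul_cancel_left₀ hc w⟩
      have hinv : (c * w)⁻¹ = c * (w + 1) := inv_eq_of_mul_eq_one_right <| by
        linear_combination c ^ 2 * hw + (c * c⁻¹ + 1) * mul_inv_cancel₀ hc
      rw [Units.val_inv_eq_inv_val, Units.val_mk0, hinv]
      linear_combination c * w * CharTwo.two_eq_zero (R := F)

/- `u ↦ tr u` on the unit circle and `r ↦ r + r⁻¹` on `Fˣ` together take every value in `F` exactly
twice. -/
theorem sum_trace_unitCircle_add_sum_units_add_inv (f : F → ℤ) :
    ∑ u : unitCircle F K, f (Algebra.trace F K u) + ∑ r : Fˣ, f ((r : F) + ↑r⁻¹) =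
      2 * ∑ c, f c := by
  rw [← sum_fiberwise' _ (fun u : unitCircle F K ↦ Algebra.trace F K (u : K)),
    ← sum_fiberwise' _ (fun r : Fˣ ↦ (r : F) + ↑r⁻¹), ← sum_add_distrib, mul_sum]
  refine sum_congr rfl fun c _ ↦ ?_
  rw [sum_const, sum_const, nsmul_eq_mul, nsmul_eq_mul, card_trace_unitCircle_eq,
    card_units_add_inv_eq]
  split_ifs <;> ring

end KloostermanTrace

section KloostermanTraceSplit
variable {F K : Type*} [Field F] [CharP F 2] [Fintype F] [DecidableEq F]

theorem kloostermanSum_one_add_add_sq_mul_inv {ω : Fˣ} (hω : (ω : F) ^ 2 + ω + 1 = 0) (u : Fˣ) :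
    kloostermanSum (signChar F) (1 + (u : F)) (ω + (ω : F) ^ 2 * (u⁻¹ : Fˣ)) =
      kloostermanSum (signChar F) (1 + ((ω * u : Fˣ) + ((ω * u)⁻¹ : Fˣ)))
        (1 + ((ω * u : Fˣ) + ((ω * u)⁻¹ : Fˣ))) -
      if u = 1 ∨ u = ω then (Fintype.card F : ℤ) else 0 := by
  have hω1 : ω ≠ 1 := by
    rintro rfl
    simp [CharTwo.add_self_eq_zero] at hω
  have hinv : ((ω⁻¹ : Fˣ) : F) = ω ^ 2 := by
    rw [Units.val_inv_eq_inv_val]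
    refine inv_eq_of_mul_eq_one_right ?_
    linear_combination ((ω : F) - 1) * hω
  have hprod : (1 + (u : F)) * (ω + (ω : F) ^ 2 * (u⁻¹ : Fˣ)) =
      1 + ((ω * u : Fˣ) + ((ω * u)⁻¹ : Fˣ)) := by
    rw [mul_inv, Units.val_mul, Units.val_mul, hinv]
    linear_combination (ω : F) ^ 2 * u.mul_inv + hω - CharTwo.two_eq_zero (R := F)
  have hleft : 1 + (u : F) = 0 ↔ u = 1 := by
    rw [CharTwo.add_eq_zero, eq_comm, Units.val_eq_one]
  have hright : ω + (ω : F) ^ 2 * (u⁻¹ : Fˣ) = 0 ↔ u = ω := by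
    rw [CharTwo.add_eq_zero, ← Units.val_pow_eq_pow_val, ← Units.val_mul, Units.val_inj,
      ← div_eq_mul_inv, eq_div_iff_mul_eq', sq, mul_right_inj]
  have hne : 1 + (u : F) ≠ 0 ∨ ω + (ω : F) ^ 2 * (u⁻¹ : Fˣ) ≠ 0 := by
    rw [ne_eq, ne_eq, hleft, hright, ← not_and_or]
    rintro ⟨rfl, h⟩
    exact hω1 h.symm
  rw [kloostermanSum_eq_diag_sub hne]
  simp only [mul_eq_zero, hleft, hright]
  rw [hprod]

theorem exists_sq_add_self_add_one_eq_zero {F : Type*} [Field F] [CharP F 2] [Finite F]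
    (hone : signChar F 1 = 1) : ∃ ω : Fˣ, (ω : F) ^ 2 + ω + 1 = 0 := by
  classical
  have := Fintype.ofFinite F
  have hcard := card_sq_add_self_eq (1 : F)
  rw [hone] at hcard
  obtain ⟨w, hw⟩ := card_pos.1 (by lia : 0 < #{w : F | w ^ 2 + w = 1})
  have hw : w ^ 2 + w = 1 := (mem_filter_univ w).1 hw
  have hw0 : w ≠ 0 := by
    rintro rfl
    simp at hw
  exact ⟨Units.mk0 w hw0, CharTwo.add_eq_zero.2 hw⟩

-- Now `ω` lies in `F`; expand the square of the Kloosterman sum of `F` at `ω`.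
theorem sum_units_kloostermanSum_one_add_add_inv {k : ℕ} (hF : Fintype.card F = 4 ^ k)
    (hone : signChar F 1 = 1) :
    ∑ r : Fˣ, kloostermanSum (signChar F) (1 + ((r : F) + (r⁻¹ : Fˣ)))
        (1 + ((r : F) + (r⁻¹ : Fˣ))) = traceSeq k ^ 2 + 2 * Fintype.card F := by
  obtain ⟨ω, hω⟩ := exists_sq_add_self_add_one_eq_zero hone
  have hω1 : ω ≠ 1 := by
    rintro rfl
    simp [CharTwo.add_self_eq_zero] at hω
  have hprod := kloostermanSum_one_mul_kloostermanSum_one (signChar F) (ω : F) (ω ^ 2)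
  simp only [kloostermanSum_one_sq, kloostermanSum_one_of_sq_add_self_add_one hF hω,
    kloostermanSum_one_add_add_sq_mul_inv hω, sum_sub_distrib] at hprod
  rw [(Group.mulLeft_bijective ω).sum_comp fun r : Fˣ ↦ kloostermanSum (signChar F)
    (1 + ((r : F) + (r⁻¹ : Fˣ))) (1 + ((r : F) + (r⁻¹ : Fˣ))), ← sum_filter, sum_const, filter_or,
    filter_eq', filter_eq', if_pos (mem_univ _), if_pos (mem_univ _), singleton_union,
    card_pair hω1.symm, nsmul_eq_mul, Nat.cast_two] at hprod
  linarith

variable [Field K] [CharP K 2] [Fintype K] [DecidableEq K] [Algebra F K]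
  [Algebra.IsQuadraticExtension F K]

theorem sum_kloostermanSum_one_add_trace_of_pos {k : ℕ} (hF : Fintype.card F = 4 ^ k)
    (hone : signChar F 1 = 1) :
    ∑ u : unitCircle F K,
        kloostermanSum (signChar F) (1 + Algebra.trace F K u) (1 + Algebra.trace F K u) =
      -traceSeq k ^ 2 := by
  have hsum := sum_trace_unitCircle_add_sum_units_add_inv (K := K) fun c : F ↦
    kloostermanSum (signChar F) (1 + c) (1 + c)
  rw [sum_units_kloostermanSum_one_add_add_inv hF hone,
    (AddGroup.addLeft_bijective (1 : F)).sum_comp fun c ↦ kloostermanSum (signChar F) c c,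
    sum_kloostermanSum_diag signChar_isPrimitive] at hsum
  linarith

theorem sum_kloostermanSum_one_add_trace {m : ℕ} (hF : Fintype.card F = 2 ^ m) :
    ∑ u : unitCircle F K,
        kloostermanSum (signChar F) (1 + Algebra.trace F K u) (1 + Algebra.trace F K u) =
      -2 * signChar F 1 * Fintype.card F - traceSeq m := by
  have hone := signChar_one (F := F) (Nat.card_eq_fintype_card.trans hF)
  rcases m.even_or_odd' with ⟨k, rfl | rfl⟩
  · rw [pow_mul, neg_one_sq, one_pow] at hone
    have hF : Fintype.card F = 4 ^ k := hF.trans (pow_mul 2 2 k)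
    rw [sum_kloostermanSum_one_add_trace_of_pos hF hone, hone, traceSeq_two_mul, hF]
    push_cast
    ring
  · rw [pow_succ, pow_mul, neg_one_sq, one_pow, one_mul] at hone
    rw [sum_kloostermanSum_one_add_trace_of_neg hF hone, hone]
    ring

end KloostermanTraceSplit

section DistinctSums
variable {ι A R : Type*} [Fintype ι]

theorem sum_embedding_fin_succ [AddCommMonoid R] [DecidableEq ι] {n : ℕ}
    (f : (Fin (n + 1) → ι) → R) :
    ∑ e : Fin (n + 1) ↪ ι, f e = ∑ e : Fin n ↪ ι, ∑ j ∈ (univ.map e)ᶜ, f (Fin.cons j e) := by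
  rw [← (Equiv.embeddingFinSucc n ι).symm.sum_comp, Fintype.sum_sigma]
  refine sum_congr rfl fun e _ ↦ ?_
  simp only [Equiv.coe_embeddingFinSucc_symm]
  exact (sum_subtype _ (by simp) fun j ↦ f (Fin.cons j e)).symm

/-- The operator `g ↦ ∑ i, g (· + x i)`, that is, convolution with the multiset of the points `x i`
up to a change of sign. -/
def translateSum [Add A] [AddCommMonoid R] (x : ι → A) (g : A → R) (s : A) : R :=
  ∑ i, g (s + x i)

theorem sum_embedding_one [AddCommMonoid A] [AddCommMonoid R] (x : ι → A) (g : A → R) :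
    ∑ e : Fin 1 ↪ ι, g (∑ i, x (e i)) = translateSum x g 0 := by
  classical
  rw [sum_embedding_fin_succ fun e ↦ g (∑ i, x (e i))]
  simp [translateSum]

variable [CommRing A] [CharP A 2] [CommRing R]

/- By symmetry the sum of the first line does not depend on `i`; for `i = 0` the term `x (e 0)`
cancels and `e 0` ranges freely over the remaining points. -/
theorem sum_embedding_add_apply (x : ι → A) (g : A → R) {n : ℕ} (i : Fin (n + 1)) :
    ∑ e : Fin (n + 1) ↪ ι, g (∑ k, x (e k) + x (e i)) =
      (Fintype.card ι - n) * ∑ e : Fin n ↪ ι, g (∑ k, x (e k)) := by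
  classical
  have hswap : ∑ e : Fin (n + 1) ↪ ι, g (∑ k, x (e k) + x (e i)) =
      ∑ e : Fin (n + 1) ↪ ι, g (∑ k, x (e k) + x (e 0)) := by
    refine Fintype.sum_equiv ((Equiv.swap 0 i).embeddingCongr (Equiv.refl ι)) _ _ fun e ↦ ?_
    simp [Equiv.sum_comp (Equiv.swap 0 i) (fun k ↦ x (e k))]
  rw [hswap, sum_embedding_fin_succ fun e ↦ g (∑ k, x (e k) + x (e 0)), mul_sum]
  refine sum_congr rfl fun e _ ↦ ?_
  have hcancel (j : ι) : ∑ k, x ((Fin.cons j e : Fin (n + 1) → ι) k) +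
      x ((Fin.cons j e : Fin (n + 1) → ι) 0) = ∑ k, x (e k) := by
    rw [Fin.sum_univ_succ, add_comm, Fin.cons_zero, CharTwo.add_cancel_left]
    simp only [Fin.cons_succ]
  have hcard := card_compl_add_card (univ.map e)
  rw [card_map, card_univ, Fintype.card_fin] at hcard
  rw [sum_congr rfl fun j _ ↦ congrArg g (hcancel j), sum_const, nsmul_eq_mul, ← hcard,
    Nat.cast_add, add_sub_cancel_right]

theorem sum_embedding_add_two (x : ι → A) (g : A → R) (n : ℕ) :
    ∑ e : Fin (n + 2) ↪ ι, g (∑ i, x (e i)) =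
      ∑ e : Fin (n + 1) ↪ ι, translateSum x g (∑ i, x (e i)) -
        (n + 1) * ((Fintype.card ι - n) * ∑ e : Fin n ↪ ι, g (∑ i, x (e i))) := by
  classical
  have hrepeat : ∑ e : Fin (n + 1) ↪ ι, ∑ i, g (∑ k, x (e k) + x (e i)) =
      (n + 1) * ((Fintype.card ι - n) * ∑ e : Fin n ↪ ι, g (∑ i, x (e i))) := by
    rw [sum_comm, sum_congr rfl fun i _ ↦ sum_embedding_add_apply x g i, sum_const, card_univ,
      Fintype.card_fin, nsmul_eq_mul, Nat.cast_add_one]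
  rw [sum_embedding_fin_succ fun e ↦ g (∑ i, x (e i)), ← hrepeat, ← sum_sub_distrib]
  refine sum_congr rfl fun e _ ↦ ?_
  have hcons (j : ι) : ∑ i, x ((Fin.cons j e : Fin (n + 2) → ι) i) = ∑ i, x (e i) + x j := by
    rw [Fin.sum_univ_succ, add_comm, Fin.cons_zero]
    simp only [Fin.cons_succ]
  rw [sum_congr rfl fun j _ ↦ congrArg g (hcons j), eq_sub_iff_add_eq,
    ← sum_map univ e fun j ↦ g (∑ i, x (e i) + x j), add_comm, sum_add_sum_compl]
  rfl

theorem sum_embedding_two (x : ι → A) (g : A → R) :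
    ∑ e : Fin 2 ↪ ι, g (∑ i, x (e i)) =
      translateSum x (translateSum x g) 0 - Fintype.card ι * g 0 := by
  have h := sum_embedding_add_two x g 0
  rw [sum_embedding_one] at h
  simpa using h

theorem sum_embedding_four (x : ι → A) (g : A → R) :
    ∑ e : Fin 4 ↪ ι, g (∑ i, x (e i)) =
      (translateSum x)^[4] g 0 - (6 * Fintype.card ι - 8) * (translateSum x)^[2] g 0 +
        3 * Fintype.card ι * (Fintype.card ι - 2) * g 0 := by
  rw [sum_embedding_add_two, sum_embedding_add_two, sum_embedding_two, sum_embedding_two,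
    sum_embedding_one]
  simp only [Function.iterate_succ_apply, Function.iterate_zero_apply]
  push_cast
  ring

end DistinctSums

section UnitCircleSums
variable {F K : Type*} [Field F] [Field K] [Algebra F K]

theorem translateSum_unitCircle_mul [Fintype (unitCircle F K)] {g : K → ℤ} {u : unitCircle F K}
    (hg : ∀ x : K, g (u * x) = g x) (x : K) :
    translateSum (fun v : unitCircle F K ↦ (v : K)) g (u * x) =
      translateSum (fun v : unitCircle F K ↦ (v : K)) g x := by
  simp only [translateSum]
  rw [← (Group.mulLeft_bijective u).sum_comp]
  refine sum_congr rfl fun v _ ↦ ?_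
  rw [← hg (x + v), mul_add]
  rfl

theorem translateSum_unitCircle_zero [Fintype (unitCircle F K)] {g : K → ℤ}
    (hg : ∀ (u : unitCircle F K) (x : K), g (u * x) = g x) :
    translateSum (fun v : unitCircle F K ↦ (v : K)) g 0 = Fintype.card (unitCircle F K) * g 1 := by
  have hconst (u : unitCircle F K) : g (0 + u) = g 1 := by rw [zero_add, ← hg u 1, mul_one]
  rw [translateSum, sum_congr rfl fun u _ ↦ hconst u, sum_const, card_univ, nsmul_eq_mul]

variable (F K) in
/-- The indicator function of the unit circle in `K`. -/
noncomputable def unitCircleIndicator [DecidableEq F] (x : K) : ℤ :=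
  if Algebra.norm F x = 1 then 1 else 0

variable (F K) in
/-- The number of representations of `s` as a sum of two elements of the unit circle, in
characteristic two. -/
noncomputable def unitCircleRep [DecidableEq F] [Fintype (unitCircle F K)] : K → ℤ :=
  translateSum (fun u : unitCircle F K ↦ (u : K)) (unitCircleIndicator F K)

variable [DecidableEq F]

theorem unitCircleIndicator_mul (u : unitCircle F K) (x : K) :
    unitCircleIndicator F K (u * x) = unitCircleIndicator F K x := by
  rw [unitCircleIndicator, map_mul, norm_coe_unitCircle, one_mul, unitCircleIndicator]

variable [Fintype (unitCircle F K)]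

theorem unitCircleRep_mul (u : unitCircle F K) (x : K) :
    unitCircleRep F K (u * x) = unitCircleRep F K x :=
  translateSum_unitCircle_mul (unitCircleIndicator_mul u) x

theorem unitCircleRep_zero : unitCircleRep F K 0 = Fintype.card (unitCircle F K) := by
  rw [unitCircleRep, translateSum_unitCircle_zero unitCircleIndicator_mul, unitCircleIndicator,
    map_one, if_pos rfl, mul_one]

theorem translateSum_translateSum_unitCircle [CharP K 2] [Fintype K] (f : K → ℤ) (a : K) :
    translateSum (fun v : unitCircle F K ↦ (v : K))
        (translateSum (fun v : unitCircle F K ↦ (v : K)) f) a =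
      ∑ s : K, unitCircleRep F K s * f (a + s) := by
  have hinner (u : unitCircle F K) : ∑ v : unitCircle F K, f (a + u + v) =
      ∑ s : K, unitCircleIndicator F K (s + u) * f (a + s) := by
    rw [sum_unitCircle fun x ↦ f (a + u + x), sum_filter,
      ← (AddGroup.addRight_bijective (u : K)).sum_comp]
    refine sum_congr rfl fun s _ ↦ ?_
    rw [unitCircleIndicator, ite_mul, one_mul, zero_mul, add_assoc, add_comm s,
      CharTwo.add_cancel_left]
  simp only [translateSum, hinner, unitCircleRep, sum_mul]
  exact sum_comm

end UnitCircleSums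

section UnitCircleRep
variable {F K : Type*} [Field F] [Field K] [Algebra F K] [Algebra.IsQuadraticExtension F K]

theorem norm_add_unitCircle [Finite F] [Finite K] (s : K) (u : unitCircle F K) :
    Algebra.norm F (s + u) = 1 + Algebra.trace F K (s * (u⁻¹ : unitCircle F K)) +
      Algebra.norm F s := by
  have hnorm : Algebra.norm F (s * (u⁻¹ : unitCircle F K)) = Algebra.norm F s := by
    rw [map_mul, norm_coe_unitCircle, mul_one]
  have hfactor : s + u = u * (1 + s * (u⁻¹ : unitCircle F K)) := by
    rw [mul_add, mul_one, mul_left_comm, InvMemClass.coe_inv, Units.mul_inv, mul_one, add_comm]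
  rw [hfactor, map_mul, norm_coe_unitCircle, one_mul, norm_one_add, hnorm]

variable [CharP F 2]

theorem sum_signChar_inv_norm [Fintype F] [Fintype K] :
    ∑ s : K, signChar F (Algebra.norm F s)⁻¹ = -Fintype.card F := by
  classical
  have hpolar (r : Fˣ) (u : unitCircle F K) :
      signChar F (Algebra.norm F ((r : F) • (u : K)))⁻¹ = signChar F (1 * ↑r⁻¹ + 0 * ↑r⁻¹⁻¹) := by
    rw [norm_smul_eq_sq_mul, norm_coe_unitCircle, mul_one, ← inv_pow, signChar_sq, zero_mul,
      add_zero, one_mul, Units.val_inv_eq_inv_val]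
  have hsum : ∑ r : Fˣ, signChar F (1 * ↑r⁻¹ + 0 * ↑r⁻¹⁻¹) = -1 := by
    rw [(inv_bijective (G := Fˣ)).sum_comp fun r ↦ signChar F (1 * ↑r + 0 * ↑r⁻¹)]
    exact kloostermanSum_zero_right signChar_isPrimitive one_ne_zero
  rw [sum_eq_zero_add_sum_units fun s : K ↦ signChar F (Algebra.norm F s)⁻¹,
    sum_units_eq_sum_smul_unitCircle (F := F) fun s ↦ signChar F (Algebra.norm F s)⁻¹, sum_comm]
  simp only [hpolar, hsum, sum_const, card_univ, card_unitCircle, Algebra.norm_zero, inv_zero,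
    AddChar.map_zero_eq_one]
  ring

variable [DecidableEq F] [CharP K 2]

-- The norm of `s + u` is one iff `s * u⁻¹` has trace and norm equal to the norm of `s`.
theorem unitCircleRep_of_ne_zero [Finite F] [Finite K] [Fintype (unitCircle F K)] {s : K}
    (hs : s ≠ 0) :
    unitCircleRep F K s = 1 - signChar F (Algebra.norm F s)⁻¹ := by
  classical
  have := Fintype.ofFinite K
  have hN : Algebra.norm F s ≠ 0 := Algebra.norm_ne_zero_iff.2 hs
  have hiff (u : unitCircle F K) : Algebra.norm F (s + (u⁻¹ : unitCircle F K)) = 1 ↔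
      Algebra.trace F K (s * u) = Algebra.norm F s := by
    rw [norm_add_unitCircle, inv_inv, add_assoc, add_eq_left, CharTwo.add_eq_zero]
  have hfiber : #{x : K | Algebra.norm F x = 1 ∧ Algebra.trace F K (s * x) = Algebra.norm F s} =
      #{x : K | Algebra.trace F K x = Algebra.norm F s ∧ Algebra.norm F x = Algebra.norm F s} := by
    refine card_equiv (Equiv.mulLeft₀ s hs) fun x ↦ ?_
    simp [hN, and_comm]
  rw [unitCircleRep, translateSum, ← (inv_bijective (G := unitCircle F K)).sum_comp]
  simp only [unitCircleIndicator, hiff]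
  rw [sum_unitCircle fun x ↦ if Algebra.trace F K (s * x) = Algebra.norm F s then (1 : ℤ) else 0,
    sum_boole, filter_filter, hfiber, card_trace_eq_norm_eq hN, sq, div_mul_cancel_left₀ hN]

variable [Fintype F] [Fintype K]

theorem unitCircleRep_eq [DecidableEq K] (s : K) :
    unitCircleRep F K s =
      1 - signChar F (Algebra.norm F s)⁻¹ + if s = 0 then (Fintype.card F + 1 : ℤ) else 0 := by
  split_ifs with hs
  · rw [hs, unitCircleRep_zero, Algebra.norm_zero, inv_zero, AddChar.map_zero_eq_one,
      card_unitCircle]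
    push_cast
    ring
  · rw [unitCircleRep_of_ne_zero hs, add_zero]

variable [DecidableEq K]

theorem sum_unitCircleRep_mul_unitCircleRep_one_add {m : ℕ} (hF : Fintype.card F = 2 ^ m) :
    ∑ s : K, unitCircleRep F K s * unitCircleRep F K (1 + s) =
      Fintype.card F ^ 2 + 1 + 4 * (1 - signChar F 1) * Fintype.card F - traceSeq m := by
  have hcard : (Fintype.card K : ℤ) = Fintype.card F ^ 2 := by
    rw [card_eq_card_sq F K, Nat.cast_pow]
  have hshift : ∑ s : K, signChar F (Algebra.norm F (1 + s))⁻¹ = -Fintype.card F := by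
    rw [(AddGroup.addLeft_bijective (1 : K)).sum_comp fun s ↦ signChar F (Algebra.norm F s)⁻¹,
      sum_signChar_inv_norm]
  have hpair : ∑ s : K, signChar F (Algebra.norm F s)⁻¹ * signChar F (Algebra.norm F (1 + s))⁻¹ =
      2 * signChar F 1 - 1 - 2 * signChar F 1 * Fintype.card F - traceSeq m := by
    simp only [← AddChar.map_add_eq_mul]
    rw [sum_signChar_inv_norm_add_inv_norm_one_add, sum_units_signChar_norm_one_add,
      sum_kloostermanSum_one_add_trace hF]
    ring
  have hexpand (s : K) : unitCircleRep F K s * unitCircleRep F K (1 + s) =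
      1 - signChar F (Algebra.norm F s)⁻¹ - signChar F (Algebra.norm F (1 + s))⁻¹ +
        signChar F (Algebra.norm F s)⁻¹ * signChar F (Algebra.norm F (1 + s))⁻¹ +
        (if s = 0 then (Fintype.card F + 1 : ℤ) * (1 - signChar F 1) else 0) +
        (if s = 1 then (Fintype.card F + 1 : ℤ) * (1 - signChar F 1) else 0) := by
    rcases eq_or_ne s 0 with rfl | h0
    · simp [unitCircleRep_eq]
    rcases eq_or_ne s 1 with rfl | h1
    · simp [unitCircleRep_eq, CharTwo.add_self_eq_zero]
      ring
    rw [unitCircleRep_of_ne_zero h0, unitCircleRep_of_ne_zero, if_neg h0, if_neg h1]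
    · ring
    · rwa [ne_eq, CharTwo.add_eq_zero, eq_comm]
  simp only [hexpand, sum_add_distrib, sum_sub_distrib, hshift, hpair, sum_signChar_inv_norm,
    sum_ite_eq', mem_univ, if_true, sum_const, card_univ, nsmul_one, hcard]
  ring

theorem iterate_translateSum_unitCircle_two :
    (translateSum fun u : unitCircle F K ↦ (u : K))^[2] (unitCircleIndicator F K) 0 =
      (Fintype.card F + 1) * (1 - signChar F 1) := by
  have h := translateSum_unitCircle_zero (F := F) (K := K) unitCircleRep_mul
  rw [unitCircleRep_of_ne_zero one_ne_zero, map_one, inv_one, card_unitCircle, Nat.cast_succ] at h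
  exact h

-- Dividing by the first entry, the quadruples with sum on the circle reduce to triples.
theorem iterate_translateSum_unitCircle_four :
    (translateSum fun u : unitCircle F K ↦ (u : K))^[4] (unitCircleIndicator F K) 0 =
      (Fintype.card F + 1) * ∑ s : K, unitCircleRep F K s * unitCircleRep F K (1 + s) := by
  have h := translateSum_unitCircle_zero (F := F) (K := K) fun u ↦
    translateSum_unitCircle_mul (translateSum_unitCircle_mul (unitCircleRep_mul u))
  rw [translateSum_translateSum_unitCircle _ (1 : K), card_unitCircle, Nat.cast_succ] at h
  exact h

theorem sum_embedding_four_unitCircleIndicator {m : ℕ} (hF : Fintype.card F = 2 ^ m) :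
    ∑ e : Fin 4 ↪ unitCircle F K, unitCircleIndicator F K (∑ i, (e i : K)) =
      (Fintype.card F + 1) * (Fintype.card F ^ 2 + 1 - traceSeq m -
        (1 - signChar F 1) * (2 * Fintype.card F - 2)) := by
  rw [sum_embedding_four (fun u : unitCircle F K ↦ (u : K)), iterate_translateSum_unitCircle_two,
    iterate_translateSum_unitCircle_four, sum_unitCircleRep_mul_unitCircleRep_one_add hF,
    unitCircleIndicator, Algebra.norm_zero, if_neg zero_ne_one, card_unitCircle]
  push_cast
  ring

end UnitCircleRep

/-- The number of solutions in `n` variables of the system `∑ x i = 0`, `∑ g (x i) = 0`. -/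
def zeroSumCount {K : Type*} [AddCommMonoid K] [Fintype K] [DecidableEq K] (g : K → K) (n : ℕ) :
    ℕ :=
  #{x : Fin n → K | ∑ i, x i = 0 ∧ ∑ i, g (x i) = 0}

section Moments
variable {K : Type*} [Field K] [CharP K 2] [Fintype K]

/-- The Walsh transform of `g : K → K` at `(a, b)`. -/
noncomputable def walshSum (g : K → K) (a b : K) : ℤ := ∑ x, signChar K (a * x + b * g x)

theorem sum_walshSum_pow [DecidableEq K] (g : K → K) (n : ℕ) :
    ∑ a : K, ∑ b : K, walshSum g a b ^ n = Fintype.card K ^ 2 * zeroSumCount g n := by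
  have hexpand (a b : K) : walshSum g a b ^ n = ∑ x : Fin n → K,
      signChar K (a * ∑ i, x i) * signChar K (b * ∑ i, g (x i)) := by
    rw [walshSum, Fintype.sum_pow]
    refine sum_congr rfl fun x _ ↦ ?_
    rw [← AddChar.map_add_eq_mul, mul_sum, mul_sum, ← sum_add_distrib]
    exact (map_prod (signChar K).toMonoidHom
      (fun i ↦ Multiplicative.ofAdd (a * x i + b * g (x i))) univ).symm
  have hswap : ∑ a : K, ∑ b : K, walshSum g a b ^ n = ∑ x : Fin n → K,
      (∑ a : K, signChar K (a * ∑ i, x i)) * ∑ b : K, signChar K (b * ∑ i, g (x i)) := by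
    simp only [hexpand, sum_mul_sum]
    rw [sum_comm_cycle]
  rw [hswap, zeroSumCount, ← sum_boole, mul_sum]
  refine sum_congr rfl fun x _ ↦ ?_
  rw [sum_signChar_mul, sum_signChar_mul, ite_zero_mul_ite_zero, ← sq, mul_ite, mul_one, mul_zero]

end Moments

section ZeroSumCount
variable {K : Type*} [Field K] [Fintype K] [DecidableEq K]

theorem zeroSumCount_one {g : K → K} (hg : g 0 = 0) : zeroSumCount g 1 = 1 := by
  rw [zeroSumCount, card_eq_one]
  refine ⟨0, ext fun x ↦ ?_⟩
  simp only [Fin.sum_univ_one, mem_filter_univ, mem_singleton, funext_iff, Fin.forall_fin_one,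
    Pi.zero_apply, and_iff_left_iff_imp]
  exact fun hx ↦ (congrArg g hx).trans hg

variable [CharP K 2]

theorem zeroSumCount_two (g : K → K) : zeroSumCount g 2 = Fintype.card K := by
  refine card_nbij' (t := univ) (fun x : Fin 2 → K ↦ x 0) (fun y _ ↦ y) ?_ ?_ ?_ ?_
  · exact fun _ _ ↦ mem_coe.2 (mem_univ _)
  · intro y _
    simp [CharTwo.add_self_eq_zero]
  · intro x hx
    simp only [mem_coe, mem_filter_univ, Fin.sum_univ_two,
      CharTwo.add_eq_zero] at hx
    exact funext fun i ↦ by fin_cases i <;> simp [hx.1]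
  · exact fun _ _ ↦ rfl

theorem zeroSumCount_three (g : K → K) :
    zeroSumCount g 3 = ∑ x : K, #{y : K | g x + g y + g (x + y) = 0} := by
  rw [← card_sigma]
  refine card_nbij' (fun x ↦ ⟨x 0, x 1⟩) (fun p ↦ ![p.1, p.2, p.1 + p.2]) ?_ ?_ ?_ ?_
  · intro x hx
    simp only [mem_coe, mem_filter_univ, Fin.sum_univ_three] at hx
    obtain ⟨hx, hgx⟩ := hx
    simp [CharTwo.add_eq_zero.1 hx, hgx]
  · rintro ⟨x, y⟩ hxy
    simpa [Fin.sum_univ_three, CharTwo.add_self_eq_zero] using hxy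
  · intro x hx
    simp only [mem_coe, mem_filter_univ, Fin.sum_univ_three,
      CharTwo.add_eq_zero] at hx
    exact funext fun i ↦ by fin_cases i <;> simp [hx.1]
  · exact fun _ _ ↦ rfl

-- The solutions with first entry `x ≠ 0` are the multiples by `x` of those with first entry `1`.
theorem zeroSumCount_pow_three {n : ℕ} (hn : n ≠ 0) :
    zeroSumCount (fun x : K ↦ x ^ n) 3 = Fintype.card K +
      (Fintype.card K - 1) * #{w : K | 1 + w ^ n + (1 + w) ^ n = 0} := by
  have hscale (x : Kˣ) : #{y : K | (x : K) ^ n + y ^ n + ((x : K) + y) ^ n = 0} =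
      #{w : K | 1 + w ^ n + (1 + w) ^ n = 0} := by
    refine (card_equiv x.mulLeft fun w ↦ ?_).symm
    have hfactor : (x : K) ^ n + ((x : K) * w) ^ n + (x + x * w) ^ n =
        (x : K) ^ n * (1 + w ^ n + (1 + w) ^ n) := by
      rw [← mul_one_add (x : K), mul_pow, mul_pow]
      ring
    simp [hfactor]
  rw [zeroSumCount_three,
    sum_eq_zero_add_sum_units fun x : K ↦ #{y : K | x ^ n + y ^ n + (x + y) ^ n = 0}]
  simp [hscale, zero_pow hn, CharTwo.add_self_eq_zero, Fintype.card_units]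

end ZeroSumCount

theorem three_mul_card_sub_two_ne_zero (α : Type*) [Fintype α] [Nonempty α] :
    3 * Fintype.card α - 2 ≠ 0 := by
  have := Fintype.card_pos (α := α)
  lia

section NihoExponent
variable {F K : Type*} [Field F] [Fintype F] [Field K] [Algebra F K]

theorem pow_three_mul_card_sub_two_mul_sq (x : K) :
    x ^ (3 * Fintype.card F - 2) * x ^ 2 = conj F x ^ 3 := by
  have hq : 2 ≤ 3 * Fintype.card F := by
    have := Fintype.card_pos (α := F)
    lia
  rw [conj_apply, ← pow_add, Nat.sub_add_cancel hq, mul_comm, pow_mul]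

variable [Finite K] [CharP K 2] [Algebra.IsQuadraticExtension F K]

/- After clearing denominators the left-hand side becomes `(w + w') ^ 2 * (w ^ 2 + w')`, with `w'`
the conjugate of `w`. -/
theorem one_add_pow_add_one_add_pow_eq_zero_iff (w : K) :
    1 + w ^ (3 * Fintype.card F - 2) + (1 + w) ^ (3 * Fintype.card F - 2) = 0 ↔
      (∃ a, algebraMap F K a = w) ∨ Algebra.trace F K w = 1 ∧ Algebra.norm F w = 1 := by
  have h2 : (2 : K) = 0 := CharTwo.two_eq_zero
  have hd := three_mul_card_sub_two_ne_zero F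
  rcases eq_or_ne w 0 with rfl | hw0
  · simp [hd, CharTwo.add_self_eq_zero]
  rcases eq_or_ne w 1 with rfl | hw1
  · simp [hd, CharTwo.add_self_eq_zero]
  have hw1' : 1 + w ≠ 0 := fun h ↦ hw1 (CharTwo.add_eq_zero.1 h).symm
  rw [← conj_eq_self_iff, ← (algebraMap F K).injective.eq_iff,
    ← (algebraMap F K).injective.eq_iff, algebraMap_norm_eq_mul_conj, algebraMap_trace_eq_add_conj,
    map_one]
  have hfactor : w ^ 2 * (1 + w) ^ 2 *
      (1 + w ^ (3 * Fintype.card F - 2) + (1 + w) ^ (3 * Fintype.card F - 2)) =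
      (conj F w + w) ^ 2 * (w ^ 2 + conj F w) := by
    have hw := pow_three_mul_card_sub_two_mul_sq (F := F) w
    have hw' := pow_three_mul_card_sub_two_mul_sq (F := F) (1 + w)
    rw [map_add, map_one] at hw'
    linear_combination (1 + w) ^ 2 * hw + w ^ 2 * hw' + (w ^ 2 + w ^ 3 + w * conj F w ^ 3
      + w ^ 2 * conj F w + w ^ 2 * conj F w ^ 2 + w ^ 2 * conj F w ^ 3
      - w ^ 3 * conj F w - w * conj F w ^ 2) * h2
  rw [← mul_eq_zero_iff_left (mul_ne_zero (pow_ne_zero 2 hw0) (pow_ne_zero 2 hw1')), hfactor,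
    mul_eq_zero, sq_eq_zero_iff, CharTwo.add_eq_zero, CharTwo.add_eq_zero]
  refine or_congr_right ⟨fun h ↦ ?_, fun ⟨htr, hn⟩ ↦ ?_⟩
  · have hquartic : w ^ 4 = w := by
      rw [pow_mul w 2 2, h, ← map_pow, h, conj_conj]
    have hquadratic : w ^ 2 + w + 1 = 0 := by
      have hfactor' : w * (1 + w) * (w ^ 2 + w + 1) = 0 := by
        linear_combination hquartic + (w + w ^ 2 + w ^ 3) * h2
      exact (mul_eq_zero.1 hfactor').resolve_left (mul_ne_zero hw0 hw1')
    constructor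
    · linear_combination hquadratic - h - h2
    · linear_combination (w - 1) * hquadratic - w * h
  · linear_combination (w + 1) * htr - hn - conj F w * h2

end NihoExponent

section NihoCount
variable {F K : Type*} [Field F] [Fintype F] [Field K] [Fintype K] [DecidableEq K] [Algebra F K]

theorem card_exists_algebraMap_eq : #{w : K | ∃ a : F, algebraMap F K a = w} = Fintype.card F := by
  rw [← card_univ, ← card_map ⟨algebraMap F K, (algebraMap F K).injective⟩]
  congr 1
  ext w
  simp

variable [CharP F 2] [CharP K 2] [Algebra.IsQuadraticExtension F K]

theorem zeroSumCount_niho_three :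
    (zeroSumCount (fun x : K ↦ x ^ (3 * Fintype.card F - 2)) 3 : ℤ) =
      Fintype.card F ^ 2 + (Fintype.card F ^ 2 - 1) * (Fintype.card F + 1 - signChar F 1) := by
  classical
  have hdisj : Disjoint ({w : K | ∃ a : F, algebraMap F K a = w} : Finset K)
      ({w : K | Algebra.trace F K w = 1 ∧ Algebra.norm F w = 1} : Finset K) := by
    refine disjoint_filter.2 fun w _ hw h ↦ ?_
    exact not_exists.2 (trace_eq_one_and_norm_eq_iff.1 h).2 hw
  rw [zeroSumCount_pow_three (three_mul_card_sub_two_ne_zero F)]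
  simp only [one_add_pow_add_one_add_pow_eq_zero_iff]
  rw [filter_or, card_union_of_disjoint hdisj, card_exists_algebraMap_eq]
  push_cast [Nat.cast_pred (Fintype.card_pos (α := K))]
  rw [card_trace_eq_one_norm_eq, card_eq_card_sq F K]
  push_cast
  ring

end NihoCount

section WalshNiho
variable {F K : Type*} [Field F] [Field K] [Algebra F K]

theorem sq_bijective_unitCircle [Finite K] [CharP K 2] :
    Function.Bijective fun u : unitCircle F K ↦ u ^ 2 := by
  refine Finite.injective_iff_bijective.1 fun u v h ↦ Subtype.ext (Units.ext ?_)
  exact CharTwo.sq_injective (congrArg (fun w : unitCircle F K ↦ (w : K)) h)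

variable [Fintype F]

variable (F) in
/-- The quintic polynomial function whose number of zeros on the unit circle determines the Walsh
transform of `x ↦ x ^ (3 * |F| - 2)` at `(a, b)`. -/
def nihoQuintic (a b v : K) : K := conj F b * v ^ 5 + a * v ^ 3 + conj F a * v ^ 2 + b

variable [Algebra.IsQuadraticExtension F K]

theorem smul_unitCircle_pow [Finite K] {r : F} (hr : r ≠ 0) (u : unitCircle F K) :
    (r • (u : K)) ^ (3 * Fintype.card F - 2) = r • ((u⁻¹ : unitCircle F K) : K) ^ 5 := by
  have hu : (u : K) ≠ 0 := Units.ne_zero _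
  have h := pow_three_mul_card_sub_two_mul_sq (F := F) (r • (u : K))
  refine mul_right_cancel₀ (pow_ne_zero 2 (smul_ne_zero hr hu)) (h.trans ?_)
  rw [map_smul, conj_coe_unitCircle]
  simp only [Algebra.smul_def, InvMemClass.coe_inv, Units.val_inv_eq_inv_val]
  field_simp

theorem trace_add_inv_pow_eq_zero_iff [Finite K] (a b : K) (u : unitCircle F K) :
    Algebra.trace F K (a * u + b * ((u⁻¹ : unitCircle F K) : K) ^ 5) = 0 ↔
      nihoQuintic F a b (u ^ 2 : unitCircle F K) = 0 := by
  have hu : (u : K) ≠ 0 := Units.ne_zero _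
  have hquintic : (u : K) ^ 5 *
      algebraMap F K (Algebra.trace F K (a * u + b * ((u⁻¹ : unitCircle F K) : K) ^ 5)) =
      nihoQuintic F a b (u ^ 2 : unitCircle F K) := by
    rw [algebraMap_trace_eq_add_conj, nihoQuintic]
    simp only [map_add, map_mul, map_pow, map_inv₀, conj_coe_unitCircle, InvMemClass.coe_inv,
      Units.val_inv_eq_inv_val, SubmonoidClass.coe_pow, Units.val_pow_eq_pow_val]
    field_simp
    ring
  rw [← hquintic, mul_eq_zero, or_iff_right (pow_ne_zero 5 hu),
    map_eq_zero (algebraMap F K)]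

variable [CharP F 2] [CharP K 2]

/- On the ray through `u` the argument of the character is linear, so the sum along the ray detects
whether `u ^ 2` is a zero of the quintic. -/
theorem walshSum_niho [DecidableEq F] [Fintype K] [DecidableEq K] (a b : K) :
    walshSum (fun x : K ↦ x ^ (3 * Fintype.card F - 2)) a b =
      Fintype.card F * (#{v : unitCircle F K | nihoQuintic F a b v = 0} - 1) := by
  have hray (u : unitCircle F K) : ∑ r : Fˣ, signChar K (a * ((r : F) • (u : K)) +
      b * ((r : F) • (u : K)) ^ (3 * Fintype.card F - 2)) =
      Fintype.card F * (if nihoQuintic F a b (u ^ 2 : unitCircle F K) = 0 then 1 else 0) - 1 := by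
    have hlinear (r : Fˣ) : signChar K (a * ((r : F) • (u : K)) +
        b * ((r : F) • (u : K)) ^ (3 * Fintype.card F - 2)) =
        signChar F (r * Algebra.trace F K (a * u + b * ((u⁻¹ : unitCircle F K) : K) ^ 5)) := by
      rw [smul_unitCircle_pow r.ne_zero, mul_smul_comm, mul_smul_comm, ← smul_add,
        ← signChar_trace (F := F), map_smul, smul_eq_mul]
    have hsum := sum_eq_zero_add_sum_units fun r : F ↦
      signChar F (r * Algebra.trace F K (a * u + b * ((u⁻¹ : unitCircle F K) : K) ^ 5))
    rw [sum_signChar_mul, zero_mul, AddChar.map_zero_eq_one] at hsum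
    simp only [hlinear, ← trace_add_inv_pow_eq_zero_iff, mul_ite, mul_one, mul_zero]
    linear_combination -hsum
  rw [walshSum, sum_eq_zero_add_sum_units fun x : K ↦
    signChar K (a * x + b * x ^ (3 * Fintype.card F - 2)),
    sum_units_eq_sum_smul_unitCircle (F := F) fun x ↦
      signChar K (a * x + b * x ^ (3 * Fintype.card F - 2)), sum_comm]
  simp only [hray]
  rw [sum_sub_distrib, ← mul_sum, sq_bijective_unitCircle.sum_comp fun v : unitCircle F K ↦
    if nihoQuintic F a b v = 0 then (1 : ℤ) else 0, sum_boole, sum_const, card_univ,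
    card_unitCircle, mul_zero, zero_pow (three_mul_card_sub_two_ne_zero F), mul_zero,
    add_zero, AddChar.map_zero_eq_one]
  ring

end WalshNiho

/- With `e₁, …, e₄` the elementary symmetric functions of the `x i`, the right-hand side says that
the remainder of the quintic modulo `∏ (X - x i)` vanishes. -/
theorem forall_quintic_eq_zero_iff {R : Type*} [CommRing R] [IsDomain R] {x : Fin 4 → R}
    (hx : Function.Injective x) {e₁ e₂ e₃ e₄ : R}
    (hroot : ∀ i, x i ^ 4 - e₁ * x i ^ 3 + e₂ * x i ^ 2 - e₃ * x i + e₄ = 0) (c₀ c₂ c₃ c₅ : R) :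
    (∀ i, c₅ * x i ^ 5 + c₃ * x i ^ 3 + c₂ * x i ^ 2 + c₀ = 0) ↔
      c₃ + c₅ * (e₁ ^ 2 - e₂) = 0 ∧ c₂ + c₅ * (e₃ - e₁ * e₂) = 0 ∧ c₅ * (e₁ * e₃ - e₄) = 0 ∧
        c₀ - c₅ * (e₁ * e₄) = 0 := by
  let P : Cubic R := ⟨c₃ + c₅ * (e₁ ^ 2 - e₂), c₂ + c₅ * (e₃ - e₁ * e₂), c₅ * (e₁ * e₃ - e₄),
    c₀ - c₅ * (e₁ * e₄)⟩
  have hrem (i : Fin 4) :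
      c₅ * x i ^ 5 + c₃ * x i ^ 3 + c₂ * x i ^ 2 + c₀ = P.toPoly.eval (x i) := by
    simp only [P, Cubic.toPoly, Polynomial.eval_add, Polynomial.eval_mul, Polynomial.eval_pow,
      Polynomial.eval_C, Polynomial.eval_X]
    linear_combination c₅ * (x i + e₁) * hroot i
  have hP : (∀ i, P.toPoly.eval (x i) = 0) ↔ P = 0 := by
    rw [← Cubic.toPoly_eq_zero_iff]
    refine ⟨fun h ↦ ?_, fun h i ↦ by rw [h, Polynomial.eval_zero]⟩
    refine Polynomial.eq_zero_of_natDegree_lt_card_of_eval_eq_zero _ hx h ?_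
    rw [Fintype.card_fin, Nat.lt_succ_iff]
    exact Polynomial.natDegree_le_of_degree_le Polynomial.degree_cubic_le
  simp only [hrem, hP, Cubic.ext_iff]
  rfl

section CommonZeros
variable {F K : Type*} [Field F] [Fintype F] [Field K] [Algebra F K]
  [Algebra.IsQuadraticExtension F K]

theorem exists_esymm_unitCircle [Finite K] (x : Fin 4 → unitCircle F K) : ∃ e₂ e₃ : K,
    (∀ i, (x i : K) ^ 4 - (∑ j, (x j : K)) * (x i : K) ^ 3 + e₂ * (x i : K) ^ 2 - e₃ * x i +
      ∏ j, (x j : K) = 0) ∧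
    (∏ i, (x i : K)) * conj F (∑ i, (x i : K)) = e₃ ∧ (∏ i, (x i : K)) * conj F e₂ = e₂ := by
  let y (i : Fin 4) : K := x i
  have hy (i) : y i ≠ 0 := Units.ne_zero _
  have hconj (i) : conj F (y i) = (y i)⁻¹ := by simpa using conj_coe_unitCircle (x i)
  refine ⟨y 0 * y 1 + y 0 * y 2 + y 0 * y 3 + y 1 * y 2 + y 1 * y 3 + y 2 * y 3,
    y 0 * y 1 * y 2 + y 0 * y 1 * y 3 + y 0 * y 2 * y 3 + y 1 * y 2 * y 3, fun i ↦ ?_, ?_, ?_⟩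
  · have hprod : ∏ j, (y i - y j) = 0 := prod_eq_zero (mem_univ i) (sub_self _)
    change y i ^ 4 - (∑ j, y j) * y i ^ 3 + _ * y i ^ 2 - _ * y i + ∏ j, y j = 0
    rw [Fin.prod_univ_four] at hprod
    rw [Fin.sum_univ_four, Fin.prod_univ_four]
    linear_combination hprod
  · change (∏ i, y i) * conj F (∑ i, y i) = _
    simp only [Fin.sum_univ_four, Fin.prod_univ_four, map_add, hconj]
    field_simp [hy]
    ring
  · change (∏ i, y i) * _ = _
    simp only [Fin.prod_univ_four, map_add, map_mul, hconj]
    field_simp [hy]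
    ring

variable [CharP K 2]

/- `e₂`, `e₃` and `p` stand for the elementary symmetric functions of degree two, three and four of
four points on the unit circle with sum `s`. -/
theorem quintic_remainder_eq_zero_iff [Finite K] {s e₂ e₃ p : K} (hp : Algebra.norm F p = 1)
    (hs : p * conj F s = e₃) (he₂ : p * conj F e₂ = e₂) (a b : K) :
    (a + conj F b * (s ^ 2 - e₂) = 0 ∧ conj F a + conj F b * (e₃ - s * e₂) = 0 ∧
        conj F b * (s * e₃ - p) = 0 ∧ b - conj F b * (s * p) = 0) ↔
      (a = 0 ∧ b = 0) ∨
        Algebra.norm F s = 1 ∧ b = s * p * conj F b ∧ a = conj F b * (s ^ 2 + e₂) := by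
  have h2 : (2 : K) = 0 := CharTwo.two_eq_zero
  have hp0 : p ≠ 0 := by
    rintro rfl
    simp [Algebra.norm_zero] at hp
  have hnorm : Algebra.norm F s = 1 ↔ s * conj F s = 1 := by
    rw [← algebraMap_norm_eq_mul_conj, map_eq_one_iff _ (algebraMap F K).injective]
  rw [hnorm]
  constructor
  · rintro ⟨ha, -, hc, hb⟩
    rcases mul_eq_zero.1 hc with hβ | hc
    · rw [hβ] at ha hb
      exact Or.inl ⟨by linear_combination ha, by linear_combination hb⟩
    · refine Or.inr ⟨mul_left_cancel₀ hp0 ?_, ?_, ?_⟩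
      · linear_combination s * hs + hc
      · linear_combination hb
      · linear_combination ha - conj F b * s ^ 2 * h2
  · rintro (⟨rfl, rfl⟩ | ⟨hs1, hb, ha⟩)
    · simp
    · have hc : s * e₃ = p := by linear_combination -s * hs + p * hs1
      have ha' : conj F a = b * (conj F s ^ 2 + conj F e₂) := by
        rw [ha, map_mul, map_add, map_pow, conj_conj]
      refine ⟨?_, ?_, ?_, ?_⟩
      · linear_combination ha + conj F b * s ^ 2 * h2
      · linear_combination ha' + (conj F s ^ 2 + conj F e₂) * hb + conj F b * s * he₂
          + conj F b * s * conj F s * hs + conj F b * e₃ * hs1 + conj F b * e₃ * h2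
      · rw [hc, sub_self, mul_zero]
      · linear_combination hb

variable [Fintype K] [DecidableEq K]

-- Writing `κ = l ^ 2` with `l` on the circle and `b = l * w`, the equation says that `w` is in `F`.
theorem card_eq_mul_conj {κ : K} (hκ : Algebra.norm F κ = 1) :
    #{b : K | b = κ * conj F b} = Fintype.card F := by
  obtain ⟨u, rfl⟩ := exists_unitCircle_coe_eq hκ
  obtain ⟨l, rfl⟩ := sq_bijective_unitCircle.surjective u
  rw [← card_exists_algebraMap_eq (F := F) (K := K)]
  refine (card_equiv (l : Kˣ).mulLeft fun w ↦ ?_).symm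
  have hl : (l : K) ≠ 0 := Units.ne_zero _
  have hcancel : ((l ^ 2 : unitCircle F K) : K) * conj F (l * w) = l * conj F w := by
    rw [map_mul, conj_coe_unitCircle, SubmonoidClass.coe_pow, Units.val_pow_eq_pow_val, sq,
      mul_assoc, InvMemClass.coe_inv, Units.mul_inv_cancel_left]
  rw [mem_filter_univ, mem_filter_univ, ← conj_eq_self_iff, Units.mulLeft_apply, hcancel,
    mul_right_inj' hl, eq_comm]

theorem card_eq_zero_or_eq_mul_conj [DecidableEq F] {s p : K} (hp : Algebra.norm F p = 1) (t : K) :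
    #{c : K × K | (c.1 = 0 ∧ c.2 = 0) ∨
      Algebra.norm F s = 1 ∧ c.2 = s * p * conj F c.2 ∧ c.1 = conj F c.2 * t} =
      if Algebra.norm F s = 1 then Fintype.card F else 1 := by
  split_ifs with hs
  · rw [← card_eq_mul_conj (F := F) (κ := s * p) (by rw [map_mul, hs, hp, one_mul])]
    refine card_nbij' (fun c ↦ c.2) (fun b ↦ (conj F b * t, b)) ?_ ?_ ?_ ?_
    · rintro ⟨a, b⟩ h
      simp only [mem_coe, mem_filter_univ, hs, true_and] at h ⊢
      rcases h with ⟨-, rfl⟩ | ⟨hb, -⟩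
      · simp
      · exact hb
    · intro b h
      simpa only [mem_coe, mem_filter_univ, hs, true_and, and_true] using Or.inr h
    · rintro ⟨a, b⟩ h
      simp only [mem_coe, mem_filter_univ, hs, true_and] at h
      rcases h with ⟨rfl, rfl⟩ | ⟨-, rfl⟩
      · simp
      · rfl
    · exact fun _ _ ↦ rfl
  · rw [card_eq_one]
    exact ⟨(0, 0), ext fun c ↦ by simp [hs, Prod.ext_iff]⟩

theorem card_forall_nihoQuintic_eq_zero [DecidableEq F] (x : Fin 4 ↪ unitCircle F K) :
    (#{c : K × K | ∀ i, nihoQuintic F c.1 c.2 (x i) = 0} : ℤ) =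
      1 + (Fintype.card F - 1) * unitCircleIndicator F K (∑ i, (x i : K)) := by
  have hinj : Function.Injective fun i ↦ (x i : K) :=
    Units.val_injective.comp (Subtype.val_injective.comp x.injective)
  obtain ⟨e₂, e₃, hroot, hs, he₂⟩ := exists_esymm_unitCircle x
  have hp : Algebra.norm F (∏ i, (x i : K)) = 1 := by
    rw [map_prod]
    exact prod_eq_one fun i _ ↦ norm_coe_unitCircle (x i)
  have hcard : #{c : K × K | ∀ i, nihoQuintic F c.1 c.2 (x i) = 0} =
      if Algebra.norm F (∑ i, (x i : K)) = 1 then Fintype.card F else 1 := by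
    rw [← card_eq_zero_or_eq_mul_conj hp ((∑ i, (x i : K)) ^ 2 + e₂)]
    congr 1
    ext ⟨a, b⟩
    rw [mem_filter_univ, mem_filter_univ, ← quintic_remainder_eq_zero_iff hp hs he₂]
    exact forall_quintic_eq_zero_iff hinj hroot b (conj F a) a (conj F b)
  rw [hcard, unitCircleIndicator]
  split_ifs <;> simp

end CommonZeros

-- Both sides count the pairs of a `y` and `n` distinct elements related to `y`.
theorem sum_descFactorial_card_filter {X Y : Type*} [Fintype X] [Fintype Y]
    (r : X → Y → Prop) [∀ x y, Decidable (r x y)] (n : ℕ) :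
    ∑ y, (#{x | r x y}).descFactorial n = ∑ e : Fin n ↪ X, #{y | ∀ i, r (e i) y} := by
  have hfiber (y : Y) : (#{x | r x y}).descFactorial n = #{e : Fin n ↪ X | ∀ i, r (e i) y} := by
    rw [← Fintype.card_subtype, ← Fintype.card_subtype, ← Fintype.card_fin n,
      ← Fintype.card_embedding_eq, Fintype.card_fin]
    exact Fintype.card_congr
      { toFun e := ⟨e.trans (.subtype _), fun i ↦ (e i).2⟩
        invFun e := e.1.codRestrict {x | r x y} e.2 }
  simp only [hfiber]
  exact (sum_card_bipartiteAbove_eq_sum_card_bipartiteBelow fun (e : Fin n ↪ X) y ↦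
    ∀ i, r (e i) y).symm

theorem cast_descFactorial_four {R : Type*} [CommRing R] (n : ℕ) :
    (n.descFactorial 4 : R) = n * (n - 1) * (n - 2) * (n - 3) := by
  rw [← descPochhammer_eval_eq_descFactorial]
  simp [descPochhammer_succ_right]

section FourthMoment
variable {F K : Type*} [Field F] [CharP F 2] [Fintype F] [Field K] [CharP K 2] [Fintype K]
  [DecidableEq K] [Algebra F K] [Algebra.IsQuadraticExtension F K]

theorem sum_descFactorial_card_nihoQuintic [DecidableEq F] {m : ℕ} (hF : Fintype.card F = 2 ^ m) :
    ∑ a : K, ∑ b : K,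
      ((#{v : unitCircle F K | nihoQuintic F a b v = 0}).descFactorial 4 : ℤ) =
      (Fintype.card F ^ 2 - 1) * (Fintype.card F * (Fintype.card F - 2) +
        (Fintype.card F ^ 2 + 1 - traceSeq m -
          (1 - signChar F 1) * (2 * Fintype.card F - 2))) := by
  have hcount := sum_descFactorial_card_filter
    (fun (v : unitCircle F K) (c : K × K) ↦ nihoQuintic F c.1 c.2 v = 0) 4
  rw [← Fintype.sum_prod_type' (f := fun a b : K ↦
    ((#{v : unitCircle F K | nihoQuintic F a b v = 0}).descFactorial 4 : ℤ)), ← Nat.cast_sum,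
    hcount, Nat.cast_sum]
  simp only [card_forall_nihoQuintic_eq_zero, sum_add_distrib, ← mul_sum, sum_const, card_univ,
    Fintype.card_embedding_eq, Fintype.card_fin, nsmul_eq_mul, cast_descFactorial_four,
    card_unitCircle, sum_embedding_four_unitCircleIndicator hF]
  push_cast
  ring

-- Expand the fourth falling factorial of the number `N` of zeros in powers of `q * (N - 1)`.
theorem zeroSumCount_niho_four {m : ℕ} (hF : Fintype.card F = 2 ^ m) :
    (zeroSumCount (fun x : K ↦ x ^ (3 * Fintype.card F - 2)) 4 : ℤ) =
      1 + (5 * Fintype.card F ^ 2 - 2 * Fintype.card F + 2 + 2 * (1 - signChar F 1) -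
        traceSeq m) * (Fintype.card F ^ 2 - 1) := by
  classical
  let g (x : K) : K := x ^ (3 * Fintype.card F - 2)
  have hexpand (a b : K) : (Fintype.card F : ℤ) ^ 4 *
      ((#{v : unitCircle F K | nihoQuintic F a b v = 0}).descFactorial 4 : ℤ) =
      walshSum g a b ^ 4 - 2 * Fintype.card F * walshSum g a b ^ 3 -
        Fintype.card F ^ 2 * walshSum g a b ^ 2 + 2 * Fintype.card F ^ 3 * walshSum g a b ^ 1 := by
    rw [walshSum_niho, cast_descFactorial_four]
    ring
  have hone : zeroSumCount g 1 = 1 :=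
    zeroSumCount_one (zero_pow (three_mul_card_sub_two_ne_zero F))
  have hthree : (zeroSumCount g 3 : ℤ) = _ := zeroSumCount_niho_three
  have hsum := congrArg (fun s : ℤ ↦ (Fintype.card F : ℤ) ^ 4 * s)
    (sum_descFactorial_card_nihoQuintic (K := K) hF)
  simp only [mul_sum (s := (univ : Finset K)), hexpand, sum_add_distrib, sum_sub_distrib] at hsum
  simp only [← mul_sum, sum_walshSum_pow, hone, zeroSumCount_two, hthree,
    card_eq_card_sq F K] at hsum
  push_cast at hsum
  refine mul_left_cancel₀ (pow_ne_zero 4 (Nat.cast_ne_zero.2 (Fintype.card_ne_zero (α := F)))) ?_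
  linear_combination hsum

end FourthMoment

theorem ncard_quadruples_eq_zeroSumCount {K : Type*} [AddCommMonoid K] [Fintype K]
    [DecidableEq K] (g : K → K) :
    {p : K × K × K × K | p.1 + p.2.1 + p.2.2.1 + p.2.2.2 = 0 ∧
      g p.1 + g p.2.1 + g p.2.2.1 + g p.2.2.2 = 0}.ncard = zeroSumCount g 4 := by
  rw [zeroSumCount, Set.ncard_eq_toFinset_card']
  refine card_nbij' (fun p ↦ ![p.1, p.2.1, p.2.2.1, p.2.2.2]) (fun x ↦ (x 0, x 1, x 2, x 3))
    ?_ ?_ ?_ ?_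
  · intro p hp
    simpa [Fin.sum_univ_four] using hp
  · intro x hx
    simpa [Fin.sum_univ_four] using hx
  · exact fun _ _ ↦ rfl
  · exact fun x _ ↦ funext fun i ↦ by fin_cases i <;> rfl

theorem traceSeq_eq_mul_two_pow {τ : ℕ → ℚ} (h1 : τ 1 = 1 / 2) (h2 : τ 2 = -7 / 4)
    (hrec : ∀ n, 3 ≤ n → τ n = τ (n - 1) / 2 - τ (n - 2)) :
    ∀ n, 0 < n → (traceSeq n : ℚ) = τ n * 2 ^ n
  | 1, _ => by norm_num [traceSeq, h1]
  | 2, _ => by norm_num [traceSeq, h2]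
  | n + 3, _ => by
    rw [traceSeq_add_two (n + 1), hrec (n + 3) (Nat.le_add_left 3 n)]
    push_cast
    rw [traceSeq_eq_mul_two_pow h1 h2 hrec (n + 2) n.succ.succ_pos,
      traceSeq_eq_mul_two_pow h1 h2 hrec (n + 1) n.succ_pos]
    ring

theorem exists_isQuadraticExtension_galoisField {p m : ℕ} [Fact p.Prime] (hm : m ≠ 0) {K : Type*}
    [Field K] [CharP K p] (hK : Nat.card K = (p ^ m) ^ 2) :
    ∃ _ : Algebra (GaloisField p m) K, Algebra.IsQuadraticExtension (GaloisField p m) K := by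
  have hp := Fact.out (p := p.Prime)
  have : Finite K := Nat.finite_of_card_ne_zero <|
    hK ▸ pow_ne_zero 2 (pow_ne_zero m hp.ne_zero)
  let := ZMod.algebra K p
  have hfinrank : Module.finrank (ZMod p) K = m * 2 := by
    refine Nat.pow_right_injective hp.two_le (?_ : p ^ _ = p ^ (m * 2))
    rw [pow_mul, ← hK, Module.natCard_eq_pow_finrank (K := ZMod p), Nat.card_zmod]
  obtain ⟨φ⟩ := FiniteField.nonempty_algHom_of_finrank_dvd (F := ZMod p) (K := GaloisField p m)
    (L := K) (by rw [GaloisField.finrank p hm, hfinrank]; exact dvd_mul_right m 2)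
  let := φ.toRingHom.toAlgebra
  refine ⟨this, ⟨Nat.pow_right_injective (Nat.one_lt_pow hm hp.one_lt) (?_ : _ ^ _ = _ ^ 2)⟩⟩
  rw [← hK, Module.natCard_eq_pow_finrank (K := GaloisField p m), GaloisField.card p m hm]

/-- Counting quadruples in (F_{q^2})^4 with x₁+x₂+x₃+x₄ = 0 and
x₁^d + x₂^d + x₃^d + x₄^d = 0, where d = 3q - 2, in terms of the sequence τ. -/
theorem stmt_8 (m : ℕ) (hm : 0 < m) (q : ℕ) (hq : q = 2 ^ m)
    (K : Type*) [Field K] [Fintype K] [CharP K 2] (hK : Fintype.card K = q ^ 2)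
    (τ : ℕ → ℚ) (hτ1 : τ 1 = 1 / 2) (hτ2 : τ 2 = -7 / 4)
    (hτr : ∀ k, 3 ≤ k → τ k = τ (k - 1) / 2 - τ (k - 2)) :
    ({p : K × K × K × K |
        p.1 + p.2.1 + p.2.2.1 + p.2.2.2 = 0 ∧
        p.1 ^ (3 * q - 2) + p.2.1 ^ (3 * q - 2) + p.2.2.1 ^ (3 * q - 2)
          + p.2.2.2 ^ (3 * q - 2) = 0}.ncard : ℚ) =
      if Even m then
        1 + (5 * (q : ℚ) ^ 2 - (τ m + 2) * (q : ℚ) + 2) * ((q : ℚ) ^ 2 - 1)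
      else
        1 + (5 * (q : ℚ) ^ 2 - (τ m + 2) * (q : ℚ) + 6) * ((q : ℚ) ^ 2 - 1) := by
  classical
  subst hq
  obtain ⟨_, _⟩ := exists_isQuadraticExtension_galoisField (p := 2) hm.ne'
    ((Nat.card_eq_fintype_card (α := K)).trans hK)
  let := Fintype.ofFinite (GaloisField 2 m)
  have hF := GaloisField.card 2 m hm.ne'
  have hcount := zeroSumCount_niho_four (K := K) (Nat.card_eq_fintype_card.symm.trans hF)
  rw [signChar_one hF, ← Nat.card_eq_fintype_card, hF] at hcount
  have hcount' := congrArg (Int.cast : ℤ → ℚ) hcount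
  push_cast at hcount'
  rw [ncard_quadruples_eq_zeroSumCount fun x : K ↦ x ^ (3 * 2 ^ m - 2), hcount',
    traceSeq_eq_mul_two_pow hτ1 hτ2 hτr m hm]
  push_cast
  split_ifs with hparity
  · rw [hparity.neg_one_pow]
    ring
  · rw [(Nat.not_even_iff_odd.1 hparity).neg_one_pow]
    ring
end

section
/- Let τ_m be the rational sequence defined by τ_1 = 1/2, τ_2 = -7/4, and τ_m = (1/2)τ_{m-1} - τ_{m-2} for m ≥ 3. Then for every positive integer m, τ_m = (1/2^{2m-1}) · Σ_{i=0}^{⌊m/2⌋} C(m, 2i) · (-15)^i, where C(m, 2i) denotes the binomial coefficient. -/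
/-!
Let `ω` be a square root of `-15`. The element `z = (1 + ω) / 4` has trace `1 / 2` and norm `1`, so
the traces of its powers satisfy the recurrence of `τ`. Hence
`τ m = trace (z ^ m) = 2 / 4 ^ m * re ((1 + ω) ^ m)`, and only the even powers of `ω` in the
binomial expansion contribute to `re`.
-/

open Finset QuadraticAlgebra

theorem sum_range_succ_ite_even {M : Type*} [AddCommMonoid M] (f : ℕ → M) (n : ℕ) :
    ∑ j ∈ range (n + 1), (if Even j then f j else 0) = ∑ i ∈ range (n / 2 + 1), f (2 * i) := by
  rw [← sum_filter]
  refine sum_nbij' (· / 2) (2 * ·) ?_ ?_ ?_ ?_ ?_ <;> grind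

section QuadraticAlgebra

variable {R : Type*}

theorem re_omega_pow [CommSemiring R] {d : R} (j : ℕ) :
    ((ω : QuadraticAlgebra R d 0) ^ j).re = if Even j then d ^ (j / 2) else 0 := by
  have omega_sq : (ω : QuadraticAlgebra R d 0) ^ 2 = algebraMap R _ d := by
    ext <;> simp [sq]
  split_ifs with hj
  · obtain ⟨i, rfl⟩ := hj.exists_two_nsmul
    simp [pow_mul, omega_sq, ← map_pow]
  · obtain ⟨i, rfl⟩ := Nat.not_even_iff_odd.mp hj
    simp [pow_succ, pow_mul, omega_sq, ← map_pow]

theorem re_mk_pow [CommSemiring R] {d : R} (x y : R) (n : ℕ) :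
    ((⟨x, y⟩ : QuadraticAlgebra R d 0) ^ n).re =
      ∑ i ∈ range (n / 2 + 1), n.choose (2 * i) * x ^ (n - 2 * i) * y ^ (2 * i) * d ^ i := by
  have term_eq (j : ℕ) :
      (y • (ω : QuadraticAlgebra R d 0)) ^ j * algebraMap R _ x ^ (n - j) *
          (n.choose j : QuadraticAlgebra R d 0) =
        (n.choose j * x ^ (n - j) * y ^ j) • ω ^ j := by
    simp only [Algebra.smul_def, mul_pow, map_mul, map_pow, map_natCast]
    ring
  calc ((⟨x, y⟩ : QuadraticAlgebra R d 0) ^ n).re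
    _ = reₗ d 0 ((y • ω + algebraMap R _ x) ^ n) := by
      rw [mk_eq_add_smul_omega, add_comm]; rfl
    _ = ∑ j ∈ range (n + 1),
          if Even j then n.choose j * x ^ (n - j) * y ^ j * d ^ (j / 2) else 0 := by
      simp only [add_pow, term_eq, map_sum, map_smul, smul_eq_mul, reₗ, LinearMap.coe_mk,
        AddHom.coe_mk, re_omega_pow, mul_ite, mul_zero]
    _ = ∑ i ∈ range (n / 2 + 1), n.choose (2 * i) * x ^ (n - 2 * i) * y ^ (2 * i) * d ^ i := by
      simp [sum_range_succ_ite_even]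

variable [CommRing R] {a b : R}

theorem trace_pow_add_two (z : QuadraticAlgebra R a b) (n : ℕ) :
    trace (z ^ (n + 2)) = trace z * trace (z ^ (n + 1)) - norm z * trace (z ^ n) := by
  rw [pow_add, sq_eq_trace_smul_sub_norm, mul_sub, mul_smul_comm, ← pow_succ, mul_comm (z ^ n),
    ← Algebra.smul_def, map_sub, map_smul, map_smul, smul_eq_mul, smul_eq_mul]

theorem eq_trace_pow_of_recurrence {z : QuadraticAlgebra R a b} {u : ℕ → R}
    (h1 : u 1 = trace z) (h2 : u 2 = trace (z ^ 2))
    (hu : ∀ n, u (n + 3) = trace z * u (n + 2) - norm z * u (n + 1)) (n : ℕ) :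
    u (n + 1) = trace (z ^ (n + 1)) := by
  induction n using Nat.twoStepInduction with
  | zero => simpa using h1
  | one => exact h2
  | more n ih ih' => rw [hu, ih', ih, ← trace_pow_add_two]

end QuadraticAlgebra

theorem eq_two_mul_pow_mul_sum_choose_of_recurrence {R : Type*} [CommRing R] {c d : R} {u : ℕ → R}
    (h1 : u 1 = 2 * c) (h2 : u 2 = 2 * c ^ 2 * (1 + d))
    (hu : ∀ n, u (n + 3) = 2 * c * u (n + 2) - c ^ 2 * (1 - d) * u (n + 1)) (n : ℕ) :
    u (n + 1) = 2 * c ^ (n + 1) *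
      ∑ i ∈ range ((n + 1) / 2 + 1), ((n + 1).choose (2 * i) : R) * d ^ i := by
  let z : QuadraticAlgebra R d 0 := c • ⟨1, 1⟩
  have trace_z : trace z = 2 * c := by
    simp [z, trace_def]
  have norm_z : norm z = c ^ 2 * (1 - d) := by
    simp only [z, norm_def, re_smul, im_smul, smul_eq_mul]; ring
  have trace_z_sq : trace (z ^ 2) = 2 * c ^ 2 * (1 + d) := by
    simp only [z, sq, trace_def, re_mul, im_mul, re_smul, im_smul, smul_eq_mul]; ring
  have u_eq_trace : u (n + 1) = trace (z ^ (n + 1)) :=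
    eq_trace_pow_of_recurrence (h1.trans trace_z.symm) (h2.trans trace_z_sq.symm)
      (by simpa only [trace_z, norm_z] using hu) n
  rw [u_eq_trace, smul_pow, map_smul, trace_def, re_mk_pow]
  simp only [one_pow, mul_one, zero_mul, add_zero, smul_eq_mul]
  ring

theorem stmt_9_general {K : Type*} [Field K] [NeZero (2 : K)] (τ : ℕ → K)
    (hτ1 : τ 1 = 1 / 2) (hτ2 : τ 2 = -7 / 4)
    (hτr : ∀ k, 3 ≤ k → τ k = τ (k - 1) / 2 - τ (k - 2)) :
    ∀ m : ℕ, 0 < m →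
      τ m = (1 / 2 ^ (2 * m - 1)) *
        ∑ i ∈ range (m / 2 + 1), (m.choose (2 * i) : K) * (-15) ^ i := by
  have four_eq : (4 : K) = 2 ^ 2 := by norm_num
  have four_ne : (4 : K) ≠ 0 := four_eq ▸ pow_ne_zero 2 two_ne_zero
  have trace_eq : 2 * (1 / 4) = (1 / 2 : K) := by grind
  have norm_eq : (1 / 4) ^ 2 * (1 - -15) = (1 : K) := by grind
  have prefactor_eq (n : ℕ) : 1 / 2 ^ (2 * (n + 1) - 1) = 2 * (1 / 4 : K) ^ (n + 1) := by
    rw [show 2 * (n + 1) - 1 = 2 * n + 1 by lia, one_div_pow, four_eq, ← pow_mul, mul_add_one,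
      pow_add, pow_add]
    field_simp
  rintro (_ | n) hm
  · contradiction
  rw [prefactor_eq]
  refine eq_two_mul_pow_mul_sum_choose_of_recurrence (hτ1.trans trace_eq.symm) ?_ (fun k ↦ ?_) n
  · rw [hτ2]; grind
  · rw [trace_eq, norm_eq, one_mul, one_div_mul_eq_div]
    exact hτr (k + 3) (by lia)

/-- Closed form for the sequence τ:
τ_m = (1/2^{2m-1}) Σ_{i=0}^{⌊m/2⌋} C(m, 2i) (-15)^i. -/
theorem stmt_9 (τ : ℕ → ℚ) (hτ1 : τ 1 = 1 / 2) (hτ2 : τ 2 = -7 / 4)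
    (hτr : ∀ k, 3 ≤ k → τ k = τ (k - 1) / 2 - τ (k - 2)) :
    ∀ m : ℕ, 0 < m →
      τ m = (1 / 2 ^ (2 * m - 1)) *
        ∑ i ∈ Finset.range (m / 2 + 1), (m.choose (2 * i) : ℚ) * (-15) ^ i :=
  stmt_9_general τ hτ1 hτ2 hτr
end

section
/- Let q = 2^m where m is a positive even integer, and let d = 3q - 2. Then the number of x ∈ F_{q^2} satisfying (x + 1)^d + x^d = 1 is exactly q. -/
/-!
Clear the denominators in `x ^ (3 * q - 2) = (x ^ q) ^ 3 / x ^ 2`: as `x ↦ x ^ q` is additive, in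
characteristic two the equation `(x + 1) ^ (3 * q - 2) + x ^ (3 * q - 2) = 1` becomes
`(x ^ q + x) ^ 2 * (x ^ q + x ^ 2) = 0`, that is, `x ^ q = x` or `x ^ q = x ^ 2`. If the field has
`q ^ 2` elements, the second case gives `x = x ^ q ^ 2 = x ^ 4`; since `q = 2 ^ m ≡ 1 [MOD 3]`
for even `m`, again `x ^ q = x`. The solutions are therefore `0` and the `(q - 1)`-st roots of
unity, of which the cyclic group of units, of order `q ^ 2 - 1`, has exactly `q - 1`.
-/

section Monoid

variable {M : Type*} [Monoid M]

theorem sq_mul_pow_three_mul_sub_two {q : ℕ} (hq : 0 < q) (x : M) :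
    x ^ 2 * x ^ (3 * q - 2) = (x ^ q) ^ 3 := by
  rw [← pow_add, ← pow_mul]
  congr 1
  omega

theorem pow_mul_add_one_eq_self {n : ℕ} {x : M} (hx : x ^ (n + 1) = x) (k : ℕ) :
    x ^ (n * k + 1) = x := by
  induction k with
  | zero => simp
  | succ k ih => rw [mul_add_one, add_assoc, add_comm n, ← add_assoc, pow_add, ih, ← pow_succ', hx]

theorem pow_eq_self_of_pow_eq_sq {q : ℕ} (hq : q ≡ 1 [MOD 3]) {x : M} (hx : x ^ q ^ 2 = x)
    (hxq : x ^ q = x ^ 2) : x ^ q = x := by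
  have pow_four : x ^ (3 + 1) = x :=
    calc x ^ (3 + 1) = (x ^ 2) ^ 2 := by rw [← pow_mul]
      _ = (x ^ q) ^ 2 := by rw [hxq]
      _ = (x ^ q) ^ q := by rw [pow_right_comm, ← hxq]
      _ = x := by rw [← pow_mul, ← sq, hx]
  obtain ⟨k, rfl⟩ : ∃ k, q = 3 * k + 1 := ⟨q / 3, by rw [Nat.ModEq] at hq; omega⟩
  exact pow_mul_add_one_eq_self pow_four k

end Monoid

section CharTwo

variable {R : Type*} [CommRing R] [CharP R 2]

theorem sq_mul_add_one_pow_add_pow_add_one (m : ℕ) (x : R) :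
    (x * (x + 1)) ^ 2 * ((x + 1) ^ (3 * 2 ^ m - 2) + x ^ (3 * 2 ^ m - 2) + 1) =
      (x ^ 2 ^ m + x) ^ 2 * (x ^ 2 ^ m + x ^ 2) := by
  have h2 : (2 : R) = 0 := CharTwo.two_eq_zero
  have hx := sq_mul_pow_three_mul_sub_two (Nat.two_pow_pos m) x
  have hx1 := sq_mul_pow_three_mul_sub_two (Nat.two_pow_pos m) (x + 1)
  rw [add_pow_char_pow, one_pow] at hx1
  generalize x ^ 2 ^ m = y at hx hx1 ⊢
  calc (x * (x + 1)) ^ 2 * ((x + 1) ^ (3 * 2 ^ m - 2) + x ^ (3 * 2 ^ m - 2) + 1)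
      = x ^ 2 * (y + 1) ^ 3 + (x + 1) ^ 2 * y ^ 3 + (x * (x + 1)) ^ 2 := by
        linear_combination x ^ 2 * hx1 + (x + 1) ^ 2 * hx
    _ = (y + x) ^ 2 * (y + x ^ 2) := by
        linear_combination (x ^ 2 + x ^ 3 + x ^ 2 * y + x ^ 2 * y ^ 2 + x ^ 2 * y ^ 3
          + x * y ^ 3 - x ^ 3 * y - x * y ^ 2) * h2

theorem add_one_pow_add_pow_eq_one_iff [NoZeroDivisors R] (m : ℕ) (x : R) :
    (x + 1) ^ (3 * 2 ^ m - 2) + x ^ (3 * 2 ^ m - 2) = 1 ↔ x ^ 2 ^ m = x ∨ x ^ 2 ^ m = x ^ 2 := by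
  have hd : 3 * 2 ^ m - 2 ≠ 0 := by have := Nat.two_pow_pos m; omega
  rcases eq_or_ne x 0 with rfl | hx0
  · simp [hd]
  rcases eq_or_ne (x + 1) 0 with hx1 | hx1
  · obtain rfl : x = 1 := CharTwo.add_eq_zero.mp hx1
    simp [hx1, hd]
  · have hfactor : (x * (x + 1)) ^ 2 ≠ 0 := pow_ne_zero 2 (mul_ne_zero hx0 hx1)
    rw [← CharTwo.add_eq_zero, ← mul_eq_zero_iff_left hfactor,
      sq_mul_add_one_pow_add_pow_add_one, mul_eq_zero, pow_eq_zero_iff two_ne_zero,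
      CharTwo.add_eq_zero, CharTwo.add_eq_zero]

end CharTwo

theorem two_pow_modEq_one_of_even {m : ℕ} (hm : Even m) : 2 ^ m ≡ 1 [MOD 3] := by
  obtain ⟨k, rfl⟩ := hm
  have h4 : 2 ^ 2 ≡ 1 [MOD 3] := rfl
  simpa [← two_mul, pow_mul] using h4.pow k

theorem setOf_pow_add_one_eq_self (M₀ : Type*) [CommGroupWithZero M₀] (n : ℕ) :
    {x : M₀ | x ^ (n + 1) = x} = insert 0 (Units.val '' (rootsOfUnity n M₀ : Set M₀ˣ)) := by
  ext x
  rcases eq_or_ne x 0 with rfl | hx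
  · simp
  · lift x to M₀ˣ using hx.isUnit
    simp [pow_succ, ← Units.val_pow_eq_pow_val, Units.val_inj]

section FiniteField

variable (K : Type*) [Field K] [Finite K]

theorem ncard_setOf_pow_add_one_eq_self (n : ℕ) :
    {x : K | x ^ (n + 1) = x}.ncard = (Nat.card K - 1).gcd n + 1 := by
  have hcard : (rootsOfUnity n K : Set Kˣ).ncard = (Nat.card K - 1).gcd n := by
    rw [← Nat.card_coe_set_eq, SetLike.coe_sort_coe, rootsOfUnity_eq_ker,
      IsCyclic.card_powMonoidHom_ker, Nat.card_units]
  rw [setOf_pow_add_one_eq_self, Set.ncard_insert_of_notMem (by simp),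
    Set.ncard_image_of_injective _ Units.val_injective, hcard]

theorem ncard_setOf_pow_eq_self_of_card_eq_pow {q r : ℕ} (hK : Nat.card K = q ^ r) :
    {x : K | x ^ q = x}.ncard = q := by
  obtain _ | n := q
  · have hcard : Nat.card K ≤ 1 := hK ▸ pow_le_one₀ le_rfl zero_le_one
    exact absurd Finite.one_lt_card hcard.not_gt
  · have hdvd : n ∣ (n + 1) ^ r - 1 := by simpa using Nat.sub_dvd_pow_sub_pow (n + 1) 1 r
    rw [ncard_setOf_pow_add_one_eq_self, hK, Nat.gcd_eq_right hdvd]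

end FiniteField

/-- For q = 2^m with m a positive even integer and d = 3q - 2,
the equation (x+1)^d + x^d = 1 has exactly q solutions in F_{q^2}. -/
theorem stmt_11 (m : ℕ) (hm : 0 < m) (hme : Even m) (q : ℕ) (hq : q = 2 ^ m)
    (K : Type*) [Field K] [Fintype K] [CharP K 2] (hK : Fintype.card K = q ^ 2) :
    {x : K | (x + 1) ^ (3 * q - 2) + x ^ (3 * q - 2) = 1}.ncard = q := by
  have solution_iff (x : K) : (x + 1) ^ (3 * q - 2) + x ^ (3 * q - 2) = 1 ↔ x ^ q = x := by
    have hx : x ^ q ^ 2 = x := hK ▸ FiniteField.pow_card x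
    have hq1 : q ≡ 1 [MOD 3] := hq ▸ two_pow_modEq_one_of_even hme
    rw [hq, add_one_pow_add_pow_eq_one_iff, ← hq, or_iff_left_of_imp]
    exact pow_eq_self_of_pow_eq_sq hq1 hx
  simp only [solution_iff]
  exact ncard_setOf_pow_eq_self_of_card_eq_pow K (Nat.card_eq_fintype_card.trans hK)
end

section
/- Let q = 2^m where m is a positive even integer, and let d = 3q - 2. Then the set of x ∈ F_{q^2} satisfying (x + 1)^d + x^d = 1 is exactly the subfield F_q of F_{q^2}. -/
/-!
Write `q = 2 ^ m`, `d = 3 * q - 2` and `y = x ^ q`. Since `z ^ d * z ^ 2 = (z ^ q) ^ 3` and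
`(x + 1) ^ q = y + 1`, multiplying `(x + 1) ^ d + x ^ d + 1` by `(x * (x + 1)) ^ 2` gives a
polynomial in `x` and `y`, which in characteristic two factors as `(y + x ^ 2) * (y + x) ^ 2`.
The factor `y + x ^ 2` contributes no new solution: extracting square roots in `y = x ^ 2` gives
`x ^ 2 ^ (m - 1) = x`, while `x ^ 2 ^ n = x` in the field of order `2 ^ n`. When `m - 1` and `n` are
coprime this leaves only `x ^ 2 = x`, and `m - 1` is coprime to `n = 2 * m` for even `m`.
-/

theorem coprime_pred_two_mul_of_even {m : ℕ} (hm : 0 < m) (hme : Even m) :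
    (m - 1).Coprime (2 * m) :=
  Nat.Coprime.mul_right (Nat.coprime_two_right.mpr (Nat.Even.sub_odd hm hme odd_one))
    ((Nat.coprime_self_sub_left hm).mpr (Nat.coprime_one_left m))

theorem pow_pow_gcd_eq_self {M : Type*} [Monoid M] {x : M} {p a b : ℕ}
    (ha : x ^ p ^ a = x) (hb : x ^ p ^ b = x) : x ^ p ^ a.gcd b = x := by
  have isPeriodicPt_iff (c : ℕ) : Function.IsPeriodicPt (· ^ p) c x ↔ x ^ p ^ c = x := by
    rw [Function.IsPeriodicPt, Function.IsFixedPt, pow_iterate]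
  rw [← isPeriodicPt_iff] at ha hb ⊢
  exact ha.gcd hb

section CharTwo

variable {R : Type*} [CommRing R] [CharP R 2]

theorem charTwo_sq_eq_self_of_pow_eq_sq [IsReduced R] {k n : ℕ} (hkn : k.Coprime n) {x : R}
    (hx : x ^ 2 ^ n = x) (h : x ^ 2 ^ (k + 1) = x ^ 2) : x ^ 2 = x := by
  have pow_eq_self : x ^ 2 ^ k = x :=
    frobenius_inj R 2 (by rwa [frobenius_def, frobenius_def, ← pow_mul, ← pow_succ])
  simpa only [hkn.gcd_eq_one, pow_one] using pow_pow_gcd_eq_self pow_eq_self hx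

theorem charTwo_cubic_eq_mul (x y : R) :
    (y + 1) ^ 3 * x ^ 2 + y ^ 3 * (x + 1) ^ 2 + (x * (x + 1)) ^ 2 =
      (y + x ^ 2) * (y + x) ^ 2 := by
  grind [CharTwo.two_eq_zero (R := R)]

theorem charTwo_sq_mul_pow_add_pow_add_one_eq_mul (m : ℕ) (x : R) :
    (x * (x + 1)) ^ 2 * ((x + 1) ^ (3 * 2 ^ m - 2) + x ^ (3 * 2 ^ m - 2) + 1) =
      (x ^ 2 ^ m + x ^ 2) * (x ^ 2 ^ m + x) ^ 2 := by
  have two_le : 2 ≤ 3 * 2 ^ m := by linarith [Nat.one_le_two_pow (n := m)]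
  have pow_mul_sq (z : R) : z ^ (3 * 2 ^ m - 2) * z ^ 2 = (z ^ 2 ^ m) ^ 3 := by
    rw [← pow_add, Nat.sub_add_cancel two_le, mul_comm, pow_mul]
  have frobenius_add_one : (x + 1) ^ 2 ^ m = x ^ 2 ^ m + 1 := by
    rw [add_pow_char_pow, one_pow]
  rw [← charTwo_cubic_eq_mul, ← frobenius_add_one, ← pow_mul_sq, ← pow_mul_sq]
  ring

theorem charTwo_add_one_pow_add_pow_eq_one_iff [IsDomain R] (m : ℕ) (x : R) :
    (x + 1) ^ (3 * 2 ^ m - 2) + x ^ (3 * 2 ^ m - 2) = 1 ↔ x ^ 2 ^ m = x ^ 2 ∨ x ^ 2 ^ m = x := by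
  have exponent_ne_zero : 3 * 2 ^ m - 2 ≠ 0 := by have := Nat.one_le_two_pow (n := m); omega
  by_cases hx : x * (x + 1) = 0
  · rcases mul_eq_zero.mp hx with rfl | h
    · simp [exponent_ne_zero]
    · obtain rfl : x = 1 := CharTwo.add_eq_zero.mp h
      simp [exponent_ne_zero, CharTwo.add_self_eq_zero]
  · rw [← CharTwo.add_eq_zero, ← mul_eq_zero_iff_left (pow_ne_zero 2 hx),
      charTwo_sq_mul_pow_add_pow_add_one_eq_mul, mul_eq_zero, sq_eq_zero_iff,
      CharTwo.add_eq_zero, CharTwo.add_eq_zero]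

end CharTwo

theorem stmt_12_general {m n : ℕ} (hm : 0 < m) (hmn : (m - 1).Coprime n)
    {K : Type*} [Field K] [Fintype K] [CharP K 2] (hK : Fintype.card K = 2 ^ n) :
    {x : K | (x + 1) ^ (3 * 2 ^ m - 2) + x ^ (3 * 2 ^ m - 2) = 1} = {x : K | x ^ 2 ^ m = x} := by
  ext x
  have pow_card : x ^ 2 ^ n = x := hK ▸ FiniteField.pow_card x
  rw [Set.mem_ofPred_eq, Set.mem_ofPred_eq, charTwo_add_one_pow_add_pow_eq_one_iff,
    or_iff_right_of_imp]
  intro h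
  rw [h]
  exact charTwo_sq_eq_self_of_pow_eq_sq hmn pow_card (by rwa [Nat.sub_add_cancel hm])

/-- For q = 2^m with m a positive even integer and d = 3q - 2,
the solution set of (x+1)^d + x^d = 1 in F_{q^2} is exactly the subfield F_q,
i.e. the set of fixed points of x ↦ x^q. -/
theorem stmt_12 (m : ℕ) (hm : 0 < m) (hme : Even m) (q : ℕ) (hq : q = 2 ^ m)
    (K : Type*) [Field K] [Fintype K] [CharP K 2] (hK : Fintype.card K = q ^ 2) :
    {x : K | (x + 1) ^ (3 * q - 2) + x ^ (3 * q - 2) = 1} = {x : K | x ^ q = x} := by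
  subst hq
  exact stmt_12_general hm (coprime_pred_two_mul_of_even hm hme) (by rw [hK, ← pow_mul'])
end

section
/- Let q = 2^m where m is a positive even integer, and let d = 3q - 2. Then for every b ∈ F_{q^2} with b ≠ 1, the number of x ∈ F_{q^2} satisfying (x + 1)^d + x^d = b is at most 4. -/
/-!
Write `σ x = x ^ q` and `c = b + 1 ≠ 0`, so that `x ^ d = σ x ^ 3 / x ^ 2`; neither `0` nor `1` is a
solution. With `t = x + σ x` and `u = x ^ 2 + x` the equation becomes `c u² = t² (u + t)`, that is,
`t (z² + z) = c` for `z = t / u`. Since `u + σ u = t² + t`, also `t = 1 + z⁻¹ + (σ z)⁻¹`, so `z`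
determines `t`, hence `u`, hence `x` up to adding `1`. It remains to see that at most two `z` occur.

* If `σ c = c`, then `z² + z` is fixed by `σ`, so either `σ z = z`, which forces `z² + z = c`, or
  `σ z = z + 1`, which forces `z² + z = c + 1`. The two kinds exclude each other: the sum `s` of
  one `z` of each kind would satisfy `s² + s = 1`, so `s` would be a primitive cube root of unity,
  which lies in `F_q` as `m` is even, although `σ s = s + 1`.
* If `σ c ≠ c`, put `T = c + σ c` and `C = c σ c`. Then `z` is determined by `a = z + σ z`, a root
  of the affine polynomial `C (a² + a)² + T² a + T³ + C T²`. Differences of its roots are roots of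
  `δ³ + δ = T² / C`, and three roots `a` in `F_q` would give two such differences `A ≠ B`. The
  Lagrange resolvent `A + ω B` then yields a root in `F_q` of `ρ² + ρ = C / T²`, whose roots
  `c / T` and `c / T + 1` are not in `F_q`.
-/

section Cardinality

lemma encard_le_encard_mul_of_mapsTo {α β : Type*} {f : α → β} {s : Set α} {t : Set β} {n : ℕ∞}
    (ht : t.Finite) (hf : Set.MapsTo f s t) (hn : ∀ y ∈ t, {x ∈ s | f x = y}.encard ≤ n) :
    s.encard ≤ t.encard * n := by
  lift t to Finset β using ht
  have hcover : s ⊆ ⋃ y ∈ t, {x ∈ s | f x = y} := fun x hx =>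
    Set.mem_biUnion (hf hx) ⟨hx, rfl⟩
  calc s.encard ≤ ∑ y ∈ t, {x ∈ s | f x = y}.encard :=
        (Set.encard_le_encard hcover).trans (t.set_encard_biUnion_le _)
    _ ≤ t.card • n := Finset.sum_le_card_nsmul _ _ _ hn
    _ = (t : Set β).encard * n := by rw [nsmul_eq_mul, Set.encard_coe_eq_coe_finsetCard]

lemma exists_three_of_two_lt_encard {α : Type*} {s : Set α} (h : 2 < s.encard) :
    ∃ x ∈ s, ∃ y ∈ s, ∃ z ∈ s, x ≠ y ∧ x ≠ z ∧ y ≠ z := by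
  obtain ⟨t, hts, ht⟩ := Set.exists_subset_encard_eq (k := 3) (Order.add_one_le_of_lt h)
  obtain ⟨x, y, z, hxy, hxz, hyz, rfl⟩ := Set.encard_eq_three.mp ht
  exact ⟨x, hts (by simp), y, hts (by simp), z, hts (by simp), hxy, hxz, hyz⟩

end Cardinality

section ArtinSchreier

variable {K : Type*} [Field K] [CharP K 2]

lemma eq_or_eq_add_one_of_sq_add_self_eq {x y : K} (h : x ^ 2 + x = y ^ 2 + y) :
    x = y ∨ x = y + 1 := by
  have hprod : (x + y) * (x + (y + 1)) = 0 := by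
    linear_combination h + (y ^ 2 + y + x * y) * CharTwo.two_eq_zero (R := K)
  exact (mul_eq_zero.mp hprod).imp CharTwo.add_eq_zero.mp CharTwo.add_eq_zero.mp

lemma encard_le_two_of_sq_add_self_eq {s : Set K}
    (h : ∀ x ∈ s, ∀ y ∈ s, x ^ 2 + x = y ^ 2 + y) : s.encard ≤ 2 := by
  obtain rfl | ⟨y, hy⟩ := s.eq_empty_or_nonempty
  · simp
  have hsub : s ⊆ {y, y + 1} := fun x hx => eq_or_eq_add_one_of_sq_add_self_eq (h x hx y hy)
  calc s.encard ≤ ({y, y + 1} : Set K).encard := Set.encard_le_encard hsub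
    _ ≤ ({y + 1} : Set K).encard + 1 := Set.encard_insert_le _ _
    _ = 2 := by rw [Set.encard_singleton, one_add_one_eq_two]

lemma map_eq_self_of_sq_add_self_eq {σ : K →+* K} {x y : K} (h : x ^ 2 + x = y ^ 2 + y)
    (hy : σ y = y) : σ x = x := by
  rcases eq_or_eq_add_one_of_sq_add_self_eq h with rfl | rfl <;> simp [hy]

lemma div_add_sq_add_div_add {c d : K} (h : c + d ≠ 0) :
    (c / (c + d)) ^ 2 + c / (c + d) = c * d / (c + d) ^ 2 := by
  field_simp
  linear_combination c ^ 2 * CharTwo.two_eq_zero (R := K)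

end ArtinSchreier

section Cubic

variable {K : Type*} [Field K] [CharP K 2] {ω k A B : K}

lemma sq_add_mul_add_sq_eq_one_of_cubic (hA : A ^ 3 + A = k) (hB : B ^ 3 + B = k) (hAB : A ≠ B) :
    A ^ 2 + A * B + B ^ 2 = 1 := by
  have hsum : A + B ≠ 0 := fun h => hAB (CharTwo.add_eq_zero.mp h)
  refine mul_left_cancel₀ hsum ?_
  linear_combination hA - hB +
    (A ^ 2 * B + A * B ^ 2 + B ^ 3 - A) * CharTwo.two_eq_zero (R := K)

lemma lagrange_resolvent_relation (hω : ω ^ 2 + ω + 1 = 0) (hA : A ^ 3 + A = k)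
    (hB : B ^ 3 + B = k) (hAB : A ≠ B) :
    ((A + ω * B) ^ 3) ^ 2 + k * (A + ω * B) ^ 3 = 1 := by
  have two : (2 : K) = 0 := CharTwo.two_eq_zero
  have hconic := sq_add_mul_add_sq_eq_one_of_cubic hA hB hAB
  have hk : A * B * (A + B) = k := by
    linear_combination A * hconic + hA - A ^ 3 * two
  have hprod : (A + ω * B) * (A + (ω + 1) * B) = 1 := by
    linear_combination hconic + B ^ 2 * hω + (ω * A * B - B ^ 2) * two
  have hcubes : (A + ω * B) ^ 3 + (A + (ω + 1) * B) ^ 3 = k := by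
    linear_combination hk + B ^ 3 * hω + (A ^ 3 + A ^ 2 * B * (3 * ω + 1)
      + A * B ^ 2 * (3 * ω ^ 2 + 3 * ω + 1) + B ^ 3 * (ω ^ 3 + ω ^ 2 + ω)) * two
  have hcubes_mul : (A + ω * B) ^ 3 * (A + (ω + 1) * B) ^ 3 = 1 := by
    rw [← mul_pow, hprod, one_pow]
  linear_combination hcubes_mul - (A + ω * B) ^ 3 * hcubes + ((A + ω * B) ^ 3) ^ 2 * two

lemma sq_add_self_lagrange_resolvent (hω : ω ^ 2 + ω + 1 = 0) (hk : k ≠ 0)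
    (hA : A ^ 3 + A = k) (hB : B ^ 3 + B = k) (hAB : A ≠ B) :
    (((A + ω * B) ^ 3 + 1) / k) ^ 2 + ((A + ω * B) ^ 3 + 1) / k = k⁻¹ := by
  have hres := lagrange_resolvent_relation hω hA hB hAB
  generalize (A + ω * B) ^ 3 = P at hres ⊢
  field_simp
  linear_combination hres + (P + 1) * CharTwo.two_eq_zero (R := K)

end Cubic

section Ratio

variable {K : Type*} [Field K]

/-- The quantity `t = x + σ x` expressed through `z = (x + σ x) / (x ^ 2 + x)`. -/
def ratioTrace (σ : K →+* K) (z : K) : K :=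
  1 + z⁻¹ + (σ z)⁻¹

/-- The set of `z` satisfying the equation that `z = (x + σ x) / (x ^ 2 + x)` obeys when `x` solves
`σ (x + 1) ^ 3 / (x + 1) ^ 2 + σ x ^ 3 / x ^ 2 = c + 1`. -/
def ratioSet (σ : K →+* K) (c : K) : Set K :=
  {z | ratioTrace σ z * (z ^ 2 + z) = c}

variable {σ : K →+* K} {c z w : K}

lemma mem_ratioSet : z ∈ ratioSet σ c ↔ ratioTrace σ z * (z ^ 2 + z) = c :=
  Iff.rfl

lemma ne_zero_of_mem_ratioSet (hc : c ≠ 0) (hz : z ∈ ratioSet σ c) : z ≠ 0 := by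
  rintro rfl
  exact hc (by simpa [mem_ratioSet] using hz.symm)

lemma ratioTrace_ne_zero (hc : c ≠ 0) (hz : z ∈ ratioSet σ c) : ratioTrace σ z ≠ 0 :=
  left_ne_zero_of_mul ((mem_ratioSet.mp hz).trans_ne hc)

lemma map_ratioTrace (hσ : Function.Involutive σ) (z : K) :
    σ (ratioTrace σ z) = ratioTrace σ z := by
  simp only [ratioTrace, map_add, map_one, map_inv₀, hσ z]
  ring

lemma ratioTrace_mul_map (hσ : Function.Involutive σ) (hz : z ∈ ratioSet σ c) :
    ratioTrace σ z * (σ z ^ 2 + σ z) = σ c := by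
  rw [← mem_ratioSet.mp hz, map_mul, map_ratioTrace hσ, map_add, map_pow]

variable [CharP K 2]

lemma add_map_eq_ratioTrace_add_one_mul (hz : z ≠ 0) :
    z + σ z = (ratioTrace σ z + 1) * (z * σ z) := by
  have hσz : σ z ≠ 0 := (map_ne_zero σ).mpr hz
  rw [ratioTrace]
  field_simp
  linear_combination -(z * σ z) * CharTwo.two_eq_zero (R := K)

lemma add_map_eq_ratioTrace_mul (hσ : Function.Involutive σ) (hz : z ∈ ratioSet σ c) :
    c + σ c = ratioTrace σ z * ((z + σ z) ^ 2 + (z + σ z)) := by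
  linear_combination -mem_ratioSet.mp hz - ratioTrace_mul_map hσ hz -
    ratioTrace σ z * z * σ z * CharTwo.two_eq_zero (R := K)

lemma mul_map_mul_ratioTrace_add_one_sq (hσ : Function.Involutive σ) (hc : c ≠ 0)
    (hz : z ∈ ratioSet σ c) :
    c * σ c * (ratioTrace σ z + 1) ^ 2 =
      ratioTrace σ z ^ 2 * ((z + σ z) + (c + σ c)) := by
  have two : (2 : K) = 0 := CharTwo.two_eq_zero
  have htrace := add_map_eq_ratioTrace_add_one_mul (σ := σ) (ne_zero_of_mem_ratioSet hc hz)
  have hC : c * σ c =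
      ratioTrace σ z ^ 2 * (z * σ z * (z * σ z + (z + σ z) + 1)) := by
    rw [← ratioTrace_mul_map hσ hz]
    nth_rw 1 [← mem_ratioSet.mp hz]
    ring
  rw [hC, add_map_eq_ratioTrace_mul hσ hz]
  generalize ratioTrace σ z = t at htrace ⊢
  generalize z * σ z = n at htrace ⊢
  generalize z + σ z = a at htrace ⊢
  subst htrace
  linear_combination t ^ 2 * (t + 1) ^ 2 * n ^ 2 * two

lemma trace_quartic_of_mem_ratioSet (hσ : Function.Involutive σ) (hc : c ≠ 0)
    (hz : z ∈ ratioSet σ c) :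
    (c + σ c) ^ 2 * ((z + σ z) + (c + σ c)) =
      c * σ c * (((z + σ z) ^ 2 + (z + σ z)) ^ 2 + (c + σ c) ^ 2) := by
  have htrace := add_map_eq_ratioTrace_mul hσ hz
  have hnorm := mul_map_mul_ratioTrace_add_one_sq hσ hc hz
  generalize ratioTrace σ z = t at htrace hnorm
  generalize z + σ z = a at htrace hnorm ⊢
  calc (c + σ c) ^ 2 * (a + (c + σ c)) = (a ^ 2 + a) ^ 2 * (t ^ 2 * (a + (c + σ c))) := by
        nth_rw 1 [htrace]
        ring
    _ = c * σ c * ((a ^ 2 + a) * (t + 1)) ^ 2 := by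
        rw [← hnorm]
        ring
    _ = c * σ c * ((a ^ 2 + a) ^ 2 + (c + σ c) ^ 2) := by
        rw [htrace, ← CharTwo.add_sq]
        ring

lemma trace_add_trace_cubic_of_mem_ratioSet (hσ : Function.Involutive σ) (hc : c ≠ 0)
    (hz : z ∈ ratioSet σ c) (hw : w ∈ ratioSet σ c) (hzw : z + σ z ≠ w + σ w) :
    ((z + σ z) + (w + σ w)) ^ 3 + ((z + σ z) + (w + σ w)) = (c + σ c) ^ 2 / (c * σ c) := by
  have hz' := trace_quartic_of_mem_ratioSet hσ hc hz
  have hw' := trace_quartic_of_mem_ratioSet hσ hc hw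
  have hC : c * σ c ≠ 0 := mul_ne_zero hc ((map_ne_zero σ).mpr hc)
  have hsum : (z + σ z) + (w + σ w) ≠ 0 := fun h => hzw (CharTwo.add_eq_zero.mp h)
  rw [eq_div_iff hC]
  refine mul_left_cancel₀ hsum ?_
  generalize c * σ c = C at hz' hw' ⊢
  generalize c + σ c = T at hz' hw' ⊢
  generalize z + σ z = a at hz' hw' ⊢
  generalize w + σ w = e at hz' hw' ⊢
  linear_combination -hz' - hw' +
    (C * (2 * a ^ 3 * e + 3 * a ^ 2 * e ^ 2 + 2 * a * e ^ 3 + a * e - a ^ 3 - e ^ 3) +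
      T ^ 3 - C * T ^ 2) * CharTwo.two_eq_zero (R := K)

lemma trace_injOn_ratioSet (hσ : Function.Involutive σ) (hc : c ≠ 0) (hcσ : c + σ c ≠ 0) :
    Set.InjOn (fun z => z + σ z) (ratioSet σ c) := by
  intro z hz w hw htr
  have hTz := add_map_eq_ratioTrace_mul hσ hz
  have hTw := add_map_eq_ratioTrace_mul hσ hw
  change z + σ z = w + σ w at htr
  rw [← htr] at hTw
  have ha : (z + σ z) ^ 2 + (z + σ z) ≠ 0 := right_ne_zero_of_mul (hTz ▸ hcσ)
  have ht : ratioTrace σ z = ratioTrace σ w := mul_right_cancel₀ ha (hTz.symm.trans hTw)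
  have hsq : z ^ 2 + z = w ^ 2 + w := by
    refine mul_left_cancel₀ (ratioTrace_ne_zero hc hz) ?_
    rw [mem_ratioSet.mp hz, ht, mem_ratioSet.mp hw]
  refine (eq_or_eq_add_one_of_sq_add_self_eq hsq).resolve_right fun hzw => ha ?_
  have hnz := add_map_eq_ratioTrace_add_one_mul (σ := σ) (ne_zero_of_mem_ratioSet hc hz)
  have hnw := add_map_eq_ratioTrace_add_one_mul (σ := σ) (ne_zero_of_mem_ratioSet hc hw)
  have ha0 : z + σ z ≠ 0 := by
    intro h
    simp [h] at ha
  have hnorm : z * σ z = w * σ w := by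
    rw [ht] at hnz
    refine mul_left_cancel₀ (left_ne_zero_of_mul (hnz ▸ ha0)) ?_
    rw [← hnz, ← hnw, htr]
  have ha1 : z + σ z + 1 = 0 := by
    rw [hzw, map_add, map_one] at hnorm ⊢
    linear_combination hnorm + CharTwo.two_eq_zero (R := K)
  linear_combination (z + σ z) * ha1

variable {ω b x : K}

lemma encard_ratioSet_le_two_of_ne (hσ : Function.Involutive σ) (hω : ω ^ 2 + ω + 1 = 0)
    (hσω : σ ω = ω) (hc : c ≠ 0) (hcσ : c + σ c ≠ 0) : (ratioSet σ c).encard ≤ 2 := by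
  by_contra! hcard
  obtain ⟨z₁, h₁, z₂, h₂, z₃, h₃, h₁₂, h₁₃, h₂₃⟩ := exists_three_of_two_lt_encard hcard
  have hinj := trace_injOn_ratioSet hσ hc hcσ
  have hA := trace_add_trace_cubic_of_mem_ratioSet hσ hc h₁ h₂ (hinj.ne h₁ h₂ h₁₂)
  have hB := trace_add_trace_cubic_of_mem_ratioSet hσ hc h₁ h₃ (hinj.ne h₁ h₃ h₁₃)
  have hAB := (add_right_injective (z₁ + σ z₁)).ne (hinj.ne h₂ h₃ h₂₃)
  have hk : (c + σ c) ^ 2 / (c * σ c) ≠ 0 :=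
    div_ne_zero (pow_ne_zero 2 hcσ) (mul_ne_zero hc ((map_ne_zero σ).mpr hc))
  have hρ := sq_add_self_lagrange_resolvent hω hk hA hB hAB
  rw [inv_div, ← div_add_sq_add_div_add hcσ] at hρ
  have hκ := map_eq_self_of_sq_add_self_eq (σ := σ) hρ.symm (by
    simp only [map_add, map_mul, map_div₀, map_pow, map_one, hσ _, hσω, add_comm (σ _) _,
      mul_comm (σ _) _])
  rw [map_div₀, map_add, hσ c, add_comm (σ c) c, div_left_inj' hcσ] at hκ
  exact hcσ (by rw [hκ, CharTwo.add_self_eq_zero])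

lemma sq_add_self_of_mem_ratioSet_of_map_eq (hz : z ∈ ratioSet σ c) (hσz : σ z = z) :
    z ^ 2 + z = c := by
  have ht : ratioTrace σ z = 1 := by
    rw [ratioTrace, hσz, add_assoc, CharTwo.add_self_eq_zero, add_zero]
  rwa [mem_ratioSet, ht, one_mul] at hz

lemma sq_add_self_of_mem_ratioSet_of_map_eq_add_one (hc : c ≠ 0) (hz : z ∈ ratioSet σ c)
    (hσz : σ z = z + 1) : z ^ 2 + z = c + 1 := by
  have hz0 := ne_zero_of_mem_ratioSet hc hz
  have hz1 : z + 1 ≠ 0 := hσz ▸ (map_ne_zero σ).mpr hz0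
  rw [mem_ratioSet, ratioTrace, hσz] at hz
  rw [← hz]
  field_simp
  linear_combination -(z + 1) * CharTwo.two_eq_zero (R := K)

lemma map_eq_or_eq_add_one_of_mem_ratioSet (hσ : Function.Involutive σ) (hc : c ≠ 0)
    (hcσ : σ c = c) (hz : z ∈ ratioSet σ c) : σ z = z ∨ σ z = z + 1 := by
  refine eq_or_eq_add_one_of_sq_add_self_eq
    (mul_left_cancel₀ (ratioTrace_ne_zero hc hz) ?_)
  rw [ratioTrace_mul_map hσ hz, hcσ, mem_ratioSet.mp hz]

lemma sq_add_self_ne_of_map_eq_of_map_eq_add_one (hω : ω ^ 2 + ω + 1 = 0) (hσω : σ ω = ω)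
    (hσz : σ z = z) (hσw : σ w = w + 1) : w ^ 2 + w ≠ z ^ 2 + z + 1 := by
  intro hwz
  have hsum : (z + w) ^ 2 + (z + w) = ω ^ 2 + ω := by
    linear_combination hwz - hω + (z ^ 2 + z + z * w + 1) * CharTwo.two_eq_zero (R := K)
  have hfix := map_eq_self_of_sq_add_self_eq hsum hσω
  rw [map_add, hσz, hσw, ← add_assoc] at hfix
  simp at hfix

lemma encard_ratioSet_le_two_of_map_eq (hσ : Function.Involutive σ) (hω : ω ^ 2 + ω + 1 = 0)
    (hσω : σ ω = ω) (hc : c ≠ 0) (hcσ : σ c = c) : (ratioSet σ c).encard ≤ 2 := by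
  refine encard_le_two_of_sq_add_self_eq fun z hz w hw => ?_
  rcases map_eq_or_eq_add_one_of_mem_ratioSet hσ hc hcσ hz with hσz | hσz <;>
    rcases map_eq_or_eq_add_one_of_mem_ratioSet hσ hc hcσ hw with hσw | hσw
  · rw [sq_add_self_of_mem_ratioSet_of_map_eq hz hσz, sq_add_self_of_mem_ratioSet_of_map_eq hw hσw]
  · refine (sq_add_self_ne_of_map_eq_of_map_eq_add_one hω hσω hσz hσw ?_).elim
    rw [sq_add_self_of_mem_ratioSet_of_map_eq hz hσz,
      sq_add_self_of_mem_ratioSet_of_map_eq_add_one hc hw hσw]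
  · refine (sq_add_self_ne_of_map_eq_of_map_eq_add_one hω hσω hσw hσz ?_).elim
    rw [sq_add_self_of_mem_ratioSet_of_map_eq hw hσw,
      sq_add_self_of_mem_ratioSet_of_map_eq_add_one hc hz hσz]
  · rw [sq_add_self_of_mem_ratioSet_of_map_eq_add_one hc hz hσz,
      sq_add_self_of_mem_ratioSet_of_map_eq_add_one hc hw hσw]

lemma encard_ratioSet_le_two (hσ : Function.Involutive σ) (hω : ω ^ 2 + ω + 1 = 0)
    (hσω : σ ω = ω) (hc : c ≠ 0) : (ratioSet σ c).encard ≤ 2 := by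
  by_cases hcσ : σ c = c
  · exact encard_ratioSet_le_two_of_map_eq hσ hω hσω hc hcσ
  · exact encard_ratioSet_le_two_of_ne hσ hω hσω hc
      fun h => hcσ (CharTwo.add_eq_zero.mp h).symm

lemma ratioTrace_ratio (hσ : Function.Involutive σ) (hu : x ^ 2 + x ≠ 0) (ht : x + σ x ≠ 0) :
    ratioTrace σ ((x + σ x) / (x ^ 2 + x)) = x + σ x := by
  have hσu : σ x ^ 2 + σ x ≠ 0 := by
    simpa only [map_add, map_pow] using (map_ne_zero σ).mpr hu
  rw [ratioTrace, map_div₀, map_add, hσ x, map_add, map_pow, add_comm (σ x) x, inv_div, inv_div]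
  field_simp [hσu]
  linear_combination (x + σ x - x * σ x) * CharTwo.two_eq_zero (R := K)

lemma sq_add_self_ne_zero_of_solution (hb : b ≠ 1)
    (hx : σ (x + 1) ^ 3 / (x + 1) ^ 2 + σ x ^ 3 / x ^ 2 = b) : x ^ 2 + x ≠ 0 := by
  intro hu
  refine hb (hx.symm.trans ?_)
  have hprod : x * (x + 1) = 0 := by linear_combination hu
  rcases mul_eq_zero.mp hprod with rfl | hx1
  · simp
  · obtain rfl := CharTwo.add_eq_zero.mp hx1
    simp [CharTwo.add_self_eq_zero]

lemma add_one_mul_sq_of_solution (hu : x ^ 2 + x ≠ 0)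
    (hx : σ (x + 1) ^ 3 / (x + 1) ^ 2 + σ x ^ 3 / x ^ 2 = b) :
    (b + 1) * (x ^ 2 + x) ^ 2 = (x + σ x) ^ 2 * ((x ^ 2 + x) + (x + σ x)) := by
  have hx0 : x ≠ 0 := by
    rintro rfl
    simp at hu
  have hx1 : x + 1 ≠ 0 := by
    intro h
    exact hu (by linear_combination x * h)
  rw [← hx, map_add, map_one]
  field_simp
  generalize σ x = y
  grind [CharTwo.two_eq_zero (R := K)]

lemma add_map_ne_zero_of_solution (hb : b ≠ 1)
    (hx : σ (x + 1) ^ 3 / (x + 1) ^ 2 + σ x ^ 3 / x ^ 2 = b) : x + σ x ≠ 0 := by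
  intro ht
  have hu := sq_add_self_ne_zero_of_solution hb hx
  have heq := add_one_mul_sq_of_solution hu hx
  rw [ht, zero_pow two_ne_zero, zero_mul] at heq
  exact mul_ne_zero (fun h => hb (CharTwo.add_eq_zero.mp h)) (pow_ne_zero 2 hu) heq

lemma ratio_mem_ratioSet_of_solution (hσ : Function.Involutive σ) (hb : b ≠ 1)
    (hx : σ (x + 1) ^ 3 / (x + 1) ^ 2 + σ x ^ 3 / x ^ 2 = b) :
    (x + σ x) / (x ^ 2 + x) ∈ ratioSet σ (b + 1) := by
  have hu := sq_add_self_ne_zero_of_solution hb hx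
  rw [mem_ratioSet, ratioTrace_ratio hσ hu (add_map_ne_zero_of_solution hb hx),
    div_pow, div_add_div _ _ (pow_ne_zero 2 hu) hu, mul_div_assoc',
    div_eq_iff (mul_ne_zero (pow_ne_zero 2 hu) hu)]
  linear_combination -(x ^ 2 + x) * add_one_mul_sq_of_solution hu hx

lemma sq_add_self_eq_of_ratio_eq (hσ : Function.Involutive σ) (hb : b ≠ 1)
    (hx : σ (x + 1) ^ 3 / (x + 1) ^ 2 + σ x ^ 3 / x ^ 2 = b)
    (hz : (x + σ x) / (x ^ 2 + x) = z) : x ^ 2 + x = ratioTrace σ z / z := by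
  have hu := sq_add_self_ne_zero_of_solution hb hx
  have ht := add_map_ne_zero_of_solution hb hx
  rw [← hz, ratioTrace_ratio hσ hu ht, div_div_cancel₀ ht]

end Ratio

/-- Division by zero gives `0` here, as the power function `x ^ d` does at `x = 0`. -/
theorem stmt_13_general {K : Type*} [Field K] [CharP K 2] {σ : K →+* K}
    (hσ : Function.Involutive σ) {ω : K} (hω : ω ^ 2 + ω + 1 = 0) (hσω : σ ω = ω) {b : K}
    (hb : b ≠ 1) :
    {x : K | σ (x + 1) ^ 3 / (x + 1) ^ 2 + σ x ^ 3 / x ^ 2 = b}.encard ≤ 4 := by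
  have hratios : (ratioSet σ (b + 1)).encard ≤ 2 :=
    encard_ratioSet_le_two hσ hω hσω fun h => hb (CharTwo.add_eq_zero.mp h)
  calc {x : K | σ (x + 1) ^ 3 / (x + 1) ^ 2 + σ x ^ 3 / x ^ 2 = b}.encard
      ≤ (ratioSet σ (b + 1)).encard * 2 := by
        refine encard_le_encard_mul_of_mapsTo (Set.finite_of_encard_le_coe hratios)
          (fun x hx => ratio_mem_ratioSet_of_solution hσ hb hx) fun z _ => ?_
        refine encard_le_two_of_sq_add_self_eq fun x hx y hy => ?_
        rw [sq_add_self_eq_of_ratio_eq hσ hb hx.1 hx.2, sq_add_self_eq_of_ratio_eq hσ hb hy.1 hy.2]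
    _ ≤ 2 * 2 := by gcongr
    _ = 4 := by norm_num

section FiniteField

lemma pow_mul_sub_eq_div {G : Type*} [GroupWithZero G] {n k q : ℕ} (h : k < n * q) (x : G) :
    x ^ (n * q - k) = (x ^ q) ^ n / x ^ k := by
  rcases eq_or_ne x 0 with rfl | hx
  · have hn : n ≠ 0 := by rintro rfl; simp at h
    have hq : q ≠ 0 := by rintro rfl; simp at h
    rw [zero_pow (Nat.sub_ne_zero_of_lt h), zero_pow hq, zero_pow hn, zero_div]
  · rw [pow_sub₀ x hx h.le, ← pow_mul', div_eq_mul_inv]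

lemma iterateFrobenius_involutive {K : Type*} [Field K] [Fintype K] (p : ℕ) [ExpChar K p] {m : ℕ}
    (hK : Fintype.card K = (p ^ m) ^ 2) : Function.Involutive (iterateFrobenius K p m) := by
  intro x
  rw [iterateFrobenius_def, iterateFrobenius_def, ← pow_mul, ← sq, ← hK, FiniteField.pow_card]

lemma exists_isPrimitiveRoot_of_dvd_card_sub_one {K : Type*} [Field K] [Finite K] {n : ℕ}
    (h : n ∣ Nat.card K - 1) : ∃ ζ : K, IsPrimitiveRoot ζ n := by
  obtain ⟨k, hk⟩ := h
  obtain ⟨g, hg⟩ := IsCyclic.exists_ofOrder_eq_natCard (α := Kˣ)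
  rw [Nat.card_units] at hg
  have hroot : IsPrimitiveRoot (g : K) (Nat.card K - 1) :=
    IsPrimitiveRoot.coe_units_iff.mpr (hg ▸ IsPrimitiveRoot.orderOf g)
  exact ⟨g ^ k, hroot.pow (Nat.sub_pos_of_lt Finite.one_lt_card) (hk.trans (mul_comm n k))⟩

lemma exists_sq_add_self_add_one_eq_zero_s13 {K : Type*} [Field K] [Fintype K] {q : ℕ}
    (hq : q ≡ 1 [MOD 3]) (hK : Fintype.card K = q ^ 2) :
    ∃ ω : K, ω ^ 2 + ω + 1 = 0 ∧ ω ^ q = ω := by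
  have hdvd : 3 ∣ Nat.card K - 1 := by
    rw [Nat.card_eq_fintype_card, hK]
    exact (Nat.modEq_iff_dvd' (hK ▸ Fintype.card_pos)).mp (hq.pow 2).symm
  obtain ⟨ω, hω⟩ := exists_isPrimitiveRoot_of_dvd_card_sub_one hdvd
  refine ⟨ω, ?_, ?_⟩
  · have hsum := hω.geom_sum_eq_zero (by norm_num)
    simp only [Finset.sum_range_succ, Finset.sum_range_zero] at hsum
    linear_combination hsum
  · rw [← pow_mod_orderOf, ← hω.eq_orderOf, hq, Nat.one_mod, pow_one]

end FiniteField

/-- For q = 2^m with m a positive even integer and d = 3q - 2,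
for every b ≠ 1 the equation (x+1)^d + x^d = b has at most 4 solutions in F_{q^2}. -/
theorem stmt_13 (m : ℕ) (hm : 0 < m) (hme : Even m) (q : ℕ) (hq : q = 2 ^ m)
    (K : Type*) [Field K] [Fintype K] [CharP K 2] (hK : Fintype.card K = q ^ 2) :
    ∀ b : K, b ≠ 1 →
      {x : K | (x + 1) ^ (3 * q - 2) + x ^ (3 * q - 2) = b}.ncard ≤ 4 := by
  intro b hb
  have hq3 : q ≡ 1 [MOD 3] := by
    obtain ⟨k, rfl⟩ := hme
    simpa only [hq, ← two_mul, pow_mul, one_pow] using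
      (show 2 ^ 2 ≡ 1 [MOD 3] from rfl).pow k
  obtain ⟨ω, hω, hσω⟩ := exists_sq_add_self_add_one_eq_zero_s13 hq3 hK
  subst hq
  have hexp : 2 < 3 * 2 ^ m := by
    have hpos : 0 < 2 ^ m := Nat.two_pow_pos m
    omega
  have hcard := stmt_13_general (iterateFrobenius_involutive 2 hK) hω hσω hb
  simp only [iterateFrobenius_def, ← pow_mul_sub_eq_div hexp] at hcard
  exact ENat.toNat_le_of_le_natCast hcard
end

section
/- Let q = 2^m where m ≥ 4 is an even integer, and let F(x) = x^{3q-2} be the power function over F_{q^2}. Then the differential uniformity of F equals q; that is, max over a ∈ F_{q^2}^*, b ∈ F_{q^2} of the number of x ∈ F_{q^2} with F(x + a) + F(x) = b is equal to q. -/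
/-! Write `q = 2 ^ m` and let `σ x = x ^ q`, an involution of `K`. Then `F x = σ x ^ 3 / x ^ 2`,
and as `F` is multiplicative it suffices to treat `a = 1`. In terms of the trace `t = σ x + x` and
of `u = x ^ 2 + x`, the equation `F (x + 1) + F x = b` implies `(t + u) * t ^ 2 = (b + 1) * u ^ 2`.

For `b = 1` it follows that `t = 0` or `t = u`, that is, `σ x = x` or `σ x = x ^ 2`. In the second
case `x ^ 4 = σ (σ x) = x`, and `σ` fixes such an `x` because `m` is even. So the solutions are the
`q` elements of the subfield of order `q`.

For `b ≠ 1` put `β = b + 1`. As `σ t = t` and `σ u = u + t + t ^ 2`, applying `σ` gives a second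
equation in `t` and `u`. If `t ≠ 0`, the first one expresses `t` and `u` through `w = (t + u) / t`,
and the second one then becomes a nonzero polynomial equation of degree at most `4` in `w`.
With the case `t = 0`, where `u = 0`, this leaves at most `5` values of `u`, hence at most `10 ≤ q`
values of `x`. -/

open Polynomial

theorem ncard_le_of_forall_eval_mem {R : Type*} [CommRing R] [IsDomain R] {p : R[X]}
    (hp : 0 < p.natDegree) {S : Set R} {U : Finset R} (hS : ∀ x ∈ S, p.eval x ∈ U) :
    S.ncard ≤ U.card * p.natDegree := by
  classical
  set fibers : Finset R := U.biUnion fun u => (p - C u).roots.toFinset with hfibers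
  have hsub : S ⊆ fibers := by
    intro x hx
    have hne : p - C (p.eval x) ≠ 0 :=
      ne_zero_of_natDegree_gt (hp.trans_eq natDegree_sub_C.symm)
    rw [hfibers, Finset.mem_coe, Finset.mem_biUnion]
    exact ⟨p.eval x, hS x hx, by simp [hne]⟩
  have hfiber (u : R) : (p - C u).roots.toFinset.card ≤ p.natDegree :=
    calc (p - C u).roots.toFinset.card ≤ (p - C u).roots.card := Multiset.toFinset_card_le _
      _ ≤ (p - C u).natDegree := card_roots' _
      _ = p.natDegree := natDegree_sub_C
  calc S.ncard ≤ (fibers : Set R).ncard := Set.ncard_le_ncard hsub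
    _ = fibers.card := Set.ncard_coe_finset _
    _ ≤ U.card * p.natDegree := Finset.card_biUnion_le_card_mul _ _ _ fun u _ => hfiber u

theorem ncard_setOf_pow_eq_self {K : Type*} [Field K] [Fintype K] {p m n : ℕ} [Fact p.Prime]
    [CharP K p] (hK : Fintype.card K = p ^ n) (hm : m ≠ 0) (hmn : m ∣ n) :
    {x : K | x ^ p ^ m = x}.ncard = p ^ m := by
  have hp : 1 < p := Fact.out (p := p.Prime).one_lt
  have hne := FiniteField.X_pow_card_pow_sub_X_ne_zero K hm hp
  have hn : n ≠ 0 := fun h => Fintype.one_lt_card.ne' (by simpa [h] using hK : Fintype.card K = 1)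
  have hroots : {x : K | x ^ p ^ m = x} = (X ^ p ^ m - X : K[X]).rootSet K := by
    ext x
    simp [mem_rootSet_of_ne hne, sub_eq_zero]
  have hsplits : (X ^ p ^ m - X : K[X]).Splits := by
    refine Splits.of_dvd ?_ (FiniteField.X_pow_card_pow_sub_X_ne_zero K hn hp)
      (dvd_pow_pow_sub_self_of_dvd hmn)
    rw [← hK, ← Nat.card_eq_fintype_card]
    exact splits_X_pow_nat_card_sub_X
  rw [hroots, ← Nat.card_coe_set_eq, Nat.card_eq_fintype_card,
    card_rootSet_eq_natDegree (galois_poly_separable p _ (dvd_pow_self p hm))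
      (by simpa using hsplits),
    FiniteField.X_pow_card_pow_sub_X_natDegree_eq K hm hp]

theorem pow_pow_eq_self {M : Type*} [Monoid M] {x : M} {n : ℕ} (h : x ^ n = x) (k : ℕ) :
    x ^ n ^ k = x := by
  simpa only [pow_iterate] using (Function.IsFixedPt.iterate (f := (· ^ n)) h k).eq

/-- The solutions of `F (x + a) + F x = b`, whose number is `δ_F(a, b)`. In characteristic two this
is the fiber over `b` of the derivative of `F` in the direction `a`. -/
def differentialFiber {R : Type*} [Add R] (F : R → R) (a b : R) : Set R :=
  {x | F (x + a) + F x = b}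

section DifferentialFiber

variable {K : Type*} [Field K]

theorem differentialFiber_eq_image (F : K →*₀ K) {a : K} (ha : a ≠ 0) (b : K) :
    differentialFiber F a b = (a * ·) '' differentialFiber F 1 (b / F a) := by
  have hFa : F a ≠ 0 := map_ne_zero F |>.mpr ha
  have hscale (z : K) : F (a * z + a) + F (a * z) = (F (z + 1) + F z) * F a := by
    rw [← mul_add_one, map_mul, map_mul]
    ring
  ext x
  obtain ⟨z, rfl⟩ : ∃ z, a * z = x := ⟨x / a, mul_div_cancel₀ x ha⟩
  rw [(mul_right_injective₀ ha).mem_set_image]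
  simp only [differentialFiber, Set.mem_ofPred_eq, hscale, eq_div_iff hFa]

theorem ncard_differentialFiber (F : K →*₀ K) {a : K} (ha : a ≠ 0) (b : K) :
    (differentialFiber F a b).ncard = (differentialFiber F 1 (b / F a)).ncard := by
  rw [differentialFiber_eq_image F ha, Set.ncard_image_of_injective _ (mul_right_injective₀ ha)]

end DifferentialFiber

section ConjCubeDivSq

variable {K : Type*} [Field K]

/-- The map `x ↦ σ x ^ 3 / x ^ 2`, which is `x ↦ x ^ (3 * q - 2)` when `σ` is `x ↦ x ^ q`. The
convention `0 / 0 = 0` gives it the right value at `0`. -/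
def conjCubeDivSq (σ : K →+* K) : K →*₀ K where
  toFun x := σ x ^ 3 / x ^ 2
  map_zero' := by simp
  map_one' := by simp
  map_mul' x y := by simp only [map_mul, mul_pow, mul_div_mul_comm]

theorem conjCubeDivSq_apply (σ : K →+* K) (x : K) : conjCubeDivSq σ x = σ x ^ 3 / x ^ 2 := rfl

theorem conjCubeDivSq_mul_sq (σ : K →+* K) (x : K) : conjCubeDivSq σ x * x ^ 2 = σ x ^ 3 := by
  rcases eq_or_ne x 0 with rfl | h0
  · simp
  · exact div_mul_cancel₀ _ (pow_ne_zero 2 h0)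

theorem conjCubeDivSq_eq_self {σ : K →+* K} {x : K} (hx : σ x = x) : conjCubeDivSq σ x = x := by
  rcases eq_or_ne x 0 with rfl | h0
  · exact map_zero _
  · rw [conjCubeDivSq_apply, hx]
    field_simp

theorem conjCubeDivSq_iterateFrobenius (p m : ℕ) [ExpChar K p] (x : K) :
    conjCubeDivSq (iterateFrobenius K p m) x = x ^ (3 * p ^ m - 2) := by
  have hpm : 0 < p ^ m := expChar_pow_pos K p m
  rcases eq_or_ne x 0 with rfl | h0
  · rw [map_zero, zero_pow (by lia)]
  · rw [conjCubeDivSq_apply, iterateFrobenius_def, ← pow_mul, mul_comm,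
      pow_sub₀ x h0 (by lia), div_eq_mul_inv]

variable [CharP K 2] {σ : K →+* K}

theorem trace_equation_of_mem_differentialFiber {b x : K}
    (hx : x ∈ differentialFiber (conjCubeDivSq σ) 1 b) :
    (σ x + x + (x ^ 2 + x)) * (σ x + x) ^ 2 = (b + 1) * (x ^ 2 + x) ^ 2 := by
  have hx0 := conjCubeDivSq_mul_sq σ x
  have hx1 : conjCubeDivSq σ (x + 1) * (x + 1) ^ 2 = (σ x + 1) ^ 3 := by
    rw [conjCubeDivSq_mul_sq, map_add σ, map_one]
  have hb : conjCubeDivSq σ (x + 1) + conjCubeDivSq σ x = b := hx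
  linear_combination (norm := grind) x ^ 2 * hx1 + (x + 1) ^ 2 * hx0 + (x ^ 2 + x) ^ 2 * hb

theorem differentialFiber_conjCubeDivSq_one_one (hσ : Function.Involutive σ)
    (hfix : ∀ x, x ^ 4 = x → σ x = x) :
    differentialFiber (conjCubeDivSq σ) 1 1 = {x | σ x = x} := by
  ext x
  refine ⟨fun hx => ?_, fun hx => ?_⟩
  · have htrace := trace_equation_of_mem_differentialFiber hx
    rw [CharTwo.add_self_eq_zero, zero_mul, mul_eq_zero, pow_eq_zero_iff two_ne_zero] at htrace
    rcases htrace with h | h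
    · have hsq : σ x = x ^ 2 := by
        rw [← CharTwo.add_eq_zero, ← h]
        linear_combination -CharTwo.add_self_eq_zero x
      refine hfix x ?_
      calc x ^ 4 = (x ^ 2) ^ 2 := by ring
        _ = σ (σ x) := by rw [hsq, map_pow, hsq]
        _ = x := hσ x
    · exact CharTwo.add_eq_zero.mp h
  · have hx1 : σ (x + 1) = x + 1 := by rw [map_add, map_one, hx]
    change conjCubeDivSq σ (x + 1) + conjCubeDivSq σ x = 1
    rw [conjCubeDivSq_eq_self hx1, conjCubeDivSq_eq_self hx, add_right_comm,
      CharTwo.add_self_eq_zero, zero_add]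

end ConjCubeDivSq

section Elimination

variable {R : Type*} [CommRing R]

/-- The quartic satisfied by `w = (t + u) / t` when `(t + u) * t ^ 2 = β * u ^ 2` and
`(t + u') * t ^ 2 = γ * u' ^ 2`, where `u' = u + t + t ^ 2`. In characteristic two these equations
are `t * w = s` and `t * (w + 1 + t) = γ * (w + t) ^ 2` with `s = β * (w ^ 2 + 1)`; multiplying the
latter by `w ^ 2` eliminates `t`. -/
noncomputable def ratioPoly (β γ : R) : R[X] :=
  C β * (X ^ 2 + 1) * (X ^ 2 + X + C β * (X ^ 2 + 1)) - C γ * (X ^ 2 + C β * (X ^ 2 + 1)) ^ 2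

theorem natDegree_ratioPoly_le (β γ : R) : (ratioPoly β γ).natDegree ≤ 4 := by
  unfold ratioPoly
  compute_degree

theorem ratioPoly_ne_zero {β : R} (hβ : β ≠ 0) (γ : R) : ratioPoly β γ ≠ 0 := by
  intro h
  have hlinear : (derivative (ratioPoly β γ)).eval 0 = β := by
    simp [ratioPoly, derivative_pow]
  simp [h, hβ.symm] at hlinear

variable [CharP R 2]

theorem conj_trace_equation {σ : R →+* R} (hσ : Function.Involutive σ) {β x : R}
    (h : (σ x + x + (x ^ 2 + x)) * (σ x + x) ^ 2 = β * (x ^ 2 + x) ^ 2) :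
    (σ x + x + (x ^ 2 + x + (σ x + x) + (σ x + x) ^ 2)) * (σ x + x) ^ 2 =
      σ β * (x ^ 2 + x + (σ x + x) + (σ x + x) ^ 2) ^ 2 := by
  have ht : σ (σ x + x) = σ x + x := by rw [map_add, hσ, add_comm]
  have hu : σ (x ^ 2 + x) = x ^ 2 + x + (σ x + x) + (σ x + x) ^ 2 := by
    rw [map_add, map_pow, CharTwo.add_sq]
    linear_combination -(x ^ 2 + x) * CharTwo.two_eq_zero (R := R)
  simpa only [map_mul, map_pow, map_add σ (σ x + x), ht, hu] using congrArg σ h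

theorem isRoot_ratioPoly {β γ t w : R} (h : t * w = β * (w + 1) ^ 2)
    (h' : t * (w + 1 + t) = γ * (w + t) ^ 2) : (ratioPoly β γ).IsRoot w := by
  have hs : β * (w ^ 2 + 1) = t * w := by
    rw [h, CharTwo.add_sq, one_pow]
  simp only [ratioPoly, IsRoot.def, eval_sub, eval_mul, eval_add, eval_pow, eval_C, eval_X,
    eval_one, hs]
  linear_combination w ^ 2 * h'

end Elimination

section InvolutionBound

variable {K : Type*} [Field K] [CharP K 2]

theorem exists_isRoot_ratioPoly {β γ t u : K} (hβ : β ≠ 0) (ht : t ≠ 0)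
    (h : (t + u) * t ^ 2 = β * u ^ 2)
    (h' : (t + (u + t + t ^ 2)) * t ^ 2 = γ * (u + t + t ^ 2) ^ 2) :
    ∃ w, (ratioPoly β γ).IsRoot w ∧ β * (w + 1) ^ 3 / w = u := by
  obtain ⟨w, rfl⟩ : ∃ w, u = t * (w + 1) := ⟨u / t - 1, by field_simp; ring⟩
  have h2 : (2 : K) = 0 := CharTwo.two_eq_zero
  have hw : t * w = β * (w + 1) ^ 2 := by
    refine mul_left_cancel₀ (pow_ne_zero 2 ht) ?_
    linear_combination h - t ^ 3 * h2
  have hw' : t * (w + 1 + t) = γ * (w + t) ^ 2 := by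
    refine mul_left_cancel₀ (pow_ne_zero 2 ht) ?_
    linear_combination h' + (2 * γ * t ^ 2 * (w + t + 1) - t ^ 3) * h2
  have hw0 : w ≠ 0 := by
    rintro rfl
    simp [hβ.symm] at hw
  refine ⟨w, isRoot_ratioPoly hw hw', ?_⟩
  rw [div_eq_iff hw0]
  linear_combination -(w + 1) * hw

theorem ncard_differentialFiber_conjCubeDivSq_one_le {σ : K →+* K} (hσ : Function.Involutive σ)
    {b : K} (hb : b ≠ 1) : (differentialFiber (conjCubeDivSq σ) 1 b).ncard ≤ 10 := by
  classical
  have hβ : b + 1 ≠ 0 := CharTwo.add_eq_zero.not.mpr hb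
  set W : Finset K := (ratioPoly (b + 1) (σ (b + 1))).roots.toFinset
  set U : Finset K := insert 0 (W.image fun w => (b + 1) * (w + 1) ^ 3 / w)
  have hcardW : W.card ≤ 4 :=
    (Multiset.toFinset_card_le _).trans ((card_roots' _).trans (natDegree_ratioPoly_le _ _))
  have hcardU : U.card ≤ 5 :=
    (Finset.card_insert_le _ _).trans (Nat.succ_le_succ (Finset.card_image_le.trans hcardW))
  have hmem : ∀ x ∈ differentialFiber (conjCubeDivSq σ) 1 b, (X ^ 2 + X : K[X]).eval x ∈ U := by
    intro x hx
    have htrace := trace_equation_of_mem_differentialFiber hx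
    simp only [eval_add, eval_pow, eval_X]
    rcases eq_or_ne (σ x + x) 0 with ht | ht
    · have hu : x ^ 2 + x = 0 := by simpa [ht, hβ] using htrace
      exact hu ▸ Finset.mem_insert_self 0 _
    · obtain ⟨w, hw, hwu⟩ := exists_isRoot_ratioPoly hβ ht htrace (conj_trace_equation hσ htrace)
      have hwW : w ∈ W := Multiset.mem_toFinset.mpr ((mem_roots (ratioPoly_ne_zero hβ _)).mpr hw)
      exact Finset.mem_insert_of_mem (Finset.mem_image.mpr ⟨w, hwW, hwu⟩)
  have hdeg : (X ^ 2 + X : K[X]).natDegree = 2 := by compute_degree!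
  calc (differentialFiber (conjCubeDivSq σ) 1 b).ncard
      ≤ U.card * (X ^ 2 + X : K[X]).natDegree := ncard_le_of_forall_eval_mem (by lia) hmem
    _ ≤ 10 := by lia

theorem ncard_differentialFiber_conjCubeDivSq_le {σ : K →+* K} (hσ : Function.Involutive σ)
    (hfix : ∀ x, x ^ 4 = x → σ x = x) {a : K} (ha : a ≠ 0) (b : K) :
    (differentialFiber (conjCubeDivSq σ) a b).ncard ≤ max 10 {x | σ x = x}.ncard := by
  rw [ncard_differentialFiber _ ha]
  rcases eq_or_ne (b / conjCubeDivSq σ a) 1 with hb | hb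
  · rw [hb, differentialFiber_conjCubeDivSq_one_one hσ hfix]
    exact le_max_right _ _
  · exact (ncard_differentialFiber_conjCubeDivSq_one_le hσ hb).trans (le_max_left _ _)

end InvolutionBound

theorem involutive_iterateFrobenius {K : Type*} [Field K] [Fintype K] {p m : ℕ} [ExpChar K p]
    (hK : Fintype.card K = p ^ (m + m)) : Function.Involutive (iterateFrobenius K p m) := by
  intro x
  rw [← iterateFrobenius_add_apply, iterateFrobenius_def, ← hK, FiniteField.pow_card]

/-- For q = 2^m with m ≥ 4 even, the differential uniformity of
F(x) = x^{3q-2} over F_{q^2} equals q. -/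
theorem stmt_14 (m : ℕ) (hm : 4 ≤ m) (hme : Even m) (q : ℕ) (hq : q = 2 ^ m)
    (K : Type*) [Field K] [Fintype K] [CharP K 2] (hK : Fintype.card K = q ^ 2) :
    (∀ a b : K, a ≠ 0 →
        {x : K | (x + a) ^ (3 * q - 2) + x ^ (3 * q - 2) = b}.ncard ≤ q) ∧
    (∃ a b : K, a ≠ 0 ∧
        {x : K | (x + a) ^ (3 * q - 2) + x ^ (3 * q - 2) = b}.ncard = q) := by
  subst hq
  have hcard : Fintype.card K = 2 ^ (m + m) := by rw [hK]; ring
  have hσ : Function.Involutive (iterateFrobenius K 2 m) := involutive_iterateFrobenius hcard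
  have hfix (x : K) (hx : x ^ 4 = x) : iterateFrobenius K 2 m x = x := by
    obtain ⟨k, rfl⟩ := hme
    rw [iterateFrobenius_def, ← two_mul, pow_mul]
    exact pow_pow_eq_self hx k
  have hfiber (a b : K) : {x : K | (x + a) ^ (3 * 2 ^ m - 2) + x ^ (3 * 2 ^ m - 2) = b} =
      differentialFiber (conjCubeDivSq (iterateFrobenius K 2 m)) a b := by
    simp only [differentialFiber, conjCubeDivSq_iterateFrobenius]
  have hfixed : {x : K | iterateFrobenius K 2 m x = x}.ncard = 2 ^ m :=
    ncard_setOf_pow_eq_self hcard (by lia) (Dvd.intro_left 2 (two_mul m))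
  have hten : 10 ≤ 2 ^ m := le_trans (by norm_num) (Nat.pow_le_pow_right two_pos hm)
  simp only [hfiber]
  refine ⟨fun a b ha => ?_, 1, 1, one_ne_zero, ?_⟩
  · simpa only [hfixed, max_eq_right hten] using
      ncard_differentialFiber_conjCubeDivSq_le hσ hfix ha b
  · rw [differentialFiber_conjCubeDivSq_one_one hσ hfix, hfixed]
end
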